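/- arXiv:2006.04099 — 4 statements merged into one kernel-verified Lean document; each statement's English description precedes it below -/
import Mathlib

section
/- Let q be a prime power with q > 2, let r >= 2, and let T be an algebraic hypersurface of degree q+1 in PG(r,q^2) defined over GF(q^2) whose number of GF(q^2)-rational points equals (q^(r+1) + (-1)^r)(q^r - (-1)^r)/(q^2 - 1) (the number of points of a non-singular Hermitian variety H(r,q^2)). Then T is a blocking set with respect to the lines of PG(r,q^2), i.e., every line of PG(r,q^2) contains at least one rational point of T. -/
open MvPolynomial Module

/-- The set of points of the projective subspace of `PG(n-1, F)` determined by
the linear subspace `W` of `F^n`. -/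
def projPts {F : Type} [Field F] {n : ℕ} (W : Submodule F (Fin n → F)) :
    Set (Projectivization F (Fin n → F)) :=
  {P | P.submodule ≤ W}

/-- The set of `F`-rational points of the hypersurface of `PG(n-1, F)` defined by the
homogeneous polynomial `f`. -/
def hypersurfacePts {F : Type} [Field F] {n : ℕ} (f : MvPolynomial (Fin n) F) :
    Set (Projectivization F (Fin n → F)) :=
  {P | MvPolynomial.eval P.rep f = 0}


lemma aux_finrank_rtd (F : Type) [Field F] (m : ℕ) :
    finrank F (restrictTotalDegree (Fin 2) F m) * 2 = (m + 1) * (m + 2) := by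
  have h1 : finrank F (restrictTotalDegree (Fin 2) F m)
      = Nat.card {n : Fin 2 →₀ ℕ | n.degree ≤ m} := by
    exact finrank_eq_nat_card_basis (basisRestrictSupport F {n : Fin 2 →₀ ℕ | n.degree ≤ m})
  have h2 : Nat.card {n : Fin 2 →₀ ℕ | n.degree ≤ m}
      = ((Finset.range (m+1)).sigma (fun k => Finset.range (k+1))).card := by
    rw [← Nat.card_eq_finsetCard]
    refine Nat.card_congr ⟨fun n => ⟨⟨n.1 0 + n.1 1, n.1 0⟩, ?_⟩,
      fun k => ⟨Finsupp.equivFunOnFinite.symm ![k.1.2, k.1.1 - k.1.2], ?_⟩, ?_, ?_⟩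
    · have := n.2
      simp [Finsupp.degree_eq_sum] at this ⊢
      omega
    · have := Finset.mem_sigma.1 k.2
      simp only [Finset.mem_range] at this
      simp [Finsupp.degree_eq_sum]
      omega
    · intro n
      ext i
      fin_cases i <;> simp
    · rintro ⟨⟨a, b⟩, k⟩
      simp at k ⊢
      omega
  rw [h1, h2, Finset.card_sigma]
  simp only [Finset.card_range]
  clear h1 h2
  induction m with
  | zero => simp
  | succ m ih => rw [Finset.sum_range_succ, add_mul, ih]; ring

lemma aux_interp {F : Type} [Field F] [Fintype F] (P l : Fin 2 → F) (hl : l ≠ 0) (c s : F) :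
    ∃ p : MvPolynomial (Fin 2) F, eval P p = c ∧
      l 0 * eval P (pderiv 0 p) + l 1 * eval P (pderiv 1 p) = s ∧
      ∀ P', P' ≠ P → eval P' p = 0 ∧ ∀ i, eval P' (pderiv i p) = 0 := by
  classical
  obtain ⟨i, hi⟩ : ∃ i, l i ≠ 0 := by
    by_contra h; push Not at h; exact hl (funext h)
  have e1 : eval P (indicator P) = 1 := eval_indicator_apply_eq_one P
  set a : F := (s - 2 * c * (l 0 * eval P (pderiv 0 (indicator P)) +
    l 1 * eval P (pderiv 1 (indicator P)))) / l i with ha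
  refine ⟨indicator P ^ 2 * (C c + C a * (X i - C (P i))), ?_, ?_, ?_⟩
  · simp [e1]
  · have hs : a * l i = s - 2 * c * (l 0 * eval P (pderiv 0 (indicator P)) +
      l 1 * eval P (pderiv 1 (indicator P))) := by rw [ha]; field_simp
    fin_cases i <;>
      simp [pderiv_mul, pderiv_pow, e1, pderiv_X, Pi.single_apply] at hs ⊢ <;>
      linear_combination hs
  · intro P' hP'
    have e2 : eval P' (indicator P) = 0 := eval_indicator_apply_eq_zero _ _ hP'
    refine ⟨by simp [e2], fun j => ?_⟩
    simp [pderiv_mul, pderiv_pow, e2]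

lemma aux_bezout {F : Type} [Field F] [Fintype F] (f g : MvPolynomial (Fin 2) F)
    (hf : Irreducible f) (hfg : ¬ f ∣ g) (d e : ℕ) (hd : f.totalDegree = d)
    (he : g.totalDegree ≤ e) (Z : Finset (Fin 2 → F))
    (hZ : ∀ P ∈ Z, eval P f = 0 ∧ eval P g = 0 ∧ ∀ i, eval P (pderiv i g) = 0) :
    2 * Z.card ≤ d * e := by
  classical
  have hl : ∀ P : Fin 2 → F, ∃ l : Fin 2 → F, l ≠ 0 ∧
      l 0 * eval P (pderiv 0 f) + l 1 * eval P (pderiv 1 f) = 0 := by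
    intro P
    by_cases h : eval P (pderiv 0 f) = 0
    · exact ⟨![1, 0], fun h => by simpa using congrFun h 0, by simp [h]⟩
    · refine ⟨![- eval P (pderiv 1 f), eval P (pderiv 0 f)], fun h' => h ?_, ?_⟩
      · simpa using congrFun h' 1
      · simp; ring
  choose l hl0 hl1 using hl
  let ev : (Fin 2 → F) → MvPolynomial (Fin 2) F →ₗ[F] F := fun P => (aeval P).toLinearMap
  have hev : ∀ P p, ev P p = eval P p := fun P p => by simp [ev, aeval_eq_eval]
  let psi : MvPolynomial (Fin 2) F →ₗ[F] (Z → F × F) :=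
    LinearMap.pi fun P => (ev P.1).prod
      (l P.1 0 • (ev P.1 ∘ₗ (pderiv 0).toLinearMap) + l P.1 1 • (ev P.1 ∘ₗ (pderiv 1).toLinearMap))
  have hpsi : ∀ p P, psi p P = (eval P.1 p,
      l P.1 0 * eval P.1 (pderiv 0 p) + l P.1 1 * eval P.1 (pderiv 1 p)) := by
    intro p P
    simp [psi, hev]
  have hsurj : Function.Surjective psi := by
    intro t
    choose p hp0 hp1 hp2 using fun P : Z => aux_interp P.1 (l P.1) (hl0 _) (t P).1 (t P).2
    refine ⟨∑ P, p P, ?_⟩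
    rw [map_sum]
    funext P
    rw [Finset.sum_apply, Finset.sum_eq_single P]
    · rw [hpsi, hp0, hp1]
    · intro P' _ hne
      have := hp2 P' P.1 (fun h => hne (Subtype.ext h.symm))
      rw [hpsi, this.1, this.2 0, this.2 1]; simp
    · simp
  have hkf : ∀ a, psi (f * a) = 0 := by
    intro a; funext P
    rw [hpsi]
    have h1 := (hZ P.1 P.2).1
    have h2 := hl1 P.1
    simp only [pderiv_mul, map_add, map_mul, h1, Pi.zero_apply, Prod.mk_eq_zero]
    refine ⟨by simp, by linear_combination eval P.1 a * h2⟩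
  have hkg : ∀ a, psi (g * a) = 0 := by
    intro a; funext P
    rw [hpsi]
    obtain ⟨-, h1, h2⟩ := hZ P.1 P.2
    simp [pderiv_mul, h1, h2]
  -- a large degree bound
  obtain ⟨N, hN⟩ : ∃ N, ∀ t, ∃ p : MvPolynomial (Fin 2) F, p.totalDegree ≤ N ∧ psi p = t := by
    choose p hp using hsurj
    exact ⟨Finset.univ.sup fun t => (p t).totalDegree,
      fun t => ⟨p t, Finset.le_sup (f := fun t => (p t).totalDegree) (Finset.mem_univ t), hp t⟩⟩
  let V := fun m => restrictTotalDegree (Fin 2) F m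
  have hV : ∀ m p, p ∈ V m ↔ p.totalDegree ≤ m := fun m p => mem_restrictTotalDegree _ _ _
  let n := N + d + e
  let psi' : V n →ₗ[F] (Z → F × F) := psi ∘ₗ (V n).subtype
  have hsurj' : Function.Surjective psi' := by
    intro t
    obtain ⟨p, hp, rfl⟩ := hN t
    exact ⟨⟨p, (hV _ _).2 (by omega)⟩, rfl⟩
  let Phi0 : V (N + e) × V (N + d) →ₗ[F] MvPolynomial (Fin 2) F :=
    (LinearMap.mulLeft F f ∘ₗ (V (N+e)).subtype).coprod
      (LinearMap.mulLeft F g ∘ₗ (V (N+d)).subtype)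
  have hPhi0 : ∀ a, Phi0 a = f * a.1.1 + g * a.2.1 := fun a => by simp [Phi0]
  let Phi : V (N + e) × V (N + d) →ₗ[F] V n := Phi0.codRestrict _ (by
    intro a
    rw [hPhi0]
    have h1 := (hV _ _).1 a.1.2
    have h2 := (hV _ _).1 a.2.2
    refine Submodule.add_mem _ ((hV _ _).2 ?_) ((hV _ _).2 ?_)
    · refine (totalDegree_mul _ _).trans ?_
      omega
    · refine (totalDegree_mul _ _).trans ?_
      omega)
  have hg0 : g ≠ 0 := fun h => hfg (h ▸ dvd_zero f)
  have hf0 : f ≠ 0 := hf.ne_zero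
  let K : V N →ₗ[F] MvPolynomial (Fin 2) F × MvPolynomial (Fin 2) F :=
    ((- LinearMap.mulLeft F g) ∘ₗ (V N).subtype).prod (LinearMap.mulLeft F f ∘ₗ (V N).subtype)
  have hK : ∀ c, K c = (-(g * c.1), f * c.1) := fun c => by simp [K]
  have hker : finrank F (LinearMap.ker Phi) ≤ finrank F (V N) := by
    let J : LinearMap.ker Phi →ₗ[F] MvPolynomial (Fin 2) F × MvPolynomial (Fin 2) F :=
      ((V (N+e)).subtype.prodMap (V (N+d)).subtype) ∘ₗ (LinearMap.ker Phi).subtype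
    have hJ : Function.Injective J := by
      rintro ⟨⟨a, b⟩, h⟩ ⟨⟨a', b'⟩, h'⟩ hh
      simp [J] at hh
      simp [hh, Subtype.ext_iff]
    have hr : LinearMap.range J ≤ LinearMap.range K := by
      rintro _ ⟨⟨⟨a, b⟩, h⟩, rfl⟩
      have h0 : f * a.1 + g * b.1 = 0 := by
        have := congrArg Subtype.val (LinearMap.mem_ker.1 h)
        rw [← hPhi0 (a, b)]; exact this
      have h1 : f ∣ g * b.1 := ⟨-a.1, by linear_combination h0⟩
      obtain ⟨c, hc⟩ := (hf.prime.dvd_or_dvd h1).resolve_left hfg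
      have ha : a.1 = -(g * c) := by
        apply mul_left_cancel₀ hf0
        rw [hc] at h0
        linear_combination h0
      have hcdeg : c.totalDegree ≤ N := by
        by_cases hc0 : c = 0
        · simp [hc0]
        · have := (hV _ _).1 b.2
          rw [hc, totalDegree_mul_of_isDomain hf0 hc0] at this
          omega
      refine ⟨⟨c, (hV _ _).2 hcdeg⟩, ?_⟩
      rw [hK]
      simp [J, ha, hc]
    calc finrank F (LinearMap.ker Phi) = finrank F (LinearMap.range J) :=
          (LinearMap.finrank_range_of_inj hJ).symm
      _ ≤ finrank F (LinearMap.range K) := Submodule.finrank_mono hr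
      _ ≤ _ := LinearMap.finrank_range_le K
  have hrange : LinearMap.range Phi ≤ LinearMap.ker psi' := by
    rintro _ ⟨a, rfl⟩
    rw [LinearMap.mem_ker]
    change psi (Phi0 a) = 0
    rw [hPhi0, map_add, hkf, hkg, add_zero]
  have r1 := LinearMap.finrank_range_add_finrank_ker psi'
  have r2 := LinearMap.finrank_range_add_finrank_ker Phi
  have r3 := Submodule.finrank_mono hrange
  rw [LinearMap.range_eq_top.2 hsurj', finrank_top] at r1
  have r4 : finrank F (Z → F × F) = 2 * Z.card := by
    rw [finrank_pi_fintype]; simp [mul_comm]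
  rw [finrank_prod] at r2
  have v1 := aux_finrank_rtd F n
  have v2 := aux_finrank_rtd F (N + e)
  have v3 := aux_finrank_rtd F (N + d)
  have v4 := aux_finrank_rtd F N
  simp only [V, n] at *
  nlinarith

lemma aux_totalDegree_pderiv {F : Type} [Field F] (p : MvPolynomial (Fin 2) F) (i : Fin 2) (n : ℕ)
    (h : p.totalDegree ≤ n + 1) : (pderiv i p).totalDegree ≤ n := by
  rw [totalDegree, Finset.sup_le_iff]
  intro m hm
  rw [MvPolynomial.mem_support_iff, coeff_pderiv] at hm
  have h1 : m + Finsupp.single i 1 ∈ p.support := by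
    rw [MvPolynomial.mem_support_iff]; exact left_ne_zero_of_mul hm
  have h2 := (le_totalDegree h1).trans h
  rw [Finsupp.sum_fintype _ _ (by simp)] at h2 ⊢
  fin_cases i <;> simp [Fin.sum_univ_two] at h2 ⊢ <;> omega

noncomputable def auxTau (F : Type) [Field F] :
    MvPolynomial (Fin 2) F →ₐ[F] Polynomial (Polynomial F) :=
  aeval ![Polynomial.C Polynomial.X * Polynomial.X, Polynomial.X]

noncomputable def auxLine {F : Type} [Field F] (P w : Fin 2 → F) :
    MvPolynomial (Fin 2) F →ₐ[F] Polynomial F :=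
  aeval (fun i => Polynomial.C (P i) + Polynomial.C (w i) * Polynomial.X)

lemma auxTau_monomial {F : Type} [Field F] (m : Fin 2 →₀ ℕ) (c : F) (n : ℕ) :
    (auxTau F (monomial m c)).coeff n =
      if m 0 + m 1 = n then Polynomial.C c * Polynomial.X ^ (m 0) else 0 := by
  have : auxTau F (monomial m c) =
      Polynomial.C (Polynomial.C c * Polynomial.X ^ (m 0)) * Polynomial.X ^ (m 0 + m 1) := by
    rw [auxTau, aeval_monomial, Finsupp.prod_fintype _ _ (by simp)]
    simp only [Fin.prod_univ_two, Matrix.cons_val_zero, Matrix.cons_val_one, mul_pow, map_mul,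
      map_pow, IsScalarTower.algebraMap_apply F (Polynomial F) (Polynomial (Polynomial F)),
      Polynomial.algebraMap_eq]
    ring
  rw [this, Polynomial.coeff_C_mul_X_pow]
  simp only [eq_comm]

lemma auxTau_coeff {F : Type} [Field F] (p : MvPolynomial (Fin 2) F) (n : ℕ) :
    (auxTau F p).coeff n = ∑ m ∈ p.support,
      if m 0 + m 1 = n then Polynomial.C (coeff m p) * Polynomial.X ^ (m 0) else 0 := by
  conv_lhs => rw [← support_sum_monomial_coeff p]
  rw [map_sum, Polynomial.finsetSum_coeff]
  exact Finset.sum_congr rfl fun m _ => auxTau_monomial _ _ _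

lemma auxTau_natDegree {F : Type} [Field F] (p : MvPolynomial (Fin 2) F) :
    (auxTau F p).natDegree ≤ p.totalDegree := by
  rw [Polynomial.natDegree_le_iff_coeff_eq_zero]
  intro n hn
  rw [auxTau_coeff]
  refine Finset.sum_eq_zero fun m hm => if_neg ?_
  have := le_totalDegree hm
  rw [Finsupp.sum_fintype _ _ (by simp)] at this
  simp [Fin.sum_univ_two] at this
  omega

lemma auxTau_coeff_natDegree {F : Type} [Field F] (p : MvPolynomial (Fin 2) F) (n : ℕ) :
    ((auxTau F p).coeff n).natDegree ≤ n := by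
  rw [auxTau_coeff]
  refine Polynomial.natDegree_sum_le_of_forall_le _ _ fun m _ => ?_
  split_ifs with h
  · exact (Polynomial.natDegree_C_mul_X_pow_le _ _).trans (by omega)
  · simp

lemma auxTau_dx {F : Type} [Field F] (p : MvPolynomial (Fin 2) F) (n : ℕ) :
    (auxTau F (pderiv 0 p)).coeff n = Polynomial.derivative ((auxTau F p).coeff (n + 1)) := by
  induction p using MvPolynomial.induction_on' with
  | monomial m c =>
    rw [pderiv_monomial, auxTau_monomial, auxTau_monomial]
    rcases Nat.eq_zero_or_pos (m 0) with h | h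
    · simp only [h]; simp; split_ifs <;> simp
    · have : (m - Finsupp.single 0 1 : Fin 2 →₀ ℕ) 0 + (m - Finsupp.single 0 1 : Fin 2 →₀ ℕ) 1 = n
        ↔ m 0 + m 1 = n + 1 := by
        simp; omega
      simp only [this]
      split_ifs
      · simp [Polynomial.derivative_X_pow]; ring
      · simp
  | add p q hp hq => simp only [map_add, Polynomial.coeff_add, hp, hq]

lemma auxTau_dy {F : Type} [Field F] (p : MvPolynomial (Fin 2) F) (n : ℕ) :
    Polynomial.X * (auxTau F (pderiv 0 p)).coeff n + (auxTau F (pderiv 1 p)).coeff n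
      = ((n + 1 : ℕ) : Polynomial F) * ((auxTau F p).coeff (n + 1)) := by
  induction p using MvPolynomial.induction_on' with
  | monomial m c =>
    have key0 : Polynomial.X * (auxTau F (pderiv 0 (monomial m c))).coeff n =
        if m 0 + m 1 = n + 1 then ((m 0 : ℕ) : Polynomial F) * (Polynomial.C c * Polynomial.X ^ (m 0))
        else 0 := by
      rw [pderiv_monomial, auxTau_monomial]
      rcases Nat.eq_zero_or_pos (m 0) with h | h
      · simp only [h]; simp
      · have : (m - Finsupp.single 0 1 : Fin 2 →₀ ℕ) 0 + (m - Finsupp.single 0 1 : Fin 2 →₀ ℕ) 1 = n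
          ↔ m 0 + m 1 = n + 1 := by
          simp; omega
        simp only [this]
        split_ifs
        · obtain ⟨k, hk⟩ : ∃ k, m 0 = k + 1 := ⟨m 0 - 1, by omega⟩
          simp [hk]; ring
        · simp
    have key1 : (auxTau F (pderiv 1 (monomial m c))).coeff n =
        if m 0 + m 1 = n + 1 then ((m 1 : ℕ) : Polynomial F) * (Polynomial.C c * Polynomial.X ^ (m 0))
        else 0 := by
      rw [pderiv_monomial, auxTau_monomial]
      rcases Nat.eq_zero_or_pos (m 1) with h | h
      · simp only [h]; simp
      · have : (m - Finsupp.single 1 1 : Fin 2 →₀ ℕ) 0 + (m - Finsupp.single 1 1 : Fin 2 →₀ ℕ) 1 = n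
          ↔ m 0 + m 1 = n + 1 := by
          simp; omega
        simp only [this]
        split_ifs
        · simp; ring
        · simp
    rw [key0, key1, auxTau_monomial]
    split_ifs with h
    · rw [← h]; push_cast; ring
    · simp
  | add p q hp hq =>
    simp only [map_add, Polynomial.coeff_add, mul_add, ← hp, ← hq]; ring

lemma auxLine_monomial {F : Type} [Field F] (w : Fin 2 → F) (m : Fin 2 →₀ ℕ) (c : F) (n : ℕ) :
    (auxLine 0 w (monomial m c)).coeff n =
      if m 0 + m 1 = n then c * w 0 ^ m 0 * w 1 ^ m 1 else 0 := by
  have : auxLine 0 w (monomial m c) =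
      Polynomial.C (c * w 0 ^ m 0 * w 1 ^ m 1) * Polynomial.X ^ (m 0 + m 1) := by
    rw [auxLine, aeval_monomial, Finsupp.prod_fintype _ _ (by simp)]
    simp only [Fin.prod_univ_two, mul_pow, map_mul, Pi.zero_apply, map_zero, zero_add,
      map_pow, Polynomial.algebraMap_eq]
    ring
  rw [this, Polynomial.coeff_C_mul_X_pow]
  simp only [eq_comm]

lemma auxTau_eval {F : Type} [Field F] (p : MvPolynomial (Fin 2) F) (n : ℕ) (a : F) :
    ((auxTau F p).coeff n).eval a = (auxLine 0 ![a, 1] p).coeff n := by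
  induction p using MvPolynomial.induction_on' with
  | monomial m c =>
    rw [auxTau_monomial, auxLine_monomial]
    split_ifs <;> simp
  | add p q hp hq => simp only [map_add, Polynomial.coeff_add, Polynomial.eval_add, hp, hq]

lemma auxTau_top {F : Type} [Field F] (p : MvPolynomial (Fin 2) F) (n : ℕ) :
    ((auxTau F p).coeff n).coeff n = (auxLine 0 ![1, 0] p).coeff n := by
  induction p using MvPolynomial.induction_on' with
  | monomial m c =>
    rw [auxTau_monomial, auxLine_monomial]
    split_ifs with h
    · rw [Polynomial.coeff_C_mul_X_pow]
      rcases Nat.eq_zero_or_pos (m 1) with h1 | h1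
      · rw [if_pos (by omega)]; simp [h1]
      · rw [if_neg (by omega)]; simp [h1.ne']
    · simp
  | add p q hp hq => simp only [map_add, Polynomial.coeff_add, hp, hq]

noncomputable def auxFrob {F : Type} [Field F] (Q : ℕ) (f : MvPolynomial (Fin 2) F) :
    MvPolynomial (Fin 2) F :=
  (X 0 ^ Q - X 0) * pderiv 0 f + (X 1 ^ Q - X 1) * pderiv 1 f

lemma auxFrob_totalDegree {F : Type} [Field F] (Q q : ℕ) (hQ : 1 ≤ Q) (f : MvPolynomial (Fin 2) F)
    (hd : f.totalDegree ≤ q + 1) : (auxFrob Q f).totalDegree ≤ Q + q := by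
  have h : ∀ i : Fin 2, ((X i ^ Q - X i) * pderiv i f).totalDegree ≤ Q + q := by
    intro i
    refine (totalDegree_mul _ _).trans (add_le_add ?_ (aux_totalDegree_pderiv _ _ _ hd))
    refine (totalDegree_sub _ _).trans (max_le ?_ ?_)
    · simp
    · simpa using hQ
  exact (totalDegree_add _ _).trans (max_le (h 0) (h 1))

lemma aux_not_dvd {F : Type} [Field F] [Fintype F] (q : ℕ) (hq : 2 ≤ q) (hq0 : (q : F) = 0)
    (hcard : Fintype.card F = q ^ 2) (f : MvPolynomial (Fin 2) F)
    (hd : f.totalDegree = q + 1)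
    (hw : ∀ w : Fin 2 → F, w ≠ 0 → (auxLine 0 w f).coeff (q + 1) ≠ 0) :
    ¬ f ∣ auxFrob (q ^ 2) f := by
  rintro ⟨k, hk⟩
  have hQ : q + 2 ≤ q ^ 2 := by nlinarith
  set Q := q ^ 2 with hQdef
  have hf0 : f ≠ 0 := by rintro rfl; simp at hd
  have hkd : k.totalDegree ≤ Q - 1 := by
    by_cases hk0 : k = 0
    · simp [hk0]
    · have h1 := auxFrob_totalDegree Q q (by omega) f hd.le
      rw [hk, totalDegree_mul_of_isDomain hf0 hk0] at h1
      omega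
  set U := (auxTau F f).coeff (q + 1) with hU
  have e1 : (auxTau F (auxFrob Q f)).coeff (Q + q) = U * (auxTau F k).coeff (Q - 1) := by
    rw [hk, map_mul, show Q + q = (q + 1) + (Q - 1) by omega,
      Polynomial.coeff_mul_add_eq_of_natDegree_le ((auxTau_natDegree f).trans hd.le)
        ((auxTau_natDegree k).trans hkd)]
  have low : ∀ i, (auxTau F (pderiv i f)).coeff (Q + q - 1) = 0 := by
    intro i
    apply Polynomial.coeff_eq_zero_of_natDegree_lt
    have := (auxTau_natDegree (pderiv i f)).trans (aux_totalDegree_pderiv f i q hd.le)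
    omega
  have hX0 : auxTau F (X 0) = Polynomial.C Polynomial.X * Polynomial.X := by simp [auxTau]
  have hX1 : auxTau F (X 1) = Polynomial.X := by simp [auxTau]
  have e2 : (auxTau F (auxFrob Q f)).coeff (Q + q) =
      Polynomial.X ^ Q * (auxTau F (pderiv 0 f)).coeff q + (auxTau F (pderiv 1 f)).coeff q := by
    have : auxTau F (auxFrob Q f) =
        Polynomial.C (Polynomial.X ^ Q) * (Polynomial.X ^ Q * auxTau F (pderiv 0 f))
        - Polynomial.C Polynomial.X * (Polynomial.X * auxTau F (pderiv 0 f))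
        + (Polynomial.X ^ Q * auxTau F (pderiv 1 f)) - Polynomial.X * auxTau F (pderiv 1 f) := by
      simp only [auxFrob, map_add, map_mul, map_sub, map_pow, hX0, hX1]
      ring
    rw [this]
    simp only [Polynomial.coeff_add, Polynomial.coeff_sub, Polynomial.coeff_C_mul]
    have hs : Q + q = (Q + q - 1) + 1 := by omega
    have l0 : ∀ i, (Polynomial.X * auxTau F (pderiv i f)).coeff (Q + q) = 0 := by
      intro i
      rw [hs, Polynomial.coeff_X_mul, low]
    have l1 : ∀ i, (Polynomial.X ^ Q * auxTau F (pderiv i f)).coeff (Q + q)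
        = (auxTau F (pderiv i f)).coeff q := by
      intro i
      rw [add_comm Q q, Polynomial.coeff_X_pow_mul]
    rw [l0, l0, l1, l1]; ring
  have e3 := auxTau_dy f q
  have e4 := auxTau_dx f q
  rw [← hU] at e3 e4
  have hq0' : ((q + 1 : ℕ) : Polynomial F) = 1 := by
    have : (q : Polynomial F) = Polynomial.C (q : F) := by simp
    push_cast
    rw [this, hq0]; simp
  rw [hq0'] at e3
  have hdvd : U ∣ (Polynomial.X ^ Q - Polynomial.X) * Polynomial.derivative U := by
    refine ⟨(auxTau F k).coeff (Q - 1) - 1, ?_⟩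
    rw [← e4]
    linear_combination e1 - e2 - e3
  have hcop : IsCoprime U (Polynomial.X ^ Q - Polynomial.X) := by
    have hmon : (Polynomial.X ^ Q - Polynomial.X : Polynomial F).Monic :=
      Polynomial.monic_X_pow_sub (by simp; omega)
    have hroots : (Polynomial.X ^ Q - Polynomial.X : Polynomial F).roots = Finset.univ.val := by
      rw [← hcard]; exact FiniteField.roots_X_pow_card_sub_X F
    have hprod := Polynomial.prod_multiset_X_sub_C_of_monic_of_roots_card_eq hmon (by
      rw [hroots, FiniteField.X_pow_card_sub_X_natDegree_eq F (by omega)]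
      simp [hcard])
    rw [← hprod, hroots]
    refine IsCoprime.prod_right (t := (Finset.univ : Finset F))
      (s := fun a => Polynomial.X - Polynomial.C a) fun a _ => ?_
    refine ((Polynomial.irreducible_X_sub_C a).coprime_iff_not_dvd.2 ?_).symm
    rw [Polynomial.dvd_iff_isRoot, Polynomial.IsRoot, hU, auxTau_eval]
    exact hw _ (fun h => by simpa using congrFun h 1)
  have hd2 := hcop.dvd_of_dvd_mul_left hdvd
  have htop : U.coeff (q + 1) ≠ 0 := by
    rw [hU, auxTau_top]
    exact hw _ (fun h => by simpa using congrFun h 0)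
  have hder : (Polynomial.derivative U).coeff q ≠ 0 := by
    rw [Polynomial.coeff_derivative]
    simpa [hq0] using htop
  have hdeg : U.natDegree = q + 1 :=
    le_antisymm (auxTau_coeff_natDegree f _) (Polynomial.le_natDegree_of_ne_zero htop)
  have h1 := Polynomial.natDegree_le_of_dvd hd2 (fun h => hder (by simp [h]))
  have h2 := Polynomial.natDegree_derivative_lt (p := U) (by omega)
  omega

lemma auxLine_eval {F : Type} [Field F] (P w : Fin 2 → F) (s : F) (p : MvPolynomial (Fin 2) F) :
    (auxLine P w p).eval s = eval (P + s • w) p := by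
  have : ((Polynomial.aeval s).comp (auxLine P w)) = (aeval (P + s • w) : _ →ₐ[F] F) := by
    ext i
    simp [auxLine]; ring
  have := congrArg (fun h => h p) this
  simpa [aeval_eq_eval, Polynomial.aeval_def, Polynomial.eval₂_eq_eval_map] using this

lemma auxLine_natDegree {F : Type} [Field F] (P w : Fin 2 → F) (p : MvPolynomial (Fin 2) F) :
    (auxLine P w p).natDegree ≤ p.totalDegree := by
  have := aeval_natDegree_le p le_rfl
    (fun i => Polynomial.C (P i) + Polynomial.C (w i) * Polynomial.X) (n := 1) (by
      intro i
      rw [add_comm]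
      exact Polynomial.natDegree_linear_le)
  simpa [auxLine] using this

open Classical in
lemma aux_arc {F : Type} [Field F] [Fintype F] (p : MvPolynomial (Fin 2) F) (d : ℕ) (hd : 1 ≤ d)
    (h : ∀ P w, w ≠ 0 → (auxLine P w p).natDegree = d) :
    (Finset.univ.filter fun P : Fin 2 → F => eval P p = 0).card
      ≤ d + Fintype.card F * (d - 1) := by
  rcases Finset.eq_empty_or_nonempty (Finset.univ.filter fun P : Fin 2 → F => eval P p = 0)
    with he | ⟨P, hP⟩
  · simp [he]
  simp only [Finset.mem_filter, Finset.mem_univ, true_and] at hP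
  let w : Option F → (Fin 2 → F) := fun o => o.elim ![0, 1] fun m => ![1, m]
  have hw : ∀ o, w o ≠ 0 := by
    intro o
    cases o with
    | none => intro h; simpa [w] using congrFun h 1
    | some m => intro h; simpa [w] using congrFun h 0
  let R : Option F → Finset F := fun o => (auxLine P (w o) p).roots.toFinset.erase 0
  have hne : ∀ o, auxLine P (w o) p ≠ 0 := by
    intro o h0
    have := h P (w o) (hw o)
    rw [h0] at this; simp at this; omega
  have hR : ∀ o, (R o).card ≤ d - 1 := by
    intro o
    have h0 : (0 : F) ∈ (auxLine P (w o) p).roots.toFinset := by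
      rw [Multiset.mem_toFinset, Polynomial.mem_roots (hne o), Polynomial.IsRoot, auxLine_eval]
      simpa using hP
    have h1 : (auxLine P (w o) p).roots.toFinset.card ≤ d :=
      (Multiset.toFinset_card_le _).trans ((Polynomial.card_roots' _).trans (h P _ (hw o)).le)
    rw [Finset.card_erase_of_mem h0]
    omega
  have hsub : (Finset.univ.filter fun P : Fin 2 → F => eval P p = 0) ⊆
      insert P (Finset.univ.biUnion fun o => (R o).image fun s : F => P + s • w o) := by
    intro P' hP'
    simp only [Finset.mem_filter, Finset.mem_univ, true_and] at hP'
    rw [Finset.mem_insert]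
    by_cases hPP : P' = P
    · exact Or.inl hPP
    right
    have key : ∀ (o : Option F) (s : F), P' = P + s • w o →
        P' ∈ (Finset.univ.biUnion fun o => (R o).image fun s : F => P + s • w o) := by
      intro o s hs
      rw [Finset.mem_biUnion]
      refine ⟨o, Finset.mem_univ _, Finset.mem_image.2 ⟨s, ?_, hs.symm⟩⟩
      rw [Finset.mem_erase, Multiset.mem_toFinset, Polynomial.mem_roots (hne o), Polynomial.IsRoot,
        auxLine_eval, ← hs]
      refine ⟨?_, hP'⟩
      rintro rfl
      apply hPP; simpa using hs
    by_cases hx : P' 0 = P 0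
    · apply key none (P' 1 - P 1)
      funext i
      fin_cases i <;> simp [w, hx]
    · apply key (some ((P' 1 - P 1) / (P' 0 - P 0))) (P' 0 - P 0)
      have : P' 0 - P 0 ≠ 0 := sub_ne_zero.2 hx
      funext i
      fin_cases i <;> simp [w]
      field_simp
      ring
  refine (Finset.card_le_card hsub).trans ((Finset.card_insert_le _ _).trans ?_)
  have : (Finset.univ.biUnion fun o => (R o).image fun s : F => P + s • w o).card
      ≤ (Finset.univ : Finset (Option F)).card * (d - 1) :=
    Finset.card_biUnion_le_card_mul _ _ _ (fun o _ => Finset.card_image_le.trans (hR o))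
  rw [Finset.card_univ, Fintype.card_option] at this
  have h2 : d = (d - 1) + 1 := by omega
  nlinarith

open Classical in
lemma aux_plane {F : Type} [Field F] [Fintype F] (q : ℕ) (hq : 3 ≤ q) (hq0 : (q : F) = 0)
    (hcard : Fintype.card F = q ^ 2) (f : MvPolynomial (Fin 2) F)
    (hd : f.totalDegree = q + 1)
    (hw : ∀ P w : Fin 2 → F, w ≠ 0 → (auxLine P w f).natDegree = q + 1) :
    (Finset.univ.filter fun P : Fin 2 → F => eval P f = 0).card + 1 ≤ q ^ 3 := by
  have hf0 : f ≠ 0 := by rintro rfl; simp at hd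
  by_cases hirr : Irreducible f
  · have hnd := aux_not_dvd q (by omega) hq0 hcard f hd (by
      intro w hw0 h0
      have h1 := hw 0 w hw0
      have h2 : auxLine 0 w f ≠ 0 := by
        intro h; rw [h] at h1; simp at h1
      apply h2
      rw [← Polynomial.leadingCoeff_eq_zero, Polynomial.leadingCoeff, h1, h0])
    have hb := aux_bezout f (auxFrob (q ^ 2) f + f) hirr
      (fun h => hnd ((dvd_add_left dvd_rfl).1 h)) (q + 1) (q ^ 2 + q) hd
      ((totalDegree_add _ _).trans (max_le
        (auxFrob_totalDegree _ q (by nlinarith) f hd.le) (by rw [hd]; nlinarith)))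
      (Finset.univ.filter fun P : Fin 2 → F => eval P f = 0) (by
        intro P hP
        simp only [Finset.mem_filter, Finset.mem_univ, true_and] at hP
        have hx : ∀ x : F, x ^ q ^ 2 = x := fun x => by rw [← hcard]; exact FiniteField.pow_card x
        refine ⟨hP, by simp [auxFrob, hx, hP], fun i => ?_⟩
        have hQ0 : (q : F) ^ 2 = 0 := by rw [hq0]; simp
        fin_cases i <;> simp [auxFrob, hx, hP, pderiv_mul, pderiv_pow, hq0, pderiv_X])
    nlinarith [mul_le_mul hq hq (by norm_num) (by omega)]
  · have hnu : ¬ IsUnit f := by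
      intro h
      have := (isUnit_iff_totalDegree_of_isReduced.1 h).2
      omega
    obtain ⟨a, b, hab, ha, hb⟩ : ∃ a b, f = a * b ∧ ¬ IsUnit a ∧ ¬ IsUnit b := by
      by_contra hcon
      push Not at hcon
      apply hirr
      refine ⟨hnu, fun a b hab => ?_⟩
      by_contra h
      push Not at h
      exact h.2 (hcon a b hab h.1)
    have ha0 : a ≠ 0 := by rintro rfl; simp at hab; exact hf0 hab
    have hb0 : b ≠ 0 := by rintro rfl; simp at hab; exact hf0 hab
    have hpos : ∀ c : MvPolynomial (Fin 2) F, c ≠ 0 → ¬ IsUnit c → 1 ≤ c.totalDegree := by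
      intro c hc0 hc
      by_contra hlt
      have h0 : c.totalDegree = 0 := by omega
      rw [totalDegree_eq_zero_iff_eq_C] at h0
      apply hc
      rw [h0]
      apply IsUnit.map
      rw [isUnit_iff_ne_zero]
      intro h1; rw [h1] at h0; simp at h0; exact hc0 h0
    have hda := hpos a ha0 ha
    have hdb := hpos b hb0 hb
    have hsum : a.totalDegree + b.totalDegree = q + 1 := by
      rw [← totalDegree_mul_of_isDomain ha0 hb0, ← hab, hd]
    have hnat : ∀ P w, w ≠ 0 → (auxLine P w a).natDegree = a.totalDegree ∧
        (auxLine P w b).natDegree = b.totalDegree := by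
      intro P w hw0
      have h1 := hw P w hw0
      rw [hab, map_mul] at h1
      have h2 := Polynomial.natDegree_mul_le (p := auxLine P w a) (q := auxLine P w b)
      have h3 := auxLine_natDegree P w a
      have h4 := auxLine_natDegree P w b
      omega
    have na := aux_arc a _ hda fun P w h => (hnat P w h).1
    have nb := aux_arc b _ hdb fun P w h => (hnat P w h).2
    have hsub : (Finset.univ.filter fun P : Fin 2 → F => eval P f = 0) ⊆
        (Finset.univ.filter fun P : Fin 2 → F => eval P a = 0) ∪
        (Finset.univ.filter fun P : Fin 2 → F => eval P b = 0) := by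
      intro P
      simp [hab]
    have hc := (Finset.card_le_card hsub).trans (Finset.card_union_le _ _)
    rw [hcard] at na nb
    obtain ⟨x, hx⟩ : ∃ x, a.totalDegree = x + 1 := ⟨a.totalDegree - 1, by omega⟩
    obtain ⟨y, hy⟩ : ∃ y, b.totalDegree = y + 1 := ⟨b.totalDegree - 1, by omega⟩
    rw [hx] at na hsum
    rw [hy] at nb hsum
    simp only [Nat.add_sub_cancel] at na nb
    have hxy : q = x + y + 1 := by omega
    have e : q ^ 2 * x + q ^ 2 * y + q ^ 2 = q ^ 3 := by
      calc _ = q ^ 2 * (x + y + 1) := by ring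
        _ = _ := by rw [← hxy]; ring
    nlinarith

lemma aux_prod_coeff {F ι : Type} [Field F] (p : ι → Polynomial F) (m : ι → ℕ)
    (hp : ∀ i, (p i).natDegree ≤ 1) (s : Finset ι) :
    (∏ i ∈ s, p i ^ m i).natDegree ≤ ∑ i ∈ s, m i ∧
    (∏ i ∈ s, p i ^ m i).coeff (∑ i ∈ s, m i) = ∏ i ∈ s, (p i).coeff 1 ^ m i := by
  classical
  induction s using Finset.induction_on with
  | empty => simp
  | insert a s ha ih =>
    rw [Finset.prod_insert ha, Finset.sum_insert ha, Finset.prod_insert ha]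
    have h1 : (p a ^ m a).natDegree ≤ m a := by
      simpa using Polynomial.natDegree_pow_le_of_le (m a) (hp a)
    refine ⟨Polynomial.natDegree_mul_le_of_le h1 ih.1, ?_⟩
    rw [Polynomial.coeff_mul_add_eq_of_natDegree_le h1 ih.1, ih.2]
    congr 1
    simpa using Polynomial.coeff_pow_of_natDegree_le (m := m a) (hp a)

lemma aux_top_coeff {F : Type} [Field F] {n d : ℕ} (f : MvPolynomial (Fin n) F)
    (hf : f.IsHomogeneous d) (v u : Fin n → F) :
    (aeval (fun i => Polynomial.C (v i) + Polynomial.C (u i) * Polynomial.X) f).coeff d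
      = eval u f := by
  conv_lhs => rw [← support_sum_monomial_coeff f]
  conv_rhs => rw [← support_sum_monomial_coeff f]
  rw [map_sum, map_sum, Polynomial.finsetSum_coeff]
  refine Finset.sum_congr rfl fun m hm => ?_
  have hdeg : ∑ i, m i = d := by
    rw [← hf (MvPolynomial.mem_support_iff.1 hm), Finsupp.weight_apply, Finsupp.sum_fintype]
    · simp
    · simp
  rw [aeval_monomial, Finsupp.prod_fintype _ _ (by simp), eval_monomial,
    Finsupp.prod_fintype _ _ (by simp), Polynomial.algebraMap_eq, Polynomial.coeff_C_mul]
  have := (aux_prod_coeff (fun i => Polynomial.C (v i) + Polynomial.C (u i) * Polynomial.X) m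
    (by
      intro i
      rw [add_comm]
      exact Polynomial.natDegree_linear_le) Finset.univ).2
  rw [hdeg] at this
  rw [this]
  simp

lemma aux_totalDegree_aeval {F : Type} [Field F] {n d : ℕ} (f : MvPolynomial (Fin n) F)
    (hf : f.totalDegree ≤ d) (g : Fin n → MvPolynomial (Fin 2) F)
    (hg : ∀ i, (g i).totalDegree ≤ 1) : (aeval g f).totalDegree ≤ d := by
  conv_lhs => rw [← support_sum_monomial_coeff f]
  rw [map_sum]
  refine totalDegree_finsetSum_le fun m hm => ?_
  have h1 := (le_totalDegree hm).trans hf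
  rw [Finsupp.sum_fintype _ _ (by simp)] at h1
  rw [aeval_monomial, Finsupp.prod_fintype _ _ (by simp)]
  refine (totalDegree_mul _ _).trans ?_
  rw [algebraMap_eq, totalDegree_C, zero_add]
  refine (totalDegree_finsetProd _ _).trans (le_trans (Finset.sum_le_sum fun i _ => ?_) h1)
  refine (totalDegree_pow _ _).trans ?_
  nlinarith [hg i]

open Classical in
lemma aux_section {F : Type} [Field F] [Fintype F] {n : ℕ} (q : ℕ) (hq : 3 ≤ q) (hq0 : (q : F) = 0)
    (hcard : Fintype.card F = q ^ 2) (f : MvPolynomial (Fin n) F) (hf : f.IsHomogeneous (q + 1))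
    (e0 e1 c : Fin n → F)
    (he : ∀ w : Fin 2 → F, w ≠ 0 → eval (w 0 • e0 + w 1 • e1) f ≠ 0) :
    (Finset.univ.filter fun P : Fin 2 → F => eval (P 0 • e0 + P 1 • e1 + c) f = 0).card + 1
      ≤ q ^ 3 := by
  let g : Fin n → MvPolynomial (Fin 2) F := fun i => C (c i) + C (e0 i) * X 0 + C (e1 i) * X 1
  let G := aeval g f
  have hG : ∀ P, eval P G = eval (P 0 • e0 + P 1 • e1 + c) f := by
    intro P
    have : ((aeval P : _ →ₐ[F] F).comp (aeval g)) =
        (aeval (P 0 • e0 + P 1 • e1 + c) : _ →ₐ[F] F) := by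
      ext i
      simp [g]; ring
    have := congrArg (fun h => h f) this
    simpa only [AlgHom.comp_apply, aeval_eq_eval, RingHom.coe_coe] using this
  have hL : ∀ P w, auxLine P w G = aeval (fun i =>
      Polynomial.C ((P 0 • e0 + P 1 • e1 + c) i) +
      Polynomial.C ((w 0 • e0 + w 1 • e1) i) * Polynomial.X) f := by
    intro P w
    have : (auxLine P w).comp (aeval g) = aeval (fun i =>
      Polynomial.C ((P 0 • e0 + P 1 • e1 + c) i) +
      Polynomial.C ((w 0 • e0 + w 1 • e1) i) * Polynomial.X) := by
      apply MvPolynomial.algHom_ext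
      intro i
      simp [g, auxLine]; ring
    exact congrArg (fun h => h f) this
  have hdeg : G.totalDegree ≤ q + 1 := by
    refine aux_totalDegree_aeval f hf.totalDegree_le g fun i => ?_
    refine (totalDegree_add _ _).trans (max_le ((totalDegree_add _ _).trans (max_le ?_ ?_)) ?_)
    · simp
    · exact (totalDegree_mul _ _).trans (by simp)
    · exact (totalDegree_mul _ _).trans (by simp)
  have hge : ∀ P w, w ≠ 0 → q + 1 ≤ (auxLine P w G).natDegree := by
    intro P w hw
    apply Polynomial.le_natDegree_of_ne_zero
    rw [hL, aux_top_coeff f hf]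
    exact he w hw
  have hge' : q + 1 ≤ G.totalDegree :=
    (hge 0 ![1, 0] (fun h => by simpa using congrFun h 0)).trans (auxLine_natDegree _ _ _)
  have := aux_plane q hq hq0 hcard G (le_antisymm hdeg hge') fun P w hw =>
    le_antisymm ((auxLine_natDegree _ _ _).trans hdeg) (hge P w hw)
  simpa only [hG] using this

lemma aux_arith (q r : ℕ) (hq : 3 ≤ q) (hr : 2 ≤ r) (N : ℤ)
    (hN : N = ((q : ℤ) ^ (r + 1) + (-1) ^ r) * ((q : ℤ) ^ r - (-1) ^ r))
    (hle : N ≤ (((q : ℤ) ^ 2) ^ (r - 1) - 1) * ((q : ℤ) ^ 3 - 1)) : False := by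
  have hq' : (3 : ℤ) ≤ q := by exact_mod_cast hq
  obtain ⟨s, rfl⟩ : ∃ s, r = s + 2 := ⟨r - 2, by omega⟩
  have e1 : s + 2 - 1 = s + 1 := by omega
  rw [e1] at hle
  have hs : (1 : ℤ) ≤ (q : ℤ) ^ s := one_le_pow₀ (by linarith)
  have hs' : s ≠ 0 → (q : ℤ) ≤ (q : ℤ) ^ s := fun h => le_self_pow₀ (by linarith) h
  have key : N - (((q : ℤ) ^ 2) ^ (s + 1) - 1) * ((q : ℤ) ^ 3 - 1) =
      ((q : ℤ) ^ s * q) ^ 2 + q ^ 3 - 1 - ((-1) ^ s) ^ 2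
        - (-1) ^ s * (q - 1) * q * ((q : ℤ) ^ s * q) := by
    rw [hN]; ring
  rcases neg_one_pow_eq_or ℤ s with h | h
  · rw [h] at key
    by_cases h0 : s = 0
    · subst h0
      simp at key
      have hle' : N - ((q : ℤ) ^ 2 - 1) * ((q : ℤ) ^ 3 - 1) ≤ 0 := by simpa using hle
      rw [key] at hle'
      nlinarith
    · have := hs' h0
      generalize (q : ℤ) ^ s = b at *
      have h5 : (q : ℤ) * q ≤ b * q := by nlinarith
      have h6 : ((q : ℤ) * q) * (b * q) ≤ (b * q) * (b * q) := by
        apply mul_le_mul_of_nonneg_right h5; positivity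
      have h7 : 0 ≤ (q : ℤ) * (b * q) := by positivity
      have h8 : (27 : ℤ) ≤ (q : ℤ) ^ 3 := by nlinarith [mul_le_mul hq' hq' (by norm_num) (by linarith)]
      nlinarith
  · rw [h] at key
    generalize (q : ℤ) ^ s = b at *
    have h7 : 0 ≤ ((q : ℤ) - 1) * q * (b * q) := by
      have : 0 ≤ (q : ℤ) - 1 := by linarith
      positivity
    have h8 : (27 : ℤ) ≤ (q : ℤ) ^ 3 := by nlinarith [mul_le_mul hq' hq' (by norm_num) (by linarith)]
    nlinarith [sq_nonneg (b * q)]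

/-- If `q > 2` is a prime power, `r ≥ 2`, and `T` is a hypersurface of `PG(r,q²)` of
degree `q+1` defined over `GF(q²)` with as many rational points as the non-singular
Hermitian variety `H(r,q²)`, namely `(q^(r+1) + (-1)^r)(q^r - (-1)^r)/(q² - 1)`, then
`T` is a blocking set with respect to the lines of `PG(r,q²)`. -/
theorem stmt_2 (q : ℕ) (hq : ∃ p k : ℕ, p.Prime ∧ 0 < k ∧ q = p ^ k) (hq2 : 2 < q)
    (r : ℕ) (hr : 2 ≤ r)
    (F : Type) [Field F] [Fintype F] (hcardF : Fintype.card F = q ^ 2)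
    (f : MvPolynomial (Fin (r + 1)) F) (hf0 : f ≠ 0) (hfdeg : f.IsHomogeneous (q + 1))
    (T : Set (Projectivization F (Fin (r + 1) → F))) (hT : T = hypersurfacePts f)
    (hcardT : (T.ncard : ℤ) * ((q : ℤ) ^ 2 - 1) =
      ((q : ℤ) ^ (r + 1) + (-1) ^ r) * ((q : ℤ) ^ r - (-1) ^ r)) :
    ∀ L : Submodule F (Fin (r + 1) → F), Module.finrank F L = 2 →
      ∃ P ∈ T, P ∈ projPts L := by
  classical
  intro L hL
  by_contra hcon
  push Not at hcon
  have hq0 : (q : F) = 0 := by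
    have h1 : ((Fintype.card F : ℕ) : F) = 0 := by simp
    rw [hcardF] at h1
    push_cast at h1
    exact pow_eq_zero_iff (two_ne_zero) |>.1 h1
  have hsm : ∀ (a : F) (v : Fin (r + 1) → F), eval (a • v) f = a ^ (q + 1) * eval v f := by
    intro a v
    rw [eval_eq', eval_eq', Finset.mul_sum]
    refine Finset.sum_congr rfl fun m hm => ?_
    have hdeg : ∑ i, m i = q + 1 := by
      rw [← hfdeg (MvPolynomial.mem_support_iff.1 hm), Finsupp.weight_apply, Finsupp.sum_fintype]
      · simp
      · simp
    simp only [Pi.smul_apply, smul_eq_mul, mul_pow, Finset.prod_mul_distrib,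
      Finset.prod_pow_eq_pow_sum, hdeg]
    ring
  -- no nonzero zeros on `L`
  have hLz : ∀ v ∈ L, v ≠ 0 → eval v f ≠ 0 := by
    intro v hv hv0 h0
    obtain ⟨a, ha⟩ := Projectivization.exists_smul_eq_mk_rep F v hv0
    refine hcon (Projectivization.mk F v hv0) ?_ ?_
    · rw [hT]
      change eval _ f = 0
      rw [← ha, Units.smul_def, hsm, h0, mul_zero]
    · change Projectivization.submodule _ ≤ L
      rw [Projectivization.submodule_mk, Submodule.span_singleton_le_iff_mem]
      exact hv
  let b := finBasisOfFinrankEq F L hL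
  set e0 : Fin (r + 1) → F := (b 0).1 with he0
  set e1 : Fin (r + 1) → F := (b 1).1 with he1
  have hcomb : ∀ w : Fin 2 → F, w 0 • e0 + w 1 • e1 = (b.equivFun.symm w).1 := by
    intro w
    rw [Basis.equivFun_symm_apply]
    simp [Fin.sum_univ_two, he0, he1]
  have he : ∀ w : Fin 2 → F, w ≠ 0 → eval (w 0 • e0 + w 1 • e1) f ≠ 0 := by
    intro w hw
    rw [hcomb]
    refine hLz _ (b.equivFun.symm w).2 ?_
    intro h
    apply hw
    exact (LinearEquiv.map_eq_zero_iff b.equivFun.symm).1 (Subtype.ext h)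
  obtain ⟨D, hD⟩ := Submodule.exists_isCompl L
  have hDr : finrank F D = r - 1 := by
    have := Submodule.finrank_add_eq_of_isCompl hD
    rw [hL] at this
    simp at this
    omega
  have hDcard : Fintype.card D = (q ^ 2) ^ (r - 1) := by
    rw [Module.card_eq_pow_finrank (K := F) (V := D), hcardF, hDr]
  let S : Finset (Fin (r + 1) → F) := Finset.univ.filter fun v => v ≠ 0 ∧ eval v f = 0
  let Zc : D → Finset (Fin 2 → F) := fun c =>
    Finset.univ.filter fun P : Fin 2 → F => eval (P 0 • e0 + P 1 • e1 + c.1) f = 0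
  have hZc : ∀ c, (Zc c).card ≤ q ^ 3 - 1 := by
    intro c
    have := aux_section q (by omega) hq0 hcardF f hfdeg e0 e1 c.1 he
    simp only [Zc]
    omega
  have hSsub : S ⊆ (Finset.univ.erase (0 : D)).biUnion fun c =>
      (Zc c).image fun P => P 0 • e0 + P 1 • e1 + c.1 := by
    intro v hv
    simp only [S, Finset.mem_filter, Finset.mem_univ, true_and] at hv
    obtain ⟨l, hl, c, hc, hlc⟩ := Submodule.mem_sup.1
      (show v ∈ L ⊔ D by rw [hD.sup_eq_top]; trivial)
    have hl' : b.equivFun ⟨l, hl⟩ 0 • e0 + b.equivFun ⟨l, hl⟩ 1 • e1 = l := by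
      rw [hcomb]; simp
    rw [Finset.mem_biUnion]
    refine ⟨⟨c, hc⟩, ?_, Finset.mem_image.2 ⟨b.equivFun ⟨l, hl⟩, ?_, ?_⟩⟩
    · rw [Finset.mem_erase]
      refine ⟨?_, Finset.mem_univ _⟩
      intro h
      have hc0 : c = 0 := congrArg Subtype.val h
      rw [hc0, add_zero] at hlc
      rw [← hlc] at hv
      exact hLz l hl hv.1 hv.2
    · simp only [Zc, Finset.mem_filter, Finset.mem_univ, true_and]
      rw [hl', hlc]; exact hv.2
    · simp only []
      rw [hl', hlc]
  have hScard : S.card ≤ ((q ^ 2) ^ (r - 1) - 1) * (q ^ 3 - 1) := by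
    refine (Finset.card_le_card hSsub).trans ?_
    refine (Finset.card_biUnion_le_card_mul _ _ _
      fun c _ => Finset.card_image_le.trans (hZc c)).trans ?_
    rw [Finset.card_erase_of_mem (Finset.mem_univ _), Finset.card_univ, hDcard]
  have hTS : T.ncard * (q ^ 2 - 1) ≤ S.card := by
    have h1 : Nat.card (T × Fˣ) = T.ncard * (q ^ 2 - 1) := by
      rw [Nat.card_prod, Nat.card_eq_fintype_card (α := Fˣ), Fintype.card_units, hcardF]
      rfl
    rw [← h1, ← Nat.card_eq_finsetCard S]
    let j : T × Fˣ → S := fun x => ⟨(x.2 : F) • x.1.1.rep, by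
      have h2 : x.1.1 ∈ hypersurfacePts f := hT.subset x.1.2
      have h3 : eval x.1.1.rep f = 0 := h2
      simp only [S, Finset.mem_filter, Finset.mem_univ, true_and]
      refine ⟨smul_ne_zero x.2.ne_zero x.1.1.rep_nonzero, ?_⟩
      rw [hsm, h3, mul_zero]⟩
    refine Nat.card_le_card_of_injective j ?_
    rintro ⟨⟨P, hP⟩, a⟩ ⟨⟨P', hP'⟩, a'⟩ h
    have h2 : (a : F) • P.rep = (a' : F) • P'.rep := congrArg Subtype.val h
    have hPP : P = P' := by
      rw [← P.mk_rep, ← P'.mk_rep, Projectivization.mk_eq_mk_iff]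
      refine ⟨a⁻¹ * a', ?_⟩
      rw [mul_smul, Units.smul_def a', ← h2, ← Units.smul_def, inv_smul_smul]
    subst hPP
    have h3 := smul_left_injective F P.rep_nonzero h2
    simp [Units.ext_iff, h3]
  have hfin := hTS.trans hScard
  have hq1 : 1 ≤ q ^ 2 := Nat.one_le_pow _ _ (by omega)
  have hq3 : 1 ≤ q ^ 3 := Nat.one_le_pow _ _ (by omega)
  have hq4 : 1 ≤ (q ^ 2) ^ (r - 1) := Nat.one_le_pow _ _ (by omega)
  zify [hq1, hq3, hq4] at hfin
  exact aux_arith q r (by omega) hr _ hcardT hfin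
end

section
/- Let q be a prime power with q > 3 and let C be a plane projective curve of degree q+1 defined over GF(q^2) having no GF(q^2)-linear components. If the number N of GF(q^2)-rational points of C satisfies N < q^3 + 1, then N <= q^3 - (q^2 - 2) = q^3 - q^2 + 2. -/
open MvPolynomial Module

section basics

variable {F : Type} [Field F]

/-- Restriction of a polynomial to the parametrised line `t ↦ b + t a`. -/
noncomputable def hcPhi (b a : Fin 3 → F) : MvPolynomial (Fin 3) F →ₐ[F] Polynomial F :=
  MvPolynomial.aeval (fun i => Polynomial.C (b i) + Polynomial.C (a i) * Polynomial.X)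

/-- The linear form with coefficient vector `c`. -/
noncomputable def hcLin (c : Fin 3 → F) : MvPolynomial (Fin 3) F := ∑ i, C (c i) * X i

lemma hcLin_hom (c : Fin 3 → F) : (hcLin c).IsHomogeneous 1 :=
  IsHomogeneous.sum _ _ _ fun _ _ => isHomogeneous_C_mul_X _ _

lemma hcLin_eval (c x : Fin 3 → F) : eval x (hcLin c) = c ⬝ᵥ x := by
  simp [hcLin, dotProduct]

lemma hcPhi_lin (b a c : Fin 3 → F) :
    hcPhi b a (hcLin c) = Polynomial.C (c ⬝ᵥ b) + Polynomial.C (c ⬝ᵥ a) * Polynomial.X := by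
  simp [hcLin, hcPhi, dotProduct, Fin.sum_univ_three]
  ring

lemma hcPhi_eval (b a : Fin 3 → F) (f : MvPolynomial (Fin 3) F) (t : F) :
    (hcPhi b a f).eval t = eval (b + t • a) f := by
  induction f using MvPolynomial.induction_on with
  | C r => simp [hcPhi]
  | add p q hp hq => simp [hp, hq]
  | mul_X p i hp =>
    have hX : hcPhi b a (X i) = Polynomial.C (b i) + Polynomial.C (a i) * Polynomial.X := by
      simp [hcPhi]
    rw [map_mul, Polynomial.eval_mul, hp, hX]
    simp
    left
    ring

lemma hcPhi_deriv (b a : Fin 3 → F) (f : MvPolynomial (Fin 3) F) :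
    Polynomial.derivative (hcPhi b a f) =
      ∑ i, Polynomial.C (a i) * hcPhi b a (pderiv i f) := by
  induction f using MvPolynomial.induction_on with
  | C r => simp [hcPhi]
  | add p q hp hq => simp [hp, hq, mul_add, Finset.sum_add_distrib]
  | mul_X p j hp =>
    have : hcPhi b a (X j) = Polynomial.C (b j) + Polynomial.C (a j) * Polynomial.X := by
      simp [hcPhi]
    simp only [map_mul, Polynomial.derivative_mul, hp, this, Derivation.leibniz, pderiv_X,
      smul_eq_mul, map_add, Fin.sum_univ_three]
    fin_cases j <;> simp <;> ring

lemma hcPhi_monomial (b a : Fin 3 → F) (m : Fin 3 →₀ ℕ) (r : F) :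
    hcPhi b a (monomial m r) = Polynomial.C r *
      ∏ i, (Polynomial.C (b i) + Polynomial.C (a i) * Polynomial.X) ^ (m i) := by
  simp [hcPhi, aeval_monomial, Finsupp.prod_fintype]

lemma hc_lin_natDegree (b a : F) (k : ℕ) :
    ((Polynomial.C b + Polynomial.C a * Polynomial.X) ^ k).natDegree ≤ k := by
  compute_degree

lemma hc_lin_coeff (b a : F) (k : ℕ) :
    ((Polynomial.C b + Polynomial.C a * Polynomial.X) ^ k).coeff k = a ^ k := by
  have := Polynomial.coeff_pow_of_natDegree_le (p := Polynomial.C b + Polynomial.C a * Polynomial.X)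
    (n := 1) (m := k) (by compute_degree)
  simpa using this

lemma hcPhi_degree (b a : Fin 3 → F) (f : MvPolynomial (Fin 3) F) (d : ℕ)
    (hf : f.IsHomogeneous d) :
    (hcPhi b a f).natDegree ≤ d ∧ (hcPhi b a f).coeff d = eval a f := by
  have key : ∀ m ∈ f.support, (hcPhi b a (monomial m (coeff m f))).natDegree ≤ d ∧
      (hcPhi b a (monomial m (coeff m f))).coeff d = eval a (monomial m (coeff m f)) := by
    intro m hm
    have hd : m 0 + m 1 + m 2 = d := by
      have := hf.degree_eq_sum_deg_support hm
      rw [this, Finset.sum_subset (Finset.subset_univ _) (by simp), Fin.sum_univ_three]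
    rw [hcPhi_monomial, Fin.prod_univ_three, Polynomial.coeff_C_mul, eval_monomial,
      Finsupp.prod_fintype _ _ (by simp), Fin.prod_univ_three]
    have h0 := hc_lin_natDegree (b 0) (a 0) (m 0)
    have h1 := hc_lin_natDegree (b 1) (a 1) (m 1)
    have h2 := hc_lin_natDegree (b 2) (a 2) (m 2)
    have h01 := Polynomial.natDegree_mul_le_of_le h0 h1
    have h012 := Polynomial.natDegree_mul_le_of_le h01 h2
    constructor
    · exact (Polynomial.natDegree_C_mul_le _ _).trans (by omega)
    · rw [← hd, Polynomial.coeff_mul_add_eq_of_natDegree_le h01 h2,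
        Polynomial.coeff_mul_add_eq_of_natDegree_le h0 h1, hc_lin_coeff, hc_lin_coeff, hc_lin_coeff]
  conv in (occs := *) hcPhi b a f => all_goals rw [f.as_sum]
  conv in eval a f => rw [f.as_sum]
  simp only [map_sum, Polynomial.finsetSum_coeff]
  refine ⟨Polynomial.natDegree_sum_le_of_forall_le _ _ fun m hm => (key m hm).1,
    Finset.sum_congr rfl fun m hm => (key m hm).2⟩

/-- The Stöhr–Voloch polynomial `∑ x_i^Q ∂_i f`. -/
noncomputable def hcG (Q : ℕ) (f : MvPolynomial (Fin 3) F) : MvPolynomial (Fin 3) F :=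
  ∑ i, X i ^ Q * pderiv i f

lemma hcG_hom (Q : ℕ) (f : MvPolynomial (Fin 3) F) (d : ℕ) (hf : f.IsHomogeneous d) :
    (hcG Q f).IsHomogeneous (Q + (d - 1)) :=
  IsHomogeneous.sum _ _ _ fun _ _ => (isHomogeneous_X_pow _ _).mul hf.pderiv

lemma hcPhi_G [Fintype F] (b a : Fin 3 → F) (f : MvPolynomial (Fin 3) F) (d : ℕ)
    (hf : f.IsHomogeneous d) :
    hcPhi b a (hcG (Fintype.card F) f) = (d : Polynomial F) * hcPhi b a f +
      (Polynomial.X ^ (Fintype.card F) - Polynomial.X) * Polynomial.derivative (hcPhi b a f) := by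
  have hX : ∀ i, hcPhi b a (X i) = Polynomial.C (b i) + Polynomial.C (a i) * Polynomial.X := by
    simp [hcPhi]
  have hE := congrArg (hcPhi b a) hf.sum_X_mul_pderiv
  simp only [map_sum, map_mul, hX, nsmul_eq_mul, map_natCast] at hE
  have hfr : ∀ u v : F, (Polynomial.C u + Polynomial.C v * Polynomial.X) ^ (Fintype.card F) =
      Polynomial.C u + Polynomial.C v * Polynomial.X ^ (Fintype.card F) := by
    intro u v
    rw [← FiniteField.expand_card]
    simp
  rw [hcPhi_deriv, ← hE, hcG]
  simp only [map_add, map_mul, map_pow, hX, hfr, Fin.sum_univ_three]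
  ring

/-- The substitution `x ↦ T x`. -/
noncomputable def hcPsi : MvPolynomial (Fin 3) F →ₐ[F] Polynomial (MvPolynomial (Fin 3) F) :=
  MvPolynomial.aeval (fun i => Polynomial.C (X i) * Polynomial.X)

lemma hcPsi_coeff (f : MvPolynomial (Fin 3) F) (k : ℕ) :
    (hcPsi f).coeff k = homogeneousComponent k f := by
  induction f using MvPolynomial.induction_on' with
  | monomial m r =>
    have h1 : hcPsi (monomial m r) = Polynomial.C (monomial m r) * Polynomial.X ^ m.degree := by
      rw [hcPsi, aeval_monomial, Finsupp.prod_fintype _ _ (by simp)]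
      simp only [mul_pow, Finset.prod_mul_distrib, Finset.prod_pow_eq_pow_sum]
      rw [monomial_eq, Finsupp.prod_fintype _ _ (by simp), Finsupp.degree_eq_sum]
      simp only [map_mul, map_prod, map_pow, mul_assoc]
      rfl
    rw [h1, Polynomial.coeff_C_mul_X_pow, homogeneousComponent_of_mem
      (isHomogeneous_monomial r rfl)]
  | add p q hp hq => simp [hp, hq]

lemma hc_mul_hom (f g : MvPolynomial (Fin 3) F) (d : ℕ) (h : (f * g).IsHomogeneous d)
    (h0 : f * g ≠ 0) : ∃ d1 d2, f.IsHomogeneous d1 ∧ g.IsHomogeneous d2 ∧ d1 + d2 = d := by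
  have hf0 : f ≠ 0 := left_ne_zero_of_mul h0
  have hg0 : g ≠ 0 := right_ne_zero_of_mul h0
  have hinj : ∀ u : MvPolynomial (Fin 3) F, u ≠ 0 → hcPsi u ≠ 0 := by
    intro u hu h
    apply hu
    rw [← sum_homogeneousComponent u]
    apply Finset.sum_eq_zero
    intro i _
    rw [← hcPsi_coeff, h, Polynomial.coeff_zero]
  have hm : hcPsi f * hcPsi g = Polynomial.monomial d (f * g) := by
    rw [← map_mul]
    ext1 k
    rw [hcPsi_coeff, homogeneousComponent_of_mem h, Polynomial.coeff_monomial]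
    simp only [eq_comm]
  have e1 := congrArg Polynomial.natDegree hm
  have e2 := congrArg Polynomial.natTrailingDegree hm
  rw [Polynomial.natDegree_mul (hinj f hf0) (hinj g hg0),
    Polynomial.natDegree_monomial_eq _ h0] at e1
  rw [Polynomial.natTrailingDegree_mul (hinj f hf0) (hinj g hg0),
    Polynomial.natTrailingDegree_monomial h0] at e2
  have l1 := Polynomial.natTrailingDegree_le_natDegree (hcPsi f)
  have l2 := Polynomial.natTrailingDegree_le_natDegree (hcPsi g)
  have fin : ∀ u : MvPolynomial (Fin 3) F,
      (hcPsi u).natTrailingDegree = (hcPsi u).natDegree →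
      u.IsHomogeneous (hcPsi u).natDegree := by
    intro u hu
    have : u = homogeneousComponent (hcPsi u).natDegree u := by
      conv_lhs => rw [← sum_homogeneousComponent u]
      by_cases hmem : (hcPsi u).natDegree ∈ Finset.range (u.totalDegree + 1)
      · apply Finset.sum_eq_single_of_mem _ hmem
        intro k _ hk
        rw [← hcPsi_coeff]
        rcases lt_or_gt_of_ne hk with hk | hk
        · exact Polynomial.coeff_eq_zero_of_lt_natTrailingDegree (hu ▸ hk)
        · exact Polynomial.coeff_eq_zero_of_natDegree_lt hk
      · rw [homogeneousComponent_eq_zero _ _ (by simpa using hmem)]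
        apply Finset.sum_eq_zero
        intro k hk'
        have hk : k ≠ (hcPsi u).natDegree := by
          rintro rfl
          exact hmem hk'
        rw [← hcPsi_coeff]
        rcases lt_or_gt_of_ne hk with hk | hk
        · exact Polynomial.coeff_eq_zero_of_lt_natTrailingDegree (hu ▸ hk)
        · exact Polynomial.coeff_eq_zero_of_natDegree_lt hk
    rw [this]
    convert homogeneousComponent_isHomogeneous _ _ using 2
    rw [← this]
  exact ⟨_, _, fin f (by omega), fin g (by omega), e1⟩

end basics

section bezout

variable {F : Type} [Field F]

lemma hc_finrank (s : ℕ) :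
    2 * finrank F (homogeneousSubmodule (Fin 3) F s) = (s + 1) * (s + 2) := by
  have e : finrank F (homogeneousSubmodule (Fin 3) F s) =
      Fintype.card ((Finset.univ : Finset (Fin 3)).finsuppAntidiag s) := by
    have hset : {d : Fin 3 →₀ ℕ | d.degree = s} =
        (((Finset.univ : Finset (Fin 3)).finsuppAntidiag s : Finset _) : Set (Fin 3 →₀ ℕ)) := by
      ext d
      simp [Finsupp.degree_eq_sum]
    rw [homogeneousSubmodule_eq_finsupp_supported, hset]
    have := (AddMonoidAlgebra.supportedEquivFinsupp (R := F) (S := F)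
      (((Finset.univ : Finset (Fin 3)).finsuppAntidiag s : Finset _) : Set (Fin 3 →₀ ℕ))).finrank_eq
    rw [this, finrank_finsupp_self]
    rfl
  rw [e, Fintype.card_coe, Finset.card_finsuppAntidiag_nat_eq_choose]
  have : (Finset.univ : Finset (Fin 3)).card + s - 1 = s + 2 := by
    simp; omega
  rw [this, Nat.choose_symm_add, Nat.choose_two_right, Nat.mul_div_cancel']
  · simp; ring
  · exact even_iff_two_dvd.mp (Nat.even_mul_pred_self _)

instance (s : ℕ) : FiniteDimensional F (homogeneousSubmodule (Fin 3) F s) :=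
  Module.Finite.iff_fg.mpr (homogeneousSubmodule_fg _ _ s)

/-- multiplication by `f` as a map of graded pieces -/
noncomputable def hcMul (f : MvPolynomial (Fin 3) F) (m : ℕ) (hf : f.IsHomogeneous m) (k s : ℕ)
    (h : m + k = s) :
    homogeneousSubmodule (Fin 3) F k →ₗ[F] homogeneousSubmodule (Fin 3) F s :=
  ((LinearMap.mulLeft F f).restrict (p := homogeneousSubmodule (Fin 3) F k)
    (q := homogeneousSubmodule (Fin 3) F s) (fun x hx => by
      subst h
      exact hf.mul hx))

lemma hcMul_coe (f : MvPolynomial (Fin 3) F) (m : ℕ) (hf : f.IsHomogeneous m) (k s : ℕ)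
    (h : m + k = s) (x) : (hcMul f m hf k s h x : MvPolynomial (Fin 3) F) = f * x := rfl

lemma hc_codim (f g : MvPolynomial (Fin 3) F) (m n k : ℕ) (hf : f.IsHomogeneous m)
    (hg : g.IsHomogeneous n) (hp : Prime f) (hfg : ¬ f ∣ g)
    {V : Type} [AddCommGroup V] [Module F V] [FiniteDimensional F V]
    (T : homogeneousSubmodule (Fin 3) F (m + n + k) →ₗ[F] V) (hT : Function.Surjective T)
    (h1 : ∀ u : homogeneousSubmodule (Fin 3) F (m + n + k), f ∣ (u : MvPolynomial (Fin 3) F) → T u = 0)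
    (h2 : ∀ u : homogeneousSubmodule (Fin 3) F (m + n + k), g ∣ (u : MvPolynomial (Fin 3) F) → T u = 0) :
    finrank F V ≤ m * n := by
  let A := hcMul f m hf (n + k) (m + n + k) (by ring)
  let B := hcMul g n hg (m + k) (m + n + k) (by ring)
  let M := A.coprod B
  have hr := M.finrank_range_add_finrank_ker
  have hTr := T.finrank_range_add_finrank_ker
  have hle : finrank F (LinearMap.range M) ≤ finrank F (LinearMap.ker T) := by
    apply Submodule.finrank_mono
    rintro _ ⟨⟨x, y⟩, rfl⟩
    rw [LinearMap.mem_ker, LinearMap.coprod_apply, map_add, h1 _ (Dvd.intro _ rfl),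
      h2 _ (Dvd.intro _ rfl), add_zero]
  let L : homogeneousSubmodule (Fin 3) F k →ₗ[F] _ :=
    (-(hcMul g n hg k (n + k) rfl)).prod (hcMul f m hf k (m + k) rfl)
  have hker : LinearMap.ker M ≤ LinearMap.range L := by
    rintro ⟨x, y⟩ hxy
    have hxy' : f * (x : MvPolynomial (Fin 3) F) + g * (y : MvPolynomial (Fin 3) F) = 0 := by
      have := congrArg Subtype.val (LinearMap.mem_ker.mp hxy)
      exact this
    have hfy : f ∣ (y : MvPolynomial (Fin 3) F) := by
      have : f ∣ g * (y : MvPolynomial (Fin 3) F) :=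
        ⟨-x, by linear_combination hxy'⟩
      exact (hp.dvd_or_dvd this).resolve_left hfg
    obtain ⟨c, hc⟩ := hfy
    have hck : c.IsHomogeneous k := by
      by_cases hy : (y : MvPolynomial (Fin 3) F) = 0
      · have : c = 0 := by
          rw [hy] at hc
          exact (mul_eq_zero.mp hc.symm).resolve_left hp.ne_zero
        rw [this]
        exact isHomogeneous_zero _ _ _
      have hy2 : (f * c).IsHomogeneous (m + k) := hc ▸ y.2
      obtain ⟨d1, d2, e1, e2, e3⟩ := hc_mul_hom f c _ hy2 (hc ▸ hy)
      have := e1.inj_right hf hp.ne_zero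
      have : d2 = k := by omega
      exact this ▸ e2
    refine ⟨⟨c, hck⟩, ?_⟩
    have hx : (x : MvPolynomial (Fin 3) F) = - (g * c) := by
      apply mul_left_cancel₀ hp.ne_zero
      linear_combination hxy' - g * hc
    refine Prod.ext (Subtype.ext ?_) (Subtype.ext ?_)
    · exact hx.symm
    · exact hc.symm
  have hkle : finrank F (LinearMap.ker M) ≤ finrank F (homogeneousSubmodule (Fin 3) F k) :=
    (Submodule.finrank_mono hker).trans (LinearMap.finrank_range_le L)
  rw [finrank_prod] at hr
  have e1 := hc_finrank (F := F) (m + n + k)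
  have e2 := hc_finrank (F := F) (n + k)
  have e3 := hc_finrank (F := F) (m + k)
  have e4 := hc_finrank (F := F) k
  have hV : finrank F (LinearMap.range T) = finrank F V := by
    rw [LinearMap.range_eq_top.mpr hT, finrank_top]
  nlinarith

end bezout

section family

variable {F : Type} [Field F]

lemma hc_sep (x y : Fin 3 → F) (h : x ∉ Submodule.span F {y}) :
    ∃ c : Fin 3 → F, c ⬝ᵥ y = 0 ∧ c ⬝ᵥ x = 1 := by
  obtain ⟨φ, h1, h2⟩ := Submodule.exists_le_ker_of_notMem h
  have hφ : ∀ z : Fin 3 → F, (fun i => φ (Pi.single i 1)) ⬝ᵥ z = φ z := by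
    intro z
    conv_rhs => rw [LinearMap.pi_apply_eq_sum_univ φ z]
    simp only [dotProduct, smul_eq_mul]
    refine Finset.sum_congr rfl fun i _ => ?_
    rw [mul_comm]
    congr 2
    ext j
    simp [Pi.single_apply, eq_comm]
  have hy : φ y = 0 := h2 (Submodule.mem_span_singleton_self y)
  refine ⟨(φ x)⁻¹ • (fun i => φ (Pi.single i 1)), ?_, ?_⟩
  · rw [smul_dotProduct, hφ, hy, smul_zero]
  · rw [smul_dotProduct, hφ, smul_eq_mul, inv_mul_cancel₀ h1]

lemma hc_li_notMem (b a : Fin 3 → F) (h : LinearIndependent F ![b, a]) :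
    b ∉ Submodule.span F {a} ∧ a ∉ Submodule.span F {b} := by
  rw [LinearIndependent.pair_iff] at h
  simp only [Submodule.mem_span_singleton, not_exists]
  constructor
  · intro t ht
    have := h 1 (-t) (by rw [← ht]; simp)
    simp at this
  · intro t ht
    have := h (-t) 1 (by rw [← ht]; simp)
    simp at this

lemma hc_onto (b a : Fin 3 → F) (h : LinearIndependent F ![b, a]) (r : Polynomial F) (k : ℕ)
    (hr : r.natDegree ≤ k) :
    ∃ z : MvPolynomial (Fin 3) F, z.IsHomogeneous k ∧ hcPhi b a z = r := by
  obtain ⟨h1, h2⟩ := hc_li_notMem b a h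
  obtain ⟨c1, c1a, c1b⟩ := hc_sep _ _ h1
  obtain ⟨c2, c2b, c2a⟩ := hc_sep _ _ h2
  refine ⟨∑ j ∈ Finset.range (k + 1), C (r.coeff j) * (hcLin c2 ^ j * hcLin c1 ^ (k - j)), ?_, ?_⟩
  · refine IsHomogeneous.sum _ _ _ fun j hj => IsHomogeneous.C_mul ?_ _
    have := ((hcLin_hom c2).pow j).mul ((hcLin_hom c1).pow (k - j))
    have hj' : j ≤ k := by simpa [Nat.lt_succ_iff] using hj
    convert this using 1
    omega
  · rw [map_sum]
    conv_rhs => rw [r.as_sum_range_C_mul_X_pow' (n := k + 1) (by omega)]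
    refine Finset.sum_congr rfl fun j _ => ?_
    rw [map_mul, map_mul, map_pow, map_pow, hcPhi_lin, hcPhi_lin, c1a, c1b, c2a, c2b]
    simp [hcPhi]

lemma hc_bezout (f g : MvPolynomial (Fin 3) F) (m n : ℕ) (hf : f.IsHomogeneous m)
    (hg : g.IsHomogeneous n) (hp : Prime f) (hfg : ¬ f ∣ g) {ι : Type} [Fintype ι]
    (b a : ι → Fin 3 → F) (hli : ∀ i, LinearIndependent F ![b i, a i])
    (p : ι → Polynomial F) (hp0 : ∀ i, p i ≠ 0)
    (h1 : ∀ i, p i ∣ hcPhi (b i) (a i) f) (h2 : ∀ i, p i ∣ hcPhi (b i) (a i) g)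
    (w : ι → MvPolynomial (Fin 3) F) (D : ι → ℕ) (hw : ∀ i, (w i).IsHomogeneous (D i))
    (hw1 : ∀ i, IsCoprime (p i) (hcPhi (b i) (a i) (w i)))
    (hw2 : ∀ i j, j ≠ i → p j ∣ hcPhi (b j) (a j) (w i)) :
    ∑ i, (p i).natDegree ≤ m * n := by
  classical
  have : ∀ i, FiniteDimensional F (AdjoinRoot (p i)) := fun i =>
    (AdjoinRoot.powerBasis (hp0 i)).finite
  have hfr : ∀ i, finrank F (AdjoinRoot (p i)) = (p i).natDegree := fun i => by
    rw [(AdjoinRoot.powerBasis (hp0 i)).finrank, AdjoinRoot.powerBasis_dim]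
  obtain ⟨k, hk⟩ : ∃ k, k = ∑ i, (D i + (p i).natDegree) := ⟨_, rfl⟩
  let T : homogeneousSubmodule (Fin 3) F (m + n + k) →ₗ[F] (∀ i, AdjoinRoot (p i)) :=
    LinearMap.pi fun i => (AdjoinRoot.mkₐ (p i)).toLinearMap ∘ₗ
      ((hcPhi (b i) (a i)).toLinearMap ∘ₗ (homogeneousSubmodule (Fin 3) F (m + n + k)).subtype)
  have hTa : ∀ u i, T u i = AdjoinRoot.mk (p i) (hcPhi (b i) (a i) u) := fun u i => rfl
  have key := hc_codim f g m n k hf hg hp hfg T ?_ ?_ ?_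
  · rw [finrank_pi_fintype] at key
    simpa only [hfr] using key
  · have single : ∀ i (v : AdjoinRoot (p i)), ∃ u, T u = Pi.single i v := by
      intro i v
      obtain ⟨e, rfl⟩ := AdjoinRoot.mk_surjective v
      obtain ⟨x, y, hxy⟩ := hw1 i
      have hki : D i + (p i).natDegree ≤ k := by
        rw [hk]
        exact Finset.single_le_sum (f := fun i => D i + (p i).natDegree)
          (fun _ _ => Nat.zero_le _) (Finset.mem_univ i)
      obtain ⟨z, hz, hz2⟩ := hc_onto (b i) (a i) (hli i) ((y * e) % p i) (m + n + k - D i) (by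
        have := Polynomial.natDegree_le_natDegree
          (Polynomial.degree_mod_lt (y * e) (hp0 i)).le
        omega)
      have hwz : (w i * z).IsHomogeneous (m + n + k) := by
        convert (hw i).mul hz using 1
        omega
      refine ⟨⟨w i * z, hwz⟩, ?_⟩
      ext1 j
      rw [hTa]
      by_cases hj : j = i
      · subst hj
        rw [Pi.single_eq_same, AdjoinRoot.mk_eq_mk]
        simp only [map_mul, hz2]
        have hdm := EuclideanDomain.div_add_mod (y * e) (p j)
        refine ⟨-(x * e) - hcPhi (b j) (a j) (w j) * ((y * e) / p j), ?_⟩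
        linear_combination (hcPhi (b j) (a j) (w j)) * hdm + e * hxy
      · rw [Pi.single_eq_of_ne hj, AdjoinRoot.mk_eq_zero]
        simp only [map_mul]
        exact Dvd.dvd.mul_right (hw2 i j hj) _
    intro v
    choose u hu using fun i => single i (v i)
    refine ⟨∑ i, u i, ?_⟩
    rw [map_sum]
    simp only [hu]
    exact Finset.univ_sum_single v
  · intro u hu
    ext1 i
    rw [hTa, Pi.zero_apply, AdjoinRoot.mk_eq_zero]
    exact (h1 i).trans (map_dvd _ hu)
  · intro u hu
    ext1 i
    rw [hTa, Pi.zero_apply, AdjoinRoot.mk_eq_zero]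
    exact (h2 i).trans (map_dvd _ hu)

/-- A prime form of degree at least two vanishes identically on no rational line. -/
lemma hc_line_ne_zero (f : MvPolynomial (Fin 3) F) (m : ℕ) (hf : f.IsHomogeneous m)
    (hp : Prime f) (hm : 2 ≤ m) (b a : Fin 3 → F) (hli : LinearIndependent F ![b, a]) :
    hcPhi b a f ≠ 0 := by
  intro h0
  obtain ⟨c, hc⟩ : ∃ c : Fin 3 → F, c ≠ 0 ∧ c ⬝ᵥ b = 0 ∧ c ⬝ᵥ a = 0 := by
    refine ⟨crossProduct b a, ?_, ?_, ?_⟩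
    · exact crossProduct_ne_zero_iff_linearIndependent.mpr hli
    · rw [dotProduct_comm]; exact dot_self_cross b a
    · rw [dotProduct_comm]; exact dot_cross_self b a
  have hl0 : hcLin c ≠ 0 := by
    intro h
    apply hc.1
    ext i
    have := congrArg (eval (Pi.single i 1)) h
    rw [hcLin_eval] at this
    simpa using this
  have hnd : ¬ f ∣ hcLin c := by
    rintro ⟨e, he⟩
    obtain ⟨d1, d2, e1, e2, e3⟩ := hc_mul_hom f e 1 (he ▸ hcLin_hom c) (he ▸ hl0)
    have := e1.inj_right hf hp.ne_zero
    omega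
  have := hc_bezout f (hcLin c) m 1 hf (hcLin_hom c) hp hnd (ι := Unit) (fun _ => b) (fun _ => a)
    (fun _ => hli) (fun _ => Polynomial.X ^ (m + 1)) (fun _ => pow_ne_zero _ Polynomial.X_ne_zero)
    (fun _ => by simp [h0]) (fun _ => by simp [hcPhi_lin, hc.2.1, hc.2.2]) (fun _ => 1)
    (fun _ => 0) (fun _ => isHomogeneous_one _ _) (fun _ => by simp [isCoprime_one_right])
    (fun i j hij => by simp at hij)
  simp at this

end family

section sv

variable {F : Type} [Field F]

lemma hc_eval_smul (f : MvPolynomial (Fin 3) F) (d : ℕ) (hf : f.IsHomogeneous d) (k : F)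
    (v : Fin 3 → F) : eval (k • v) f = k ^ d * eval v f := by
  rw [eval_eq', eval_eq', Finset.mul_sum]
  refine Finset.sum_congr rfl fun m hm => ?_
  have hd : ∑ i, m i = d := by
    have := hf.degree_eq_sum_deg_support hm
    rw [this]
    exact (Finset.sum_subset (Finset.subset_univ _) (by simp)).symm
  simp only [Pi.smul_apply, smul_eq_mul, mul_pow, Finset.prod_mul_distrib,
    Finset.prod_pow_eq_pow_sum, hd]
  ring

lemma hc_mem_mk (f : MvPolynomial (Fin 3) F) (d : ℕ) (hf : f.IsHomogeneous d)
    (v : Fin 3 → F) (hv : v ≠ 0) :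
    Projectivization.mk F v hv ∈ hypersurfacePts f ↔ eval v f = 0 := by
  obtain ⟨k, hk⟩ := Projectivization.exists_smul_eq_mk_rep F v hv
  rw [hypersurfacePts, Set.mem_ofPred_eq, ← hk, Units.smul_def, hc_eval_smul f d hf]
  simp

lemma hc_rep_notMem (P R : Projectivization F (Fin 3 → F)) (h : P ≠ R) :
    P.rep ∉ Submodule.span F {R.rep} := by
  intro hm
  obtain ⟨k, hk⟩ := Submodule.mem_span_singleton.mp hm
  apply h
  rw [← P.mk_rep, ← R.mk_rep, Projectivization.mk_eq_mk_iff']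
  exact ⟨k, hk⟩

lemma hc_tangent (x c : Fin 3 → F) (hx : x ≠ 0) :
    ∃ τ : Fin 3 → F, c ⬝ᵥ τ = 0 ∧ LinearIndependent F ![x, τ] := by
  by_contra hcon
  push Not at hcon
  let φ : (Fin 3 → F) →ₗ[F] F := dotProductBilin F F c
  have hker : LinearMap.ker φ ≤ Submodule.span F {x} := by
    intro τ hτ
    by_contra hn
    refine hcon τ hτ ?_
    rw [LinearIndependent.pair_iff' hx]
    intro k hk
    exact hn (Submodule.mem_span_singleton.mpr ⟨k, hk⟩)
  have h1 := Submodule.finrank_mono hker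
  have h2 := finrank_span_singleton (K := F) hx
  have h3 := φ.finrank_range_add_finrank_ker
  have h4 := Submodule.finrank_le (LinearMap.range φ)
  simp at h3 h4
  omega

lemma hc_sv [Fintype F] (f : MvPolynomial (Fin 3) F) (d : ℕ) (hf : f.IsHomogeneous d)
    (hp : Prime f) (hnd : ¬ f ∣ hcG (Fintype.card F) f) :
    2 * (hypersurfacePts f).ncard ≤ d * (Fintype.card F + (d - 1)) := by
  classical
  have := Fintype.ofFinite (hypersurfacePts f)
  choose τ hτ1 hτ2 using fun P : hypersurfacePts f =>
    hc_tangent P.1.rep (fun i => eval P.1.rep (pderiv i f)) P.1.rep_nonzero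
  have hc : ∀ P R : hypersurfacePts f, ∃ c : Fin 3 → F, P ≠ R →
      c ⬝ᵥ R.1.rep = 0 ∧ c ⬝ᵥ P.1.rep = 1 := by
    intro P R
    by_cases h : P = R
    · exact ⟨0, fun h' => absurd h h'⟩
    · obtain ⟨c, hc⟩ := hc_sep _ _ (hc_rep_notMem P.1 R.1 (fun h' => h (Subtype.ext h')))
      exact ⟨c, fun _ => hc⟩
  choose c hc using hc
  have hX2 : ∀ P : hypersurfacePts f, Polynomial.X ^ 2 ∣ hcPhi P.1.rep (τ P) f := by
    intro P
    have hP : eval P.1.rep f = 0 := P.2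
    rw [Polynomial.X_pow_dvd_iff]
    intro k hk
    interval_cases k
    · rw [Polynomial.coeff_zero_eq_eval_zero, hcPhi_eval]
      simpa using hP
    · have : (hcPhi P.1.rep (τ P) f).coeff 1 =
          (Polynomial.derivative (hcPhi P.1.rep (τ P) f)).coeff 0 := by
        simp [Polynomial.coeff_derivative]
      rw [this, Polynomial.coeff_zero_eq_eval_zero, hcPhi_deriv, Polynomial.eval_finsetSum]
      refine Eq.trans ?_ (hτ1 P)
      rw [dotProduct]
      refine Finset.sum_congr rfl fun i _ => ?_
      rw [Polynomial.eval_mul, hcPhi_eval, Polynomial.eval_C]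
      simp [mul_comm]
  have key := hc_bezout f (hcG (Fintype.card F) f) d _ hf (hcG_hom _ f d hf) hp hnd
    (ι := hypersurfacePts f) (fun P => P.1.rep) τ hτ2 (fun _ => Polynomial.X ^ 2)
    (fun _ => pow_ne_zero _ Polynomial.X_ne_zero) hX2 ?_
    (fun P => ∏ R ∈ Finset.univ.erase P, hcLin (c P R) ^ 2)
    (fun P => ∑ R ∈ Finset.univ.erase P, 1 * 2)
    (fun P => IsHomogeneous.prod _ _ _ fun R _ => (hcLin_hom _).pow 2) ?_ ?_
  · simp only [Polynomial.natDegree_X_pow, Finset.sum_const, Finset.card_univ, smul_eq_mul] at key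
    rw [← Nat.card_coe_set_eq, Nat.card_eq_fintype_card, mul_comm]
    exact key
  · intro P
    rw [hcPhi_G _ _ f d hf]
    refine dvd_add (Dvd.dvd.mul_left (hX2 P) _) ?_
    rw [pow_two]
    refine mul_dvd_mul ?_ ?_
    · exact dvd_sub (dvd_pow_self _ Fintype.card_ne_zero) dvd_rfl
    · obtain ⟨u, hu⟩ := hX2 P
      rw [hu]
      refine ⟨2 * u + Polynomial.X * Polynomial.derivative u, ?_⟩
      simp
      ring
  · intro P
    refine IsCoprime.pow_left ?_
    rw [Polynomial.irreducible_X.coprime_iff_not_dvd, Polynomial.X_dvd_iff,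
      Polynomial.coeff_zero_eq_eval_zero, hcPhi_eval]
    rw [zero_smul, add_zero, map_prod]
    rw [Finset.prod_eq_one]
    · exact one_ne_zero
    intro R hR
    rw [map_pow, hcLin_eval, (hc P R (Finset.ne_of_mem_erase hR).symm).2, one_pow]
  · intro P R hPR
    rw [map_prod]
    refine dvd_trans ?_ (Finset.dvd_prod_of_mem _ (Finset.mem_erase.mpr ⟨hPR, Finset.mem_univ R⟩))
    rw [map_pow, hcPhi_lin, (hc P R hPR.symm).1]
    refine pow_dvd_pow_of_dvd ?_ 2
    simp

lemma hc_pderiv_ne_zero [Fintype F] (f : MvPolynomial (Fin 3) F) (hf : Irreducible f) :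
    ∃ i, pderiv i f ≠ 0 := by
  by_contra hcon
  push Not at hcon
  obtain ⟨p, hchar⟩ := CharP.exists F
  have hpp : Fact p.Prime := ⟨CharP.char_is_prime F p⟩
  have hdiv : ∀ m ∈ f.support, ∀ i, p ∣ m i := by
    intro m hm i
    by_cases hmi : m i = 0
    · simp [hmi]
    have h1 := coeff_pderiv (i := i) f (m - Finsupp.single i 1)
    have h2 : m - Finsupp.single i 1 + Finsupp.single i 1 = m := by
      ext j
      by_cases hj : j = i
      · subst hj
        simp
        omega
      · simp [Finsupp.single_apply, Ne.symm hj]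
    rw [hcon i, h2, coeff_zero] at h1
    have h3 := (mul_eq_zero.mp h1.symm).resolve_left (mem_support_iff.mp hm)
    have h4 : ((m i : ℕ) : F) = 0 := by
      rw [← h3]
      have : m i = (m - Finsupp.single i 1 : Fin 3 →₀ ℕ) i + 1 := by
        simp
        omega
      rw [← Nat.cast_succ, ← Nat.succ_eq_add_one] at *
      rw [← this]
    exact (CharP.cast_eq_zero_iff F p _).mp h4
  have hroot : ∀ x : F, ∃ y : F, y ^ p = x := by
    intro x
    have := Finite.injective_iff_surjective.mp (frobenius_inj F p) x
    simpa [frobenius_def] using this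
  choose r hr using hroot
  have hfp : f = (∑ m ∈ f.support, monomial (m.mapRange (· / p) (by simp)) (r (coeff m f))) ^ p := by
    rw [sum_pow_char]
    conv_lhs => rw [f.as_sum]
    refine Finset.sum_congr rfl fun m hm => ?_
    rw [monomial_pow, hr]
    congr 2
    refine Finsupp.ext fun i => ?_
    simp [Nat.mul_div_cancel' (hdiv m hm i)]
  rw [hfp] at hf
  exact not_irreducible_pow hpp.out.one_lt.ne' hf

end sv

section pencil

variable {F : Type} [Field F]

lemma hc_pencil (a : Fin 3 → F) (ha : a ≠ 0) : ∃ b l : Option F → Fin 3 → F,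
    (∀ i, LinearIndependent F ![b i, a]) ∧ (∀ i, l i ⬝ᵥ b i = 0) ∧ (∀ i, l i ⬝ᵥ a = 0) ∧
    (∀ i j, i ≠ j → l i ⬝ᵥ b j ≠ 0) ∧
    (∀ x : Fin 3 → F, x ∉ Submodule.span F {a} →
      ∃ (i : Option F) (t k : F), k ≠ 0 ∧ x = k • (b i + t • a)) := by
  obtain ⟨v, -, hv⟩ := hc_tangent a 0 ha
  have hcr : crossProduct a v ≠ 0 := crossProduct_ne_zero_iff_linearIndependent.mpr hv
  -- coordinates
  obtain ⟨hva, hav⟩ := hc_li_notMem a v hv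
  obtain ⟨w, hw⟩ : ∃ w : Fin 3 → F, crossProduct a v ⬝ᵥ w = 1 := by
    obtain ⟨i, hi⟩ := Function.ne_iff.mp hcr
    refine ⟨Pi.single i (crossProduct a v i)⁻¹, ?_⟩
    simp at hi
    simp [hi]
  -- dual vectors
  let γ := crossProduct a v
  let β := crossProduct w a
  let α := crossProduct v w
  have hγa : γ ⬝ᵥ a = 0 := by rw [dotProduct_comm]; exact dot_self_cross a v
  have hγv : γ ⬝ᵥ v = 0 := by rw [dotProduct_comm]; exact dot_cross_self a v
  have hγw : γ ⬝ᵥ w = 1 := hw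
  have hβa : β ⬝ᵥ a = 0 := by rw [dotProduct_comm]; exact dot_cross_self w a
  have hβw : β ⬝ᵥ w = 0 := by rw [dotProduct_comm]; exact dot_self_cross w a
  have hw' := hw
  simp only [cross_apply, dotProduct, Fin.sum_univ_three, Matrix.cons_val_zero,
    Matrix.cons_val_one, Matrix.cons_val] at hw'
  have hβv : β ⬝ᵥ v = 1 := by
    simp only [β, cross_apply, dotProduct, Fin.sum_univ_three, Matrix.cons_val_zero,
      Matrix.cons_val_one, Matrix.cons_val]
    linear_combination hw'
  have hexp : ∀ x : Fin 3 → F, x = (α ⬝ᵥ x) • a + (β ⬝ᵥ x) • v + (γ ⬝ᵥ x) • w := by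
    intro x
    ext i
    simp only [α, β, γ, cross_apply, dotProduct, Fin.sum_univ_three, Matrix.cons_val_zero,
      Matrix.cons_val_one, Matrix.cons_val, Pi.add_apply, Pi.smul_apply, smul_eq_mul]
    fin_cases i
    · simp only [Fin.zero_eta]
      linear_combination (- x 0) * hw'
    · simp only [Fin.mk_one]
      linear_combination (- x 1) * hw'
    · simp only [Fin.reduceFinMk]
      linear_combination (- x 2) * hw'
  let b : Option F → Fin 3 → F := fun o => o.elim w (fun c => v + c • w)
  let l : Option F → Fin 3 → F := fun o => o.elim β (fun c => c • β - γ)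
  refine ⟨b, l, ?_, ?_, ?_, ?_, ?_⟩
  · intro i
    rw [LinearIndependent.pair_iff]
    intro s t hst
    have h1 := congrArg (fun x => β ⬝ᵥ x) hst
    have h2 := congrArg (fun x => γ ⬝ᵥ x) hst
    have hs : s = 0 := by
      cases i with
      | none => simpa [b, dotProduct_add, dotProduct_smul, hγw, hγa] using h2
      | some c => simpa [b, dotProduct_add, dotProduct_smul, hβv, hβw, hβa] using h1
    refine ⟨hs, ?_⟩
    rw [hs, zero_smul, zero_add] at hst
    exact (smul_eq_zero.mp hst).resolve_right ha
  · intro i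
    cases i with
    | none => exact hβw
    | some c => simp [b, l, dotProduct_add, dotProduct_smul, sub_dotProduct, smul_dotProduct,
        hβv, hβw, hγv, hγw]
  · intro i
    cases i with
    | none => exact hβa
    | some c => simp [l, sub_dotProduct, smul_dotProduct, hβa, hγa]
  · intro i j hij
    cases i with
    | none =>
      cases j with
      | none => exact absurd rfl hij
      | some c => simp [b, l, dotProduct_add, dotProduct_smul, hβv, hβw]
    | some c =>
      cases j with
      | none => simp [b, l, sub_dotProduct, smul_dotProduct, hβw, hγw]
      | some e =>
        have : c ≠ e := fun h => hij (by rw [h])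
        simpa [b, l, dotProduct_add, dotProduct_smul, sub_dotProduct, smul_dotProduct,
          hβv, hβw, hγv, hγw] using
          (show c + -e ≠ 0 by rw [← sub_eq_add_neg]; exact sub_ne_zero.mpr this)
  · intro x hx
    by_cases h1 : β ⬝ᵥ x = 0
    · by_cases h2 : γ ⬝ᵥ x = 0
      · exfalso
        apply hx
        have := hexp x
        rw [h1, h2, zero_smul, zero_smul, add_zero, add_zero] at this
        exact Submodule.mem_span_singleton.mpr ⟨_, this.symm⟩
      · refine ⟨none, (γ ⬝ᵥ x)⁻¹ * (α ⬝ᵥ x), γ ⬝ᵥ x, h2, ?_⟩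
        conv_lhs => rw [hexp x]
        rw [h1, smul_add, smul_smul, mul_inv_cancel_left₀ h2, zero_smul, add_zero, add_comm]
        rfl
    · refine ⟨some ((β ⬝ᵥ x)⁻¹ * (γ ⬝ᵥ x)), (β ⬝ᵥ x)⁻¹ * (α ⬝ᵥ x), β ⬝ᵥ x, h1, ?_⟩
      conv_lhs => rw [hexp x]
      change _ = (β ⬝ᵥ x) • ((v + ((β ⬝ᵥ x)⁻¹ * (γ ⬝ᵥ x)) • w) + ((β ⬝ᵥ x)⁻¹ * (α ⬝ᵥ x)) • a)
      rw [smul_add, smul_add, smul_smul, smul_smul, mul_inv_cancel_left₀ h1,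
        mul_inv_cancel_left₀ h1]
      abel

lemma hc_univ [Fintype F] [DecidableEq F] (h : Polynomial F) (h0 : h ≠ 0)
    (hd : h ∣ (Polynomial.X ^ (Fintype.card F) - Polynomial.X) * Polynomial.derivative h) :
    ∃ g : Polynomial F, g ≠ 0 ∧ g ∣ h ∧ g ∣ Polynomial.derivative h ∧
      h.natDegree ≤ g.natDegree + h.roots.toFinset.card := by
  refine ⟨EuclideanDomain.gcd h (Polynomial.derivative h), ?_,
    EuclideanDomain.gcd_dvd_left _ _, EuclideanDomain.gcd_dvd_right _ _, ?_⟩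
  · intro hg
    exact h0 (EuclideanDomain.gcd_eq_zero_iff.mp hg).1
  have hab := EuclideanDomain.gcd_eq_gcd_ab h (Polynomial.derivative h)
  obtain ⟨h1, e1⟩ := EuclideanDomain.gcd_dvd_left h (Polynomial.derivative h)
  obtain ⟨h2, e2⟩ := EuclideanDomain.gcd_dvd_right h (Polynomial.derivative h)
  have hg0 : EuclideanDomain.gcd h (Polynomial.derivative h) ≠ 0 := by
    intro hg
    exact h0 (EuclideanDomain.gcd_eq_zero_iff.mp hg).1
  generalize EuclideanDomain.gcd h (Polynomial.derivative h) = g at *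
  generalize EuclideanDomain.gcdA h (Polynomial.derivative h) = x at *
  generalize EuclideanDomain.gcdB h (Polynomial.derivative h) = y at *
  have hcop : IsCoprime h1 h2 := by
    refine ⟨x, y, ?_⟩
    apply mul_left_cancel₀ hg0
    linear_combination (-x) * e1 - y * e2 - hab
  have h10 : h1 ≠ 0 := by
    rintro rfl
    exact h0 (by rw [e1, mul_zero])
  have hdv : h1 ∣ Polynomial.X ^ (Fintype.card F) - Polynomial.X := by
    rw [e2] at hd
    have hd' : g * h1 ∣ g * ((Polynomial.X ^ (Fintype.card F) - Polynomial.X) * h2) := by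
      rw [← e1]
      convert hd using 1
      ring
    exact hcop.dvd_of_dvd_mul_right ((mul_dvd_mul_iff_left hg0).mp hd')
  have hX0 : (Polynomial.X ^ (Fintype.card F) - Polynomial.X : Polynomial F) ≠ 0 :=
    FiniteField.X_pow_card_sub_X_ne_zero F Fintype.one_lt_card
  have hroots := FiniteField.roots_X_pow_card_sub_X F
  have hsp : (Polynomial.X ^ (Fintype.card F) - Polynomial.X : Polynomial F).Splits := by
    rw [Polynomial.splits_iff_card_roots, hroots,
      FiniteField.X_pow_card_sub_X_natDegree_eq F Fintype.one_lt_card]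
    rfl
  have hs1 : h1.Splits := hsp.of_dvd hX0 hdv
  have hc1 : h1.roots.card = h1.natDegree := Polynomial.splits_iff_card_roots.mp hs1
  have hnd : h1.roots.Nodup := by
    refine Multiset.nodup_of_le (Polynomial.roots.le_of_dvd hX0 hdv) ?_
    rw [hroots]
    exact Finset.univ.nodup
  have hle : h1.natDegree ≤ h.roots.toFinset.card := by
    rw [← hc1, ← Multiset.toFinset_card_of_nodup hnd]
    apply Finset.card_le_card
    apply Multiset.toFinset_subset.mpr
    exact Multiset.subset_of_le (Polynomial.roots.le_of_dvd h0 ⟨g, by rw [e1]; ring⟩)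
  have : h.natDegree = g.natDegree + h1.natDegree := by
    rw [e1, Polynomial.natDegree_mul hg0 h10]
  omega

lemma hc_ne_zero_of_li (b a : Fin 3 → F) (h : LinearIndependent F ![b, a]) (t : F) :
    b + t • a ≠ 0 := by
  intro h0
  rw [LinearIndependent.pair_iff] at h
  have := h 1 t (by simpa using h0)
  simp at this

lemma hc_nonclassical [Fintype F] (f : MvPolynomial (Fin 3) F) (d : ℕ) (hd1 : 1 ≤ d)
    (hf : f.IsHomogeneous d)
    (hp : Prime f) (hdQ : d + 1 ≤ Fintype.card F) (hnd : f ∣ hcG (Fintype.card F) f) :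
    d * (Fintype.card F + 1) ≤ (hypersurfacePts f).ncard + d * (d - 1) := by
  classical
  obtain ⟨i0, hi0⟩ := hc_pderiv_ne_zero f hp.irreducible
  obtain ⟨m, hm⟩ := MvPolynomial.ne_zero_iff.mp hi0
  let c : Fin 3 → F := fun i => coeff m (pderiv i f)
  have hl0 : hcLin c ≠ 0 := by
    intro h
    apply hm
    have := congrArg (eval (Pi.single i0 1)) h
    rw [hcLin_eval] at this
    simpa [c] using this
  obtain ⟨a, hae⟩ : ∃ a, eval a (f * hcLin c) ≠ 0 := by
    by_contra hcon
    push Not at hcon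
    refine mul_ne_zero hp.ne_zero hl0 ((hf.mul (hcLin_hom c)).eq_zero_of_forall_eval_eq_zero_of_le_card
      hcon ?_)
    rw [Cardinal.mk_fintype]
    exact_mod_cast hdQ
  rw [map_mul, hcLin_eval] at hae
  have hfa : eval a f ≠ 0 := left_ne_zero_of_mul hae
  have hca : c ⬝ᵥ a ≠ 0 := right_ne_zero_of_mul hae
  have ha : a ≠ 0 := by
    rintro rfl
    simp at hca
  let g : MvPolynomial (Fin 3) F := ∑ i, C (a i) * pderiv i f
  have hg : g.IsHomogeneous (d - 1) := IsHomogeneous.sum _ _ _ fun i _ => hf.pderiv.C_mul _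
  have hg0 : g ≠ 0 := by
    intro h
    apply hca
    have := congrArg (coeff m) h
    simp only [g, coeff_sum, coeff_C_mul, coeff_zero] at this
    rw [← this, dotProduct]
    exact Finset.sum_congr rfl fun i _ => mul_comm _ _
  have hfg : ¬ f ∣ g := by
    rintro ⟨e, he⟩
    obtain ⟨d1, d2, e1, e2, e3⟩ := hc_mul_hom f e _ (he ▸ hg) (he ▸ hg0)
    have := e1.inj_right hf hp.ne_zero
    omega
  obtain ⟨b, l, hli, hlb, hla, hlne, -⟩ := hc_pencil a ha
  have hdeg : ∀ i, (hcPhi (b i) a f).natDegree = d := by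
    intro i
    obtain ⟨h1, h2⟩ := hcPhi_degree (b i) a f d hf
    refine le_antisymm h1 (Polynomial.le_natDegree_of_ne_zero ?_)
    rw [h2]
    exact hfa
  have hne : ∀ i, hcPhi (b i) a f ≠ 0 := by
    intro i h
    have := hdeg i
    rw [h, Polynomial.natDegree_zero] at this
    omega
  have hex := fun i => hc_univ (hcPhi (b i) a f) (hne i) (by
    have h1 := map_dvd (hcPhi (b i) a) hnd
    rw [hcPhi_G _ _ f d hf] at h1
    exact (dvd_add_right (Dvd.intro_left _ rfl)).mp h1)
  choose p hp0 hp1 hp2 hp3 using hex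
  have hbz := hc_bezout f g d (d - 1) hf hg hp hfg b (fun _ => a) hli p hp0 hp1 (by
      intro i
      have := hp2 i
      rw [hcPhi_deriv] at this
      convert this using 1
      simp [g, hcPhi])
    (fun i => ∏ j ∈ Finset.univ.erase i, hcLin (l j)) (fun i => ∑ j ∈ Finset.univ.erase i, 1)
    (fun i => IsHomogeneous.prod _ _ _ fun j _ => hcLin_hom _) (by
      intro i
      rw [map_prod]
      apply IsCoprime.prod_right
      intro j hj
      rw [hcPhi_lin, hla, Polynomial.C_0, zero_mul, add_zero]
      exact ⟨0, Polynomial.C (l j ⬝ᵥ b i)⁻¹, by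
        rw [zero_mul, zero_add, ← Polynomial.C_mul,
          inv_mul_cancel₀ (hlne j i (Finset.ne_of_mem_erase hj)), Polynomial.C_1]⟩) (by
      intro i j hij
      rw [map_prod]
      refine dvd_trans ?_
        (Finset.dvd_prod_of_mem _ (Finset.mem_erase.mpr ⟨hij, Finset.mem_univ j⟩))
      rw [hcPhi_lin, hla, hlb]
      simp)
  have hsum : ∑ i, d ≤ ∑ i, ((p i).natDegree + (hcPhi (b i) a f).roots.toFinset.card) :=
    Finset.sum_le_sum fun i _ => by
      have := hp3 i
      rwa [hdeg] at this
  rw [Finset.sum_add_distrib, Finset.sum_const, Finset.card_univ, Fintype.card_option,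
    smul_eq_mul, ← Finset.card_sigma] at hsum
  have hinj : (Finset.univ.sigma fun i => (hcPhi (b i) a f).roots.toFinset).card ≤
      (hypersurfacePts f).ncard := by
    rw [← Set.ncard_coe_finset]
    refine Set.ncard_le_ncard_of_injOn
      (fun s => Projectivization.mk F (b s.1 + s.2 • a) (hc_ne_zero_of_li _ _ (hli s.1) s.2))
      ?_ ?_ (Set.toFinite _)
    · rintro ⟨i, t⟩ hs
      simp only [Finset.mem_coe, Finset.mem_sigma, Multiset.mem_toFinset,
        Polynomial.mem_roots (hne i)] at hs
      rw [hc_mem_mk f d hf, ← hcPhi_eval]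
      exact hs.2
    · rintro ⟨i, t⟩ _ ⟨j, u⟩ _ hij
      simp only [Projectivization.mk_eq_mk_iff'] at hij
      obtain ⟨k, hk⟩ := hij
      have h1 := congrArg (fun x => l j ⬝ᵥ x) hk
      simp only [dotProduct_add, dotProduct_smul, hlb, hla, smul_zero, add_zero] at h1
      have hji : j = i := by
        by_contra hne'
        exact hlne j i hne' h1.symm
      subst hji
      have h2 := (LinearIndependent.pair_iff.mp (hli j)) (k - 1) (k * u - t) (by
        have : (k - 1) • b j + (k * u - t) • a = k • (b j + u • a) - (b j + t • a) := by
          module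
        rw [this, hk, sub_self])
      have hk1 : k = 1 := sub_eq_zero.mp h2.1
      have hut : u = t := by
        have := h2.2
        rw [hk1, one_mul] at this
        exact sub_eq_zero.mp this
      rw [hut]
  have : d * (Fintype.card F + 1) = (Fintype.card F + 1) * d := mul_comm _ _
  omega

lemma hc_upper [Fintype F] (f : MvPolynomial (Fin 3) F) (d : ℕ) (hd2 : 2 ≤ d)
    (hf : f.IsHomogeneous d) (hp : Prime f) :
    (hypersurfacePts f).ncard ≤ (d - 1) * (Fintype.card F + 1) + 1 := by
  classical
  rcases (hypersurfacePts f).eq_empty_or_nonempty with he | ⟨P, hP⟩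
  · simp [he]
  have hPa : eval P.rep f = 0 := hP
  obtain ⟨b, l, hli, hlb, hla, hlne, hsurj⟩ := hc_pencil P.rep P.rep_nonzero
  have hne : ∀ i, hcPhi (b i) P.rep f ≠ 0 := fun i => hc_line_ne_zero f d hf hp hd2 _ _ (hli i)
  have hroots : ∀ i, (hcPhi (b i) P.rep f).roots.toFinset.card ≤ d - 1 := by
    intro i
    obtain ⟨h1, h2⟩ := hcPhi_degree (b i) P.rep f d hf
    rw [hPa] at h2
    have h3 : (hcPhi (b i) P.rep f).natDegree ≠ d := by
      intro h
      rw [← h] at h2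
      exact hne i (Polynomial.leadingCoeff_eq_zero.mp h2)
    have h4 := Multiset.toFinset_card_le (hcPhi (b i) P.rep f).roots
    have h5 := Polynomial.card_roots' (hcPhi (b i) P.rep f)
    omega
  let S := Finset.univ.sigma fun i => (hcPhi (b i) P.rep f).roots.toFinset
  let I := S.image
    (fun s => Projectivization.mk F (b s.1 + s.2 • P.rep) (hc_ne_zero_of_li _ _ (hli s.1) s.2))
  have hsub : hypersurfacePts f ⊆ ((insert P I : Finset _) : Set _) := by
    intro R hR
    rw [Finset.coe_insert]
    by_cases hRP : R = P
    · exact Or.inl hRP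
    right
    obtain ⟨i, t, k, hk, hx⟩ := hsurj R.rep (hc_rep_notMem R P hRP)
    have hRm : R = Projectivization.mk F (b i + t • P.rep) (hc_ne_zero_of_li _ _ (hli i) t) := by
      rw [← R.mk_rep, Projectivization.mk_eq_mk_iff']
      exact ⟨k, hx.symm⟩
    refine Finset.mem_coe.mpr (Finset.mem_image.mpr ⟨⟨i, t⟩, ?_, hRm.symm⟩)
    simp only [S, Finset.mem_sigma, Finset.mem_univ, true_and, Multiset.mem_toFinset,
      Polynomial.mem_roots (hne i), Polynomial.IsRoot]
    rw [hcPhi_eval, ← hc_mem_mk f d hf _ (hc_ne_zero_of_li _ _ (hli i) t), ← hRm]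
    exact hR
  have h1 := Set.ncard_le_ncard hsub (Finset.finite_toSet _)
  rw [Set.ncard_coe_finset] at h1
  have h2 := Finset.card_insert_le P I
  have h3 : I.card ≤ S.card := Finset.card_image_le
  have h4 : S.card ≤ ∑ _i : Option F, (d - 1) := by
    rw [Finset.card_sigma]
    exact Finset.sum_le_sum fun i _ => hroots i
  rw [Finset.sum_const, Finset.card_univ, Fintype.card_option, smul_eq_mul, mul_comm] at h4
  omega

end pencil

section final

variable {F : Type} [Field F]

lemma hc_pts_mul [Finite F] (g h : MvPolynomial (Fin 3) F) :
    (hypersurfacePts (g * h)).ncard ≤ (hypersurfacePts g).ncard + (hypersurfacePts h).ncard := by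
  refine le_trans (Set.ncard_le_ncard ?_ (Set.toFinite _)) (Set.ncard_union_le _ _)
  intro P hP
  have hP' : eval P.rep (g * h) = 0 := hP
  rw [map_mul] at hP'
  exact mul_eq_zero.mp hP'

lemma hc_deg_pos (g : MvPolynomial (Fin 3) F) (d : ℕ) (hg : g.IsHomogeneous d) (h0 : g ≠ 0)
    (hu : ¬ IsUnit g) : 1 ≤ d := by
  by_contra hd
  have hd0 : d = 0 := by omega
  subst hd0
  rw [← totalDegree_zero_iff_isHomogeneous, totalDegree_eq_zero_iff_eq_C] at hg
  apply hu
  rw [hg]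
  apply IsUnit.map
  apply Ne.isUnit
  intro h
  rw [h, C_0] at hg
  exact h0 hg

lemma hc_factor (f : MvPolynomial (Fin 3) F) (d : ℕ) (h0 : f ≠ 0) (hf : f.IsHomogeneous d)
    (hd1 : 1 ≤ d) (hirr : ¬ Irreducible f) :
    ∃ g h d1 d2, f = g * h ∧ g ≠ 0 ∧ h ≠ 0 ∧ g.IsHomogeneous d1 ∧ h.IsHomogeneous d2 ∧
      1 ≤ d1 ∧ 1 ≤ d2 ∧ d1 + d2 = d := by
  have hu : ¬ IsUnit f := by
    intro hu
    obtain ⟨g, hg⟩ := hu.exists_right_inv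
    obtain ⟨d1, d2, e1, e2, e3⟩ := hc_mul_hom f g 0 (by rw [hg]; exact isHomogeneous_one _ _)
      (by rw [hg]; exact one_ne_zero)
    have := e1.inj_right hf h0
    omega
  have hex : ∃ g h, f = g * h ∧ ¬ IsUnit g ∧ ¬ IsUnit h := by
    by_contra hcon
    push Not at hcon
    refine hirr ⟨hu, fun g h hgh => ?_⟩
    by_cases hg : IsUnit g
    · exact Or.inl hg
    · exact Or.inr (hcon g h hgh hg)
  obtain ⟨g, h, rfl, hg, hh⟩ := hex
  obtain ⟨d1, d2, e1, e2, e3⟩ := hc_mul_hom g h d hf h0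
  have hg0 := left_ne_zero_of_mul h0
  have hh0 := right_ne_zero_of_mul h0
  exact ⟨g, h, d1, d2, rfl, hg0, hh0, e1, e2, hc_deg_pos g d1 e1 hg0 hg,
    hc_deg_pos h d2 e2 hh0 hh, e3⟩

lemma hc_small [Fintype F] (q : ℕ) (hq3 : 3 < q) (hcard : Fintype.card F = q ^ 2) (d : ℕ) :
    ∀ f : MvPolynomial (Fin 3) F, f ≠ 0 → f.IsHomogeneous d → 1 ≤ d → d ≤ q →
    (∀ l : MvPolynomial (Fin 3) F, l ≠ 0 → l.IsHomogeneous 1 → ¬ l ∣ f) →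
    (hypersurfacePts f).ncard ≤ (d - 1) * q ^ 2 + 1 := by
  induction d using Nat.strong_induction_on with
  | _ d ih =>
  intro f h0 hf hd1 hdq hlin
  have hd2 : 2 ≤ d := by
    by_contra hlt
    have : d = 1 := by omega
    subst this
    exact hlin f h0 hf dvd_rfl
  by_cases hirr : Irreducible f
  · have hp := hirr.prime
    obtain ⟨e, rfl⟩ : ∃ e, d = e + 2 := ⟨d - 2, by omega⟩
    by_cases hnd : f ∣ hcG (Fintype.card F) f
    · exfalso
      have h1 := hc_nonclassical f _ hd1 hf hp (by rw [hcard]; nlinarith) hnd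
      have h2 := hc_upper f _ hd2 hf hp
      rw [hcard] at h1 h2
      have e1 : e + 2 - 1 = e + 1 := rfl
      rw [e1] at h1 h2
      nlinarith
    · have h1 := hc_sv f _ hf hp hnd
      rw [hcard] at h1
      have e1 : e + 2 - 1 = e + 1 := rfl
      rw [e1] at h1 ⊢
      nlinarith [mul_le_mul_of_nonneg_left (show e + 3 ≤ q ^ 2 by nlinarith) (Nat.zero_le e)]
  · obtain ⟨g, h, d1, d2, rfl, hg0, hh0, hg, hh, h1, h2, h3⟩ := hc_factor f d h0 hf hd1 hirr
    have b1 := ih d1 (by omega) g hg0 hg h1 (by omega)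
      (fun l l0 l1 hl => hlin l l0 l1 (hl.mul_right h))
    have b2 := ih d2 (by omega) h hh0 hh h2 (by omega)
      (fun l l0 l1 hl => hlin l l0 l1 (hl.mul_left g))
    have b3 := hc_pts_mul g h
    obtain ⟨x, rfl⟩ : ∃ x, d1 = x + 1 := ⟨d1 - 1, by omega⟩
    obtain ⟨y, rfl⟩ : ∃ y, d2 = y + 1 := ⟨d2 - 1, by omega⟩
    obtain rfl : d = x + y + 2 := by omega
    have e1 : x + 1 - 1 = x := rfl
    have e2 : y + 1 - 1 = y := rfl
    have e3 : x + y + 2 - 1 = x + y + 1 := rfl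
    rw [e1] at b1
    rw [e2] at b2
    rw [e3]
    nlinarith

end final


/-- If `q > 3` is a prime power and `C` is a plane curve of degree `q+1` over `GF(q²)`
with no `GF(q²)`-linear components, whose number `N` of rational points satisfies
`N < q³ + 1`, then `N ≤ q³ - q² + 2`. -/
theorem stmt_3 (q : ℕ) (hq : ∃ p k : ℕ, p.Prime ∧ 0 < k ∧ q = p ^ k) (hq3 : 3 < q)
    (F : Type) [Field F] [Fintype F] (hcardF : Fintype.card F = q ^ 2)
    (f : MvPolynomial (Fin 3) F) (hf0 : f ≠ 0) (hfdeg : f.IsHomogeneous (q + 1))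
    (hnolin : ∀ l : MvPolynomial (Fin 3) F, l ≠ 0 → l.IsHomogeneous 1 → ¬ l ∣ f)
    (N : ℕ) (hN : N = (hypersurfacePts f).ncard) (hlt : N < q ^ 3 + 1) :
    N ≤ q ^ 3 - q ^ 2 + 2 := by
  rw [hN] at hlt ⊢
  have hpow : q ^ 2 ≤ q ^ 3 := Nat.pow_le_pow_right (by omega) (by norm_num)
  have key : (hypersurfacePts f).ncard + q ^ 2 ≤ q ^ 3 + 2 →
      (hypersurfacePts f).ncard ≤ q ^ 3 - q ^ 2 + 2 := by omega
  apply key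
  by_cases hirr : Irreducible f
  · have hp := hirr.prime
    by_cases hnd : f ∣ hcG (Fintype.card F) f
    · exfalso
      have h1 := hc_nonclassical f (q + 1) (by omega) hfdeg hp (by rw [hcardF]; nlinarith) hnd
      rw [hcardF, Nat.add_sub_cancel] at h1
      nlinarith
    · have h1 := hc_sv f (q + 1) hfdeg hp hnd
      rw [hcardF, Nat.add_sub_cancel] at h1
      obtain ⟨r, rfl⟩ : ∃ r, q = r + 4 := ⟨q - 4, by omega⟩
      nlinarith [Nat.zero_le (r ^ 3), Nat.zero_le (r ^ 2)]
  · obtain ⟨g, h, d1, d2, rfl, hg0, hh0, hg, hh, h1, h2, h3⟩ :=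
      hc_factor f (q + 1) hf0 hfdeg (by omega) hirr
    have b1 := hc_small q hq3 hcardF d1 g hg0 hg h1 (by omega)
      (fun l l0 l1 hl => hnolin l l0 l1 (hl.mul_right h))
    have b2 := hc_small q hq3 hcardF d2 h hh0 hh h2 (by omega)
      (fun l l0 l1 hl => hnolin l l0 l1 (hl.mul_left g))
    have b3 := hc_pts_mul g h
    obtain ⟨x, rfl⟩ : ∃ x, d1 = x + 1 := ⟨d1 - 1, by omega⟩
    obtain ⟨y, rfl⟩ : ∃ y, d2 = y + 1 := ⟨d2 - 1, by omega⟩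
    obtain rfl : q = x + y + 1 := by omega
    have e1 : x + 1 - 1 = x := rfl
    have e2 : y + 1 - 1 = y := rfl
    rw [e1] at b1
    rw [e2] at b2
    nlinarith
end

section
/- Let C be a plane projective curve of degree 4 defined over GF(9) having no GF(9)-linear components. If the number N of GF(9)-rational points of C satisfies N < 28 (i.e., N < q^3 + 1 with q = 3), then N <= 24. -/
open MvPolynomial Module

open scoped Polynomial

namespace Quartic

/-- Scaling property of homogeneous polynomials. -/
lemma eval_smul_hom {K : Type} [Field K] {n : ℕ} {f : MvPolynomial (Fin 3) K}
    (hf : f.IsHomogeneous n) (a : K) (v : Fin 3 → K) :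
    eval (a • v) f = a ^ n * eval v f := by
  rw [eval_eq', eval_eq', Finset.mul_sum]
  refine Finset.sum_congr rfl fun s hs => ?_
  have hdeg : ∑ i, s i = n := by
    rw [hf.degree_eq_sum_deg_support hs]
    exact (Finset.sum_subset (Finset.subset_univ _) (by simp)).symm
  simp only [Pi.smul_apply, smul_eq_mul, mul_pow, Finset.prod_mul_distrib]
  rw [Finset.prod_pow_eq_pow_sum, hdeg]
  ring

/-- Directional derivative. -/
noncomputable def dd {K : Type} [Field K] (f : MvPolynomial (Fin 3) K) (p v : Fin 3 → K) : K :=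
  ∑ i, v i * eval p (pderiv i f)

/-- Restriction to the affine line `X p + d`. -/
noncomputable def ph {K : Type} [Field K] (p d : Fin 3 → K) :
    MvPolynomial (Fin 3) K →ₐ[K] K[X] :=
  aeval (fun i => Polynomial.C (p i) * Polynomial.X + Polynomial.C (d i))

lemma ph_X {K : Type} [Field K] (p d : Fin 3 → K) (i : Fin 3) :
    ph p d (X i) = Polynomial.C (p i) * Polynomial.X + Polynomial.C (d i) := by
  simp [ph]

lemma eval_ph {K : Type} [Field K] (p d : Fin 3 → K) (f : MvPolynomial (Fin 3) K) (a : K) :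
    Polynomial.eval a (ph p d f) = eval (a • p + d) f := by
  induction f using MvPolynomial.induction_on with
  | C r => simp [ph]
  | add f g hf hg => simp [hf, hg]
  | mul_X f i hf => simp [hf, ph_X]; left; ring

lemma ph_top {K : Type} [Field K] (p d : Fin 3 → K) {n : ℕ} {f : MvPolynomial (Fin 3) K}
    (hf : f.IsHomogeneous n) :
    (ph p d f).natDegree ≤ n ∧ (ph p d f).coeff n = eval p f := by
  have key : ∀ s ∈ f.support, (ph p d (monomial s (coeff s f))).natDegree ≤ n ∧
      (ph p d (monomial s (coeff s f))).coeff n = eval p (monomial s (coeff s f)) := by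
    intro s hs
    have hdeg : s 0 + s 1 + s 2 = n := by
      rw [hf.degree_eq_sum_deg_support hs, ← Fin.sum_univ_three]
      exact (Finset.sum_subset (Finset.subset_univ _) (by simp)).symm
    have hl : ∀ i, (Polynomial.C (p i) * Polynomial.X + Polynomial.C (d i)).natDegree ≤ 1 :=
      fun i => Polynomial.natDegree_linear_le
    have hp : ∀ i, ((Polynomial.C (p i) * Polynomial.X + Polynomial.C (d i)) ^ (s i)).natDegree
        ≤ s i := fun i => by
      simpa using Polynomial.natDegree_pow_le_of_le (s i) (hl i)
    have hc : ∀ i, ((Polynomial.C (p i) * Polynomial.X + Polynomial.C (d i)) ^ (s i)).coeff (s i)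
        = p i ^ s i := fun i => by
      have := Polynomial.coeff_pow_of_natDegree_le (m := s i) (hl i)
      simpa using this
    have h2 := Polynomial.natDegree_mul_le_of_le (hp 0) (hp 1)
    have h3 := Polynomial.natDegree_mul_le_of_le h2 (hp 2)
    have e : ph p d (monomial s (coeff s f)) = Polynomial.C (coeff s f) *
      ((Polynomial.C (p 0) * Polynomial.X + Polynomial.C (d 0)) ^ (s 0) *
       (Polynomial.C (p 1) * Polynomial.X + Polynomial.C (d 1)) ^ (s 1) *
       (Polynomial.C (p 2) * Polynomial.X + Polynomial.C (d 2)) ^ (s 2)) := by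
      rw [ph, aeval_monomial, Finsupp.prod_fintype _ _ (by simp), Fin.prod_univ_three]
      rfl
    rw [e]
    constructor
    · rw [← hdeg]
      exact (Polynomial.natDegree_C_mul_le _ _).trans h3
    · rw [Polynomial.coeff_C_mul, ← hdeg, Polynomial.coeff_mul_add_eq_of_natDegree_le h2 (hp 2),
        Polynomial.coeff_mul_add_eq_of_natDegree_le (hp 0) (hp 1), hc, hc, hc, eval_monomial,
        Finsupp.prod_fintype _ _ (by simp), Fin.prod_univ_three]
  have hs := f.support_sum_monomial_coeff
  constructor
  · conv_lhs => rw [← hs]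
    rw [map_sum]
    exact Polynomial.natDegree_sum_le_of_forall_le _ _ fun s h => (key s h).1
  · conv_lhs => rw [← hs]
    conv_rhs => rw [← hs]
    rw [map_sum, map_sum, Polynomial.finsetSum_coeff]
    exact Finset.sum_congr rfl fun s h => (key s h).2

lemma derivative_ph {K : Type} [Field K] (p d : Fin 3 → K) (f : MvPolynomial (Fin 3) K) :
    Polynomial.derivative (ph p d f) = ∑ i, Polynomial.C (p i) * ph p d (pderiv i f) := by
  induction f using MvPolynomial.induction_on with
  | C r => simp [ph]
  | add f g hf hg => simp [hf, hg, mul_add, Finset.sum_add_distrib]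
  | mul_X f j hf =>
    simp only [map_mul, Polynomial.derivative_mul, hf, Derivation.leibniz, smul_eq_mul, map_add,
      mul_add, Finset.sum_add_distrib]
    rw [add_comm]
    congr 1
    · rw [Finset.sum_eq_single j]
      · simp [ph_X]; ring
      · intro i _ hij
        simp [pderiv_X_of_ne hij.symm]
      · simp
    · rw [Finset.sum_mul]
      refine Finset.sum_congr rfl fun i _ => ?_
      ring

lemma euler_ph {K : Type} [Field K] (p d : Fin 3 → K) {n : ℕ} {f : MvPolynomial (Fin 3) K}
    (hf : f.IsHomogeneous n) :
    (n : K[X]) * ph p d f = Polynomial.X * Polynomial.derivative (ph p d f) +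
      ∑ i, Polynomial.C (d i) * ph p d (pderiv i f) := by
  have h := congrArg (ph p d) hf.sum_X_mul_pderiv
  rw [map_nsmul, nsmul_eq_mul, map_sum] at h
  rw [← h, derivative_ph, Finset.mul_sum, ← Finset.sum_add_distrib]
  refine Finset.sum_congr rfl fun i _ => ?_
  rw [map_mul]
  simp only [ph, aeval_X]
  ring

lemma ph_second {K : Type} [Field K] (p d : Fin 3 → K) {n : ℕ} {f : MvPolynomial (Fin 3) K}
    (hf : f.IsHomogeneous (n + 1)) : (ph p d f).coeff n = dd f p d := by
  have h := congrArg (fun g => Polynomial.coeff g n) (euler_ph p d hf)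
  have hx : (Polynomial.X * Polynomial.derivative (ph p d f)).coeff n =
      n * (ph p d f).coeff n := by
    cases n with
    | zero => simp
    | succ m => rw [Polynomial.coeff_X_mul, Polynomial.coeff_derivative]; push_cast; ring
  simp only [Polynomial.coeff_add, hx, Polynomial.finsetSum_coeff, Polynomial.coeff_C_mul,
    Polynomial.coeff_natCast_mul] at h
  have h2 : ∀ i, (ph p d (pderiv i f)).coeff n = eval p (pderiv i f) := fun i =>
    (ph_top p d (hf.pderiv (i := i))).2
  simp only [h2] at h
  rw [dd, ← sub_eq_zero]
  rw [← sub_eq_zero] at h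
  rw [← h]
  push_cast
  ring

lemma euler_eval {K : Type} [Field K] {n : ℕ} {f : MvPolynomial (Fin 3) K}
    (hf : f.IsHomogeneous n) (p : Fin 3 → K) : dd f p p = n * eval p f := by
  have h := congrArg (eval p) hf.sum_X_mul_pderiv
  simpa [dd, map_sum] using h

/-- linear form of a functional -/
noncomputable def lf {K : Type} [Field K] (l : (Fin 3 → K) →ₗ[K] K) : MvPolynomial (Fin 3) K :=
  ∑ k, C (l (Pi.single k 1)) * X k

lemma eval_lf {K : Type} [Field K] (l : (Fin 3 → K) →ₗ[K] K) (v : Fin 3 → K) :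
    eval v (lf l) = l v := by
  conv_rhs => rw [LinearMap.pi_apply_eq_sum_univ l v]
  simp [lf, mul_comm]
  simp only [← Pi.single_apply]
  refine Finset.sum_congr rfl fun k _ => ?_
  congr 2; ext j; simp [Pi.single_apply, eq_comm]

lemma lf_hom {K : Type} [Field K] (l : (Fin 3 → K) →ₗ[K] K) : (lf l).IsHomogeneous 1 :=
  IsHomogeneous.sum _ _ _ fun k _ => isHomogeneous_C_mul_X _ _

lemma lf_ne {K : Type} [Field K] (l : (Fin 3 → K) →ₗ[K] K) (hl : l ≠ 0) : lf l ≠ 0 := by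
  intro h
  apply hl
  ext v
  simp [← eval_lf, h]

/-- A form vanishing on a hyperplane over a big enough field is divisible by it. -/
lemma lf_dvd {K : Type} [Field K] [Fintype K] {n : ℕ} {f : MvPolynomial (Fin 3) K}
    (hf : f.IsHomogeneous n) (hn : n ≤ Fintype.card K) (l : (Fin 3 → K) →ₗ[K] K) (hl : l ≠ 0)
    (h : ∀ v, l v = 0 → eval v f = 0) : lf l ∣ f := by
  obtain ⟨e, he⟩ : ∃ e, l e = 1 := by
    obtain ⟨v, hv⟩ : ∃ v, l v ≠ 0 := by
      by_contra hc
      push Not at hc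
      exact hl (LinearMap.ext hc)
    exact ⟨(l v)⁻¹ • v, by simp [hv]⟩
  set s : Fin 3 → MvPolynomial (Fin 3) K := fun i => X i - C (e i) * lf l with hs
  have h0 : aeval s f = 0 := by
    refine IsHomogeneous.eq_zero_of_forall_eval_eq_zero_of_le_card (n := n) ?_ ?_ ?_
    · have := hf.aeval (S := K) s (n := 1) (fun i => (isHomogeneous_X _ _).sub
        ((lf_hom l).C_mul _))
      simpa using this
    · intro r
      have : eval r (aeval s f) = eval (r - l r • e) f := by
        have h1 : (MvPolynomial.aeval r (R := K) (S₁ := K)).comp (aeval s) =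
            aeval (R := K) (r - l r • e) := by
          apply MvPolynomial.algHom_ext
          intro i
          simp only [hs, AlgHom.comp_apply, aeval_X, aeval_eq_eval, RingHom.coe_coe, map_sub,
            map_mul, eval_X, eval_C, eval_lf]
          simp [mul_comm]
        have h2 := DFunLike.congr_fun h1 f
        simpa [aeval_eq_eval] using h2
      rw [this]
      apply h
      simp [he]
    · simpa using hn
  rw [← Ideal.mem_span_singleton, ← Ideal.Quotient.eq_zero_iff_mem]
  have h1 : (Ideal.Quotient.mkₐ K (Ideal.span {lf l})).comp (aeval s) =
      Ideal.Quotient.mkₐ K (Ideal.span {lf l}) := by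
    apply MvPolynomial.algHom_ext
    intro i
    have : Ideal.Quotient.mkₐ K (Ideal.span {lf l}) (lf l) = 0 :=
      Ideal.Quotient.eq_zero_iff_mem.2 (Ideal.mem_span_singleton_self _)
    simp only [hs, AlgHom.comp_apply, aeval_X, map_sub, map_mul, this]
    simp
  have h2 := DFunLike.congr_fun h1 f
  rw [AlgHom.comp_apply, h0, map_zero] at h2
  exact h2.symm

lemma exists_functional {K : Type} [Field K] (p d : Fin 3 → K)
    (hpd : LinearIndependent K ![p, d]) :
    ∃ l : (Fin 3 → K) →ₗ[K] K, l ≠ 0 ∧ ∀ v, l v = 0 ↔ ∃ a b : K, v = a • p + b • d := by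
  have hr : finrank K (Submodule.span K (Set.range ![p, d])) = 2 := by
    simpa using finrank_span_eq_card hpd
  have hlt : Submodule.span K (Set.range ![p, d]) < ⊤ := by
    rw [lt_top_iff_ne_top]
    intro h
    rw [h] at hr
    simp at hr
  obtain ⟨l, hl, hle⟩ := Submodule.exists_le_ker_of_lt_top _ hlt
  have hk : finrank K (LinearMap.ker l) = 2 := by
    have := Module.Dual.finrank_ker_add_one_of_ne_zero hl
    simp at this
    omega
  have heq := Submodule.eq_of_le_of_finrank_eq hle (by rw [hr, hk])
  refine ⟨l, hl, fun v => ?_⟩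
  rw [← LinearMap.mem_ker, ← heq, Matrix.range_cons, Matrix.range_cons, Matrix.range_empty,
    Set.union_empty, Set.singleton_union, Submodule.mem_span_pair]
  simp only [eq_comm]

/-- No linear components. -/
def NoLin {K : Type} [Field K] (f : MvPolynomial (Fin 3) K) : Prop :=
  ∀ l : MvPolynomial (Fin 3) K, l ≠ 0 → l.IsHomogeneous 1 → ¬ l ∣ f

lemma ph_ne {K : Type} [Field K] [Fintype K] {n : ℕ} {f : MvPolynomial (Fin 3) K}
    (hf : f.IsHomogeneous n) (hn : n ≤ Fintype.card K) (hlin : NoLin f) (p d : Fin 3 → K)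
    (hpd : LinearIndependent K ![p, d]) : ph p d f ≠ 0 := by
  intro h0
  obtain ⟨l, hl, hker⟩ := exists_functional p d hpd
  refine hlin (lf l) (lf_ne l hl) (lf_hom l) (lf_dvd hf hn l hl fun v hv => ?_)
  obtain ⟨a, b, rfl⟩ := (hker v).1 hv
  by_cases hb : b = 0
  · subst hb
    have := (ph_top p d hf).2
    rw [h0] at this
    rw [zero_smul, add_zero, eval_smul_hom hf, ← this]
    simp
  · have h1 := eval_ph p d f (a / b)
    rw [h0, Polynomial.eval_zero] at h1
    have : a • p + b • d = b • ((a / b) • p + d) := by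
      rw [smul_add, smul_smul, mul_div_cancel₀ _ hb]
    rw [this, eval_smul_hom hf, ← h1, mul_zero]


lemma hc_mul_left {K : Type} [Field K] {n : ℕ} {f : MvPolynomial (Fin 3) K}
    (hf : f.IsHomogeneous n) (k : ℕ) (c : MvPolynomial (Fin 3) K) :
    homogeneousComponent (n + k) (f * c) = f * homogeneousComponent k c := by
  conv_lhs => rw [← sum_homogeneousComponent c]
  rw [Finset.mul_sum, map_sum]
  have : ∀ i ∈ Finset.range (c.totalDegree + 1),
      homogeneousComponent (n + k) (f * homogeneousComponent i c) =
        if i = k then f * homogeneousComponent k c else 0 := by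
    intro i _
    rw [homogeneousComponent_of_mem (hf.mul (homogeneousComponent_isHomogeneous i c))]
    by_cases h : i = k
    · simp [h]
    · rw [if_neg h, if_neg (by omega)]
  rw [Finset.sum_congr rfl this, Finset.sum_ite_eq']
  split_ifs with h
  · rfl
  · rw [homogeneousComponent_eq_zero k c (by simpa using h), mul_zero]

lemma hc_top {K : Type} [Field K] (a b : MvPolynomial (Fin 3) K) :
    homogeneousComponent (a.totalDegree + b.totalDegree) (a * b) =
      homogeneousComponent a.totalDegree a * homogeneousComponent b.totalDegree b := by
  conv_lhs => rw [← sum_homogeneousComponent a]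
  rw [Finset.sum_mul, map_sum, Finset.sum_range_succ, sum_homogeneousComponent,
    hc_mul_left (homogeneousComponent_isHomogeneous _ _), Finset.sum_eq_zero, zero_add]
  intro i hi
  have hi := Finset.mem_range.1 hi
  have : a.totalDegree + b.totalDegree = i + (a.totalDegree - i + b.totalDegree) := by omega
  rw [this, hc_mul_left (homogeneousComponent_isHomogeneous _ _),
    homogeneousComponent_eq_zero _ b (by omega), mul_zero]

lemma dvd_hom {K : Type} [Field K] {n k : ℕ} {f g : MvPolynomial (Fin 3) K}
    (hf : f.IsHomogeneous n) (hg : g.IsHomogeneous (n + k)) (h : f ∣ g) :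
    ∃ c, c.IsHomogeneous k ∧ g = f * c := by
  obtain ⟨c, rfl⟩ := h
  refine ⟨homogeneousComponent k c, homogeneousComponent_isHomogeneous _ _, ?_⟩
  rw [← hc_mul_left hf, homogeneousComponent_eq_self hg]

lemma exists_frame {K : Type} [Field K] (p : Fin 3 → K) (hp : p ≠ 0) :
    ∃ u w : Fin 3 → K, (∀ v, ∃ a b c : K, v = a • p + b • u + c • w) ∧
      (∀ a b c : K, a • p + b • u + c • w = 0 → a = 0 ∧ b = 0 ∧ c = 0) := by
  obtain ⟨u, hu⟩ := exists_linearIndependent_pair_of_one_lt_finrank (R := K) (by simp) hp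
  obtain ⟨l, hl, hk⟩ := exists_functional p u hu
  obtain ⟨w, hw⟩ : ∃ v, l v ≠ 0 := by
    by_contra hc
    push Not at hc
    exact hl (LinearMap.ext hc)
  refine ⟨u, w, fun v => ?_, fun a b c h => ?_⟩
  · obtain ⟨a, b, hab⟩ := (hk (v - (l v / l w) • w)).1 (by simp [hw])
    exact ⟨a, b, l v / l w, by rw [← hab]; abel⟩
  · have h0 : l (a • p + b • u) = 0 := (hk _).2 ⟨a, b, rfl⟩
    have h1 := congrArg l h
    rw [map_add, h0, zero_add, map_smul, map_zero, smul_eq_mul] at h1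
    have hc : c = 0 := by simpa [hw] using h1
    subst hc
    rw [zero_smul, add_zero] at h
    have := LinearIndependent.pair_iff.1 hu a b h
    exact ⟨this.1, this.2, rfl⟩

lemma eval_rep_mk {K : Type} [Field K] {n : ℕ} {f : MvPolynomial (Fin 3) K}
    (hf : f.IsHomogeneous n) (v : Fin 3 → K) (hv : v ≠ 0) :
    eval (Projectivization.mk K v hv).rep f = 0 ↔ eval v f = 0 := by
  obtain ⟨a, ha⟩ := Projectivization.exists_smul_eq_mk_rep K v hv
  rw [← ha, Units.smul_def, eval_smul_hom hf]
  simp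

/-- Counting the points of a curve along the pencil of lines through one of its points. -/
lemma count {K : Type} [Field K] [Fintype K] [DecidableEq K] {n : ℕ}
    {f : MvPolynomial (Fin 3) K}
    (hf : f.IsHomogeneous n) (hn : n ≤ Fintype.card K) (hlin : NoLin f) (p : Fin 3 → K)
    (hp : p ≠ 0) (hfp : eval p f = 0) :
    ∃ dir : Option K → (Fin 3 → K), (∀ t, LinearIndependent K ![p, dir t]) ∧
      (∀ D : (Fin 3 → K) →ₗ[K] K, D p = 0 → D ≠ 0 → ∃ t0, ∀ t, D (dir t) = 0 ↔ t = t0) ∧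
      (hypersurfacePts f).ncard = 1 + ∑ t, (ph p (dir t) f).roots.toFinset.card := by
  obtain ⟨u, w, hspan, hind⟩ := exists_frame p hp
  let dir : Option K → (Fin 3 → K) := fun t => t.elim w (fun t : K => u + t • w)
  have hli : ∀ t, LinearIndependent K ![p, dir t] := by
    intro t
    rw [LinearIndependent.pair_iff]
    intro a b hab
    cases t with
    | none =>
      have := hind a 0 b (by rw [← hab]; simp [dir])
      exact ⟨this.1, this.2.2⟩
    | some t =>
      have := hind a b (b * t) (by rw [← hab]; simp only [dir, Option.elim]; module)
      exact ⟨this.1, this.2.1⟩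
  have hne : ∀ (t : Option K) (a : K), a • p + dir t ≠ 0 := by
    intro t a h
    have := (LinearIndependent.pair_iff.1 (hli t)) a 1 (by rw [one_smul]; exact h)
    exact one_ne_zero this.2
  refine ⟨dir, hli, ?_, ?_⟩
  · intro D hDp hD
    by_cases hw : D w = 0
    · refine ⟨none, fun t => ?_⟩
      cases t with
      | none => simp [dir, hw]
      | some t =>
        simp only [dir, Option.elim, map_add, map_smul, hw, smul_zero, add_zero, reduceCtorEq,
          iff_false]
        intro hu
        apply hD
        refine LinearMap.ext fun v => ?_
        obtain ⟨a, b, c, rfl⟩ := hspan v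
        simp [hw, hu, hDp]
    · refine ⟨some (- D u / D w), fun t => ?_⟩
      cases t with
      | none => simp [dir, hw]
      | some t =>
        simp only [dir, Option.elim, map_add, map_smul, smul_eq_mul, Option.some.injEq]
        rw [eq_div_iff hw]
        constructor
        · intro h; linear_combination h
        · intro h; linear_combination h
  · let e : Option (Option K × K) → Projectivization K (Fin 3 → K) := fun x =>
      x.elim (Projectivization.mk K p hp)
        (fun y => Projectivization.mk K (y.2 • p + dir y.1) (hne y.1 y.2))
    have hsurj : Function.Surjective e := by
      intro P
      induction P using Projectivization.ind with
      | h v hv =>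
      obtain ⟨a, b, c, rfl⟩ := hspan v
      by_cases hb : b = 0
      · by_cases hc : c = 0
        · refine ⟨none, ?_⟩
          subst hb hc
          have ha : a ≠ 0 := by rintro rfl; simp at hv
          simp only [e, Option.elim]
          rw [Projectivization.mk_eq_mk_iff']
          exact ⟨a⁻¹, by simp [smul_smul, ha]⟩
        · refine ⟨some (none, a / c), ?_⟩
          subst hb
          simp only [e, Option.elim, dir]
          rw [Projectivization.mk_eq_mk_iff']
          refine ⟨c⁻¹, ?_⟩
          simp only [smul_add, smul_smul, zero_smul, smul_zero, add_zero, inv_mul_cancel₀ hc,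
            one_smul]
          rw [div_eq_inv_mul]
      · refine ⟨some (some (c / b), a / b), ?_⟩
        simp only [e, Option.elim, dir]
        rw [Projectivization.mk_eq_mk_iff']
        refine ⟨b⁻¹, ?_⟩
        simp only [smul_add, smul_smul, inv_mul_cancel₀ hb, one_smul, div_eq_inv_mul, add_assoc]
    have : Finite (Projectivization K (Fin 3 → K)) := Finite.of_surjective e hsurj
    have hbij : Function.Bijective e := by
      have : Fintype (Projectivization K (Fin 3 → K)) := Fintype.ofFinite _
      rw [Fintype.bijective_iff_surjective_and_card]
      refine ⟨hsurj, ?_⟩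
      rw [← Nat.card_eq_fintype_card (α := Projectivization K (Fin 3 → K)),
        Projectivization.card_of_finrank K (Fin 3 → K) (n := 3) (by simp)]
      simp only [Fintype.card_option, Fintype.card_prod, Finset.sum_range_succ,
        Finset.sum_range_zero, Nat.card_eq_fintype_card]
      ring
    have h1 : (hypersurfacePts f).ncard = (e ⁻¹' (hypersurfacePts f)).ncard := by
      rw [← Set.ncard_image_of_injective _ hbij.1, Set.image_preimage_eq _ hsurj]
    have h2 : e ⁻¹' (hypersurfacePts f) = ((Finset.univ.filter fun x : Option (Option K × K) =>
        x.elim 0 (fun y => eval (y.2 • p + dir y.1) f) = 0 : Finset _) : Set _) := by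
      ext x
      cases x with
      | none => simp [hypersurfacePts, e, eval_rep_mk hf, hfp]
      | some y => simp [hypersurfacePts, e, eval_rep_mk hf]
    rw [h1, h2, Set.ncard_coe_finset, Finset.card_filter, Fintype.sum_option,
      Fintype.sum_prod_type]
    simp only [Option.elim, if_true]
    congr 1
    refine Finset.sum_congr rfl fun t _ => ?_
    refine Eq.trans (b := (Finset.univ.filter fun a : K => eval (a • p + dir t) f = 0).card)
      (by rw [Finset.card_filter]; rfl) ?_
    congr 1
    ext a
    have := ph_ne hf hn hlin p (dir t) (hli t)
    simp [this, eval_ph]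

/-- Upper bound by counting on lines through a point of multiplicity at least `n - k`. -/
lemma count_le {K : Type} [Field K] [Fintype K] {n : ℕ}
    {f : MvPolynomial (Fin 3) K}
    (hf : f.IsHomogeneous n) (hn : n ≤ Fintype.card K) (hlin : NoLin f) (p : Fin 3 → K)
    (hp : p ≠ 0) (hfp : eval p f = 0) (k : ℕ) (hk : ∀ d, (ph p d f).natDegree ≤ k) :
    (hypersurfacePts f).ncard ≤ 1 + (Fintype.card K + 1) * k := by
  classical
  obtain ⟨dir, -, -, h⟩ := count hf hn hlin p hp hfp
  rw [h]
  gcongr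
  calc ∑ t, (ph p (dir t) f).roots.toFinset.card ≤ ∑ t : Option K, k := by
        refine Finset.sum_le_sum fun t _ => ?_
        exact (Multiset.toFinset_card_le _).trans ((Polynomial.card_roots' _).trans (hk _))
    _ = _ := by simp

lemma natDegree_lt_of {K : Type} [Field K] {g : K[X]} {n : ℕ} (h : g.natDegree ≤ n + 1)
    (h0 : g.coeff (n + 1) = 0) : g.natDegree ≤ n := by
  rw [Polynomial.natDegree_le_iff_coeff_eq_zero] at h ⊢
  intro m hm
  rcases Nat.lt_or_ge (n + 1) m with h1 | h1
  · exact h m h1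
  · have : m = n + 1 := by omega
    rw [this, h0]

lemma conic_le {K : Type} [Field K] [Fintype K]
    {f : MvPolynomial (Fin 3) K}
    (hf : f.IsHomogeneous 2) (hn : 2 ≤ Fintype.card K) (hlin : NoLin f) :
    (hypersurfacePts f).ncard ≤ Fintype.card K + 2 := by
  by_cases h : ∃ P, P ∈ hypersurfacePts f
  · obtain ⟨P, hP⟩ := h
    have := count_le hf hn hlin P.rep P.rep_nonzero hP 1 (fun d =>
      natDegree_lt_of (ph_top _ _ hf).1 ((ph_top _ _ hf).2.trans hP))
    omega
  · have : hypersurfacePts f = ∅ := by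
      ext P; simp; exact fun hP => h ⟨P, hP⟩
    simp [this]

lemma singular_le {K : Type} [Field K] [Fintype K] {f : MvPolynomial (Fin 3) K}
    (hf : f.IsHomogeneous 4) (hn : 4 ≤ Fintype.card K) (hlin : NoLin f) (p : Fin 3 → K)
    (hp : p ≠ 0) (hfp : eval p f = 0) (hs : ∀ d, dd f p d = 0) :
    (hypersurfacePts f).ncard ≤ 1 + (Fintype.card K + 1) * 2 :=
  count_le hf hn hlin p hp hfp 2 (fun d => natDegree_lt_of
      (natDegree_lt_of (ph_top _ _ hf).1 ((ph_top _ _ hf).2.trans hfp))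
      ((ph_second p d hf).trans (hs d)))

/-- Reducible quartics without linear components have few points. -/
lemma reducible_le {K : Type} [Field K] [Fintype K] (hq : Fintype.card K = 9)
    {f : MvPolynomial (Fin 3) K} (hf0 : f ≠ 0)
    (hf : f.IsHomogeneous 4) (hlin : NoLin f) (hirr : ¬ Irreducible f) :
    (hypersurfacePts f).ncard ≤ 22 := by
  have hnu : ¬ IsUnit f := by
    intro hu
    have h1 := hf.totalDegree hf0
    have h2 := (MvPolynomial.isUnit_iff_totalDegree_of_isReduced.1 hu).2
    omega
  obtain ⟨a, b, ha, hb, hab⟩ : ∃ a b, ¬ IsUnit a ∧ ¬ IsUnit b ∧ f = a * b := by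
    by_contra hc
    push Not at hc
    refine hirr ⟨hnu, fun a b hab => ?_⟩
    by_contra h
    push Not at h
    exact hc a b h.1 h.2 hab
  have ha0 : a ≠ 0 := by rintro rfl; simp at hab; exact hf0 hab
  have hb0 : b ≠ 0 := by rintro rfl; simp at hab; exact hf0 hab
  have hdeg : a.totalDegree + b.totalDegree = 4 := by
    rw [← MvPolynomial.totalDegree_mul_of_isDomain ha0 hb0, ← hab, hf.totalDegree hf0]
  have hpos : ∀ c : MvPolynomial (Fin 3) K, c ≠ 0 → ¬ IsUnit c → c.totalDegree ≠ 0 := by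
    intro c hc hcu h
    rw [totalDegree_eq_zero_iff_eq_C] at h
    rw [h] at hcu hc
    exact hcu ((Ne.isUnit (fun h0 => hc (by rw [h0, C_0]))).map C)
  have ha1 := hpos a ha0 ha
  have hb1 := hpos b hb0 hb
  set m := a.totalDegree
  set k := b.totalDegree
  have hab' : f = homogeneousComponent m a * homogeneousComponent k b := by
    have := hc_top a b
    rw [hdeg, ← hab, homogeneousComponent_eq_self hf] at this
    exact this
  have hma : (homogeneousComponent m a).IsHomogeneous m := homogeneousComponent_isHomogeneous _ _
  have hkb : (homogeneousComponent k b).IsHomogeneous k := homogeneousComponent_isHomogeneous _ _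
  generalize homogeneousComponent m a = A at *
  generalize homogeneousComponent k b = B at *
  have hA0 : A ≠ 0 := by rintro rfl; simp at hab'; exact hf0 hab'
  have hB0 : B ≠ 0 := by rintro rfl; simp at hab'; exact hf0 hab'
  have hm : m ≠ 1 := by
    intro h; rw [h] at hma; exact hlin A hA0 hma ⟨B, hab'⟩
  have hk : k ≠ 1 := by
    intro h; rw [h] at hkb; exact hlin B hB0 hkb ⟨A, by rw [hab', mul_comm]⟩
  have hm2 : m = 2 := by omega
  have hk2 : k = 2 := by omega
  rw [hm2] at hma
  rw [hk2] at hkb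
  have hAl : NoLin A := fun l h0 h1 h2 => hlin l h0 h1 (h2.trans ⟨B, hab'⟩)
  have hBl : NoLin B := fun l h0 h1 h2 => hlin l h0 h1 (h2.trans ⟨A, by rw [hab', mul_comm]⟩)
  have h1 := conic_le hma (by omega) hAl
  have h2 := conic_le hkb (by omega) hBl
  have : hypersurfacePts f = hypersurfacePts A ∪ hypersurfacePts B := by
    ext P
    simp [hypersurfacePts, hab']
  rw [this]
  have := Set.ncard_union_le (hypersurfacePts A) (hypersurfacePts B)
  omega


lemma char_three {K : Type} [Field K] [Fintype K] (hq : Fintype.card K = 9) : CharP K 3 := by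
  obtain ⟨p, hp⟩ := CharP.exists K
  obtain ⟨n, hpr, hn⟩ := FiniteField.card K p
  rw [hq] at hn
  have h3 : p ∣ 3 ^ 2 := by
    have : p ∣ p ^ (n : ℕ) := dvd_pow_self p n.ne_zero
    rw [← hn] at this
    exact this
  have := (Nat.prime_dvd_prime_iff_eq hpr Nat.prime_three).1 (hpr.dvd_of_dvd_pow h3)
  rwa [this] at hp

lemma three_zero {K : Type} [Field K] [Fintype K] (hq : Fintype.card K = 9) : (3 : K) = 0 := by
  have := char_three hq
  exact_mod_cast CharP.cast_eq_zero K 3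

/-- The Frobenius polar `∑ X_i^9 ∂_i f`. -/
noncomputable def gf {K : Type} [Field K] (f : MvPolynomial (Fin 3) K) : MvPolynomial (Fin 3) K :=
  ∑ i, X i ^ 9 * pderiv i f

lemma gf_hom {K : Type} [Field K] {f : MvPolynomial (Fin 3) K} (hf : f.IsHomogeneous 4) :
    (gf f).IsHomogeneous 12 := by
  refine IsHomogeneous.sum _ _ _ fun i _ => ?_
  exact (isHomogeneous_X_pow i 9).mul hf.pderiv

lemma ph_gf {K : Type} [Field K] [Fintype K] (hq : Fintype.card K = 9)
    {f : MvPolynomial (Fin 3) K} (hf : f.IsHomogeneous 4) (p d : Fin 3 → K) :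
    ph p d (gf f) = (Polynomial.X ^ 9 - Polynomial.X) * Polynomial.derivative (ph p d f) +
      4 * ph p d f := by
  have := char_three hq
  have hp9 : ∀ a : K, a ^ 9 = a := fun a => by rw [← hq]; exact FiniteField.pow_card a
  have h9 : ∀ i, (Polynomial.C (p i) * Polynomial.X + Polynomial.C (d i)) ^ 9 =
      Polynomial.C (p i) * Polynomial.X ^ 9 + Polynomial.C (d i) := by
    intro i
    have : Fact (Nat.Prime 3) := ⟨Nat.prime_three⟩
    have h := add_pow_char_pow (R := K[X]) (p := 3) (n := 2)
      (Polynomial.C (p i) * Polynomial.X) (Polynomial.C (d i))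
    norm_num at h
    rw [h, mul_pow, ← Polynomial.C_pow, ← Polynomial.C_pow, hp9, hp9]
  have he := euler_ph p d hf
  push_cast at he
  rw [he, derivative_ph, gf, map_sum, Finset.mul_sum, Finset.mul_sum, ← Finset.sum_add_distrib,
    ← Finset.sum_add_distrib]
  refine Finset.sum_congr rfl fun i _ => ?_
  rw [map_mul, map_pow, ph_X, h9]
  ring

lemma H_zero {K : Type} [Field K] [Fintype K] (hq : Fintype.card K = 9)
    {f H : MvPolynomial (Fin 3) K} (hf : f.IsHomogeneous 4) (hH : H.IsHomogeneous 8)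
    (hfH : gf f = f * H) (p v : Fin 3 → K) (hp : eval p f = 0) (hv : dd f p v ≠ 0) :
    eval p H = 0 := by
  have h := ph_gf hq hf p v
  rw [hfH, map_mul] at h
  have hg : (ph p v f).natDegree ≤ 3 :=
    natDegree_lt_of (ph_top _ _ hf).1 ((ph_top _ _ hf).2.trans hp)
  have h3 : (ph p v f).coeff 3 = dd f p v := ph_second p v hf
  have hK := ph_top p v hH
  have hhi : ∀ n, 3 < n → (ph p v f).coeff n = 0 := fun n hn =>
    Polynomial.coeff_eq_zero_of_natDegree_lt (by omega)
  have h11 := congrArg (fun g => Polynomial.coeff g (3 + 8)) h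
  simp only [Polynomial.coeff_mul_add_eq_of_natDegree_le hg hK.1] at h11
  rw [h3, hK.2, sub_mul, Polynomial.coeff_add, Polynomial.coeff_sub,
    show 3 + 8 = 2 + 9 from rfl, Polynomial.coeff_X_pow_mul, Polynomial.coeff_X_mul,
    Polynomial.coeff_derivative, Polynomial.coeff_derivative] at h11
  have h4 : (4 * ph p v f).coeff (2 + 9) = 0 := by
    rw [show (4 : K[X]) = Polynomial.C 4 from rfl, Polynomial.coeff_C_mul, hhi _ (by norm_num),
      mul_zero]
  rw [h4, hhi (2 + 8 + 1) (by norm_num)] at h11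
  have h30 := three_zero hq
  have : dd f p v * eval p H = 0 := by
    rw [h11]
    push_cast
    linear_combination (ph p v f).coeff 3 * h30
  exact (mul_eq_zero.1 this).resolve_left hv

lemma tangent_const {K : Type} [Field K] [Fintype K] (hq : Fintype.card K = 9)
    {f H : MvPolynomial (Fin 3) K} (hf : f.IsHomogeneous 4) (hH : H.IsHomogeneous 8)
    (hfH : gf f = f * H) (p d : Fin 3 → K) (hp : eval p f = 0) (hHp : eval p H = 0)
    (hd : dd f p d = 0) : (ph p d f).natDegree = 0 := by
  have h := ph_gf hq hf p d
  rw [hfH, map_mul] at h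
  have hg2 : (ph p d f).natDegree ≤ 2 := natDegree_lt_of
      (natDegree_lt_of (ph_top _ _ hf).1 ((ph_top _ _ hf).2.trans hp))
      ((ph_second p d hf).trans hd)
  have hK : (ph p d H).natDegree ≤ 7 :=
    natDegree_lt_of (ph_top _ _ hH).1 ((ph_top _ _ hH).2.trans hHp)
  generalize ph p d f = g at *
  generalize ph p d H = k at *
  have h30 := three_zero hq
  have hco : ∀ m, (2 < m) → g.coeff m = 0 := fun m hm =>
    Polynomial.coeff_eq_zero_of_natDegree_lt (by omega)
  have hL : ∀ m, (g * k).coeff (m + 9) = g.coeff (m + 1) * (m + 1) := by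
    intro m
    rw [h, sub_mul, Polynomial.coeff_add, Polynomial.coeff_sub, Polynomial.coeff_X_pow_mul,
      Polynomial.coeff_X_mul, Polynomial.coeff_derivative, Polynomial.coeff_derivative,
      show (4 : K[X]) = Polynomial.C 4 from rfl, Polynomial.coeff_C_mul,
      hco (m + 9) (by omega)]
    ring
  have hc2 : g.coeff (1 + 1) = 0 := by
    have h1 := hL 1
    rw [Polynomial.coeff_eq_zero_of_natDegree_lt
      (lt_of_le_of_lt (Polynomial.natDegree_mul_le_of_le hg2 hK) (by norm_num))] at h1
    push_cast at h1
    linear_combination h1 + g.coeff (1 + 1) * h30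
  have hg1 := natDegree_lt_of hg2 hc2
  have hc1 : g.coeff (0 + 1) = 0 := by
    have h1 := hL 0
    rw [Polynomial.coeff_eq_zero_of_natDegree_lt
      (lt_of_le_of_lt (Polynomial.natDegree_mul_le_of_le hg1 hK) (by norm_num))] at h1
    push_cast at h1
    linear_combination -h1
  have := natDegree_lt_of hg1 hc1
  omega

lemma roots_three {K : Type} [Field K] [Fintype K] [DecidableEq K] (hq : Fintype.card K = 9)
    (g : K[X]) (hg : g.natDegree = 3)
    (hdvd : g ∣ (Polynomial.X ^ 9 - Polynomial.X) * Polynomial.derivative g)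
    (hr : ∀ a, g.eval a = 0 → (Polynomial.derivative g).eval a ≠ 0) :
    g.roots.toFinset.card = 3 := by
  have h30 := three_zero hq
  have hg0 : g ≠ 0 := by rintro rfl; simp at hg
  have hp9 : ∀ a : K, a ^ 9 = a := fun a => by rw [← hq]; exact FiniteField.pow_card a
  have hge : g = Polynomial.C (g.coeff 3) * Polynomial.X ^ 3 +
      Polynomial.C (g.coeff 2) * Polynomial.X ^ 2 + Polynomial.C (g.coeff 1) * Polynomial.X +
      Polynomial.C (g.coeff 0) := by
    conv_lhs => rw [g.as_sum_range_C_mul_X_pow, hg]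
    simp [Finset.sum_range_succ]
    ring
  have hc3 : g.coeff 3 ≠ 0 := by
    rw [← hg]; simpa using hg0
  have hd : Polynomial.derivative g = Polynomial.C (2 * g.coeff 2) * Polynomial.X +
      Polynomial.C (g.coeff 1) := by
    conv_lhs => rw [hge]
    have : (3 : K[X]) = 0 := by
      rw [show (3 : K[X]) = Polynomial.C 3 from rfl, h30, Polynomial.C_0]
    simp only [Polynomial.derivative_add, Polynomial.derivative_X_pow,
      Polynomial.derivative_C, Polynomial.derivative_C_mul, Polynomial.derivative_X, mul_one,
      add_zero]
    push_cast
    rw [h30, Polynomial.C_mul, Polynomial.C_0]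
    ring
  have h2 : (2 : K) ≠ 0 := by
    intro h; exact one_ne_zero (α := K) (by linear_combination h30 - h)
  have hcop : IsCoprime g (Polynomial.derivative g) := by
    by_cases c2 : g.coeff 2 = 0
    · by_cases c1 : g.coeff 1 = 0
      · exfalso
        set b := - g.coeff 0 / g.coeff 3 with hb
        refine hr (b ^ 3) ?_ ?_
        · rw [hge, c2, c1]
          simp only [Polynomial.eval_add, Polynomial.eval_mul, Polynomial.eval_C,
            Polynomial.eval_pow, Polynomial.eval_X]
          rw [← pow_mul, hp9, hb]
          field_simp
          ring
        · rw [hd, c2, c1]; simp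
      · rw [hd, c2]
        simp only [mul_zero, Polynomial.C_0, zero_mul, zero_add]
        exact isCoprime_comm.1 (IsCoprime.of_isCoprime_of_dvd_left isCoprime_one_left
          (Polynomial.isUnit_C.2 (Ne.isUnit c1)).dvd)
    · set a := - g.coeff 1 / (2 * g.coeff 2) with ha
      have hda : Polynomial.derivative g =
          Polynomial.C (2 * g.coeff 2) * (Polynomial.X - Polynomial.C a) := by
        rw [hd, mul_sub, ← Polynomial.C_mul, ha, mul_div_cancel₀ _ (mul_ne_zero h2 c2)]
        simp
      have hga : g.eval a ≠ 0 := by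
        intro h
        apply hr a h
        rw [hda]; simp
      rw [hda]
      refine (isCoprime_mul_unit_left_right
        (Polynomial.isUnit_C.2 (Ne.isUnit (mul_ne_zero h2 c2))) _ _).2 ?_
      refine (((Polynomial.irreducible_X_sub_C a).coprime_iff_not_dvd).2 ?_).symm
      rw [Polynomial.dvd_iff_isRoot]
      exact hga
  have hX : g ∣ Polynomial.X ^ 9 - Polynomial.X := hcop.dvd_of_dvd_mul_right hdvd
  have hroots := FiniteField.roots_X_pow_card_sub_X K
  rw [hq] at hroots
  have hX0 : (Polynomial.X ^ 9 - Polynomial.X : K[X]) ≠ 0 :=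
    FiniteField.X_pow_card_sub_X_ne_zero K (by norm_num)
  have hsp : (Polynomial.X ^ 9 - Polynomial.X : K[X]).Splits := by
    rw [Polynomial.splits_iff_card_roots, hroots,
      FiniteField.X_pow_card_sub_X_natDegree_eq K (by norm_num)]
    exact hq
  have hgs := (hsp.of_dvd hX0 hX).natDegree_eq_card_roots
  have hnd : g.roots.Nodup := by
    refine Multiset.nodup_of_le (Polynomial.roots.le_of_dvd hX0 hX) ?_
    rw [hroots]
    exact Finset.univ.nodup
  rw [Multiset.toFinset_card_of_nodup hnd, ← hgs, hg]

/-- The directional derivative as a functional. -/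
noncomputable def ddL {K : Type} [Field K] (f : MvPolynomial (Fin 3) K) (p : Fin 3 → K) :
    (Fin 3 → K) →ₗ[K] K where
  toFun v := dd f p v
  map_add' v w := by simp [dd, add_mul, Finset.sum_add_distrib]
  map_smul' a v := by simp [dd, Finset.mul_sum, mul_assoc]

lemma nonclassical {K : Type} [Field K] [Fintype K] (hq : Fintype.card K = 9)
    {f : MvPolynomial (Fin 3) K} (hf : f.IsHomogeneous 4) (hlin : NoLin f)
    (hns : ∀ p : Fin 3 → K, p ≠ 0 → eval p f = 0 → ∃ v, dd f p v ≠ 0)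
    (hdvd : f ∣ gf f) (p : Fin 3 → K) (hp : p ≠ 0) (hfp : eval p f = 0) :
    (hypersurfacePts f).ncard = 28 := by
  classical
  obtain ⟨H, hH, hfH⟩ := dvd_hom (k := 8) hf (gf_hom hf) hdvd
  have hHz : ∀ p : Fin 3 → K, p ≠ 0 → eval p f = 0 → eval p H = 0 := by
    intro p hp hfp
    obtain ⟨v, hv⟩ := hns p hp hfp
    exact H_zero hq hf hH hfH p v hfp hv
  obtain ⟨dir, hli, hD, hcount⟩ := count hf (by omega) hlin p hp hfp
  obtain ⟨t0, ht0⟩ := hD (ddL f p)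
    (by change dd f p p = 0; rw [euler_eval hf, hfp, mul_zero])
    (by
      obtain ⟨v, hv⟩ := hns p hp hfp
      intro h
      exact hv (DFunLike.congr_fun h v))
  have hr : ∀ t, (ph p (dir t) f).roots.toFinset.card = if t = t0 then 0 else 3 := by
    intro t
    split_ifs with ht
    · have hd : dd f p (dir t) = 0 := (ht0 t).2 ht
      have := tangent_const hq hf hH hfH p (dir t) hfp (hHz p hp hfp) hd
      rw [Polynomial.eq_C_of_natDegree_eq_zero this]
      simp
    · have hd : dd f p (dir t) ≠ 0 := fun h => ht ((ht0 t).1 h)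
      have hle : (ph p (dir t) f).natDegree ≤ 3 :=
        natDegree_lt_of (ph_top _ _ hf).1 ((ph_top _ _ hf).2.trans hfp)
      have h3 : (ph p (dir t) f).coeff 3 = dd f p (dir t) := ph_second p (dir t) hf
      apply roots_three hq
      · refine le_antisymm hle (Polynomial.le_natDegree_of_ne_zero (by rw [h3]; exact hd))
      · have h := ph_gf hq hf p (dir t)
        rw [hfH, map_mul] at h
        exact ⟨ph p (dir t) H - 4, by linear_combination -h⟩
      · intro a ha hda
        rw [eval_ph] at ha
        set r := a • p + dir t with hrdef
        have hrp : LinearIndependent K ![r, p] := by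
          rw [LinearIndependent.pair_iff]
          intro x y hxy
          have := (LinearIndependent.pair_iff.1 (hli t)) (x * a + y) x (by
            rw [← hxy, hrdef]; module)
          obtain ⟨h1, h2⟩ := this
          subst h2
          simpa using h1
        have hr0 : r ≠ 0 := by
          intro h0
          have := (LinearIndependent.pair_iff.1 hrp) 1 0 (by simp [h0])
          exact one_ne_zero this.1
        have hdr : dd f r p = 0 := by
          rw [derivative_ph, Polynomial.eval_finsetSum] at hda
          simpa [dd, eval_ph] using hda
        have hc := tangent_const hq hf hH hfH r p ha (hHz r hr0 ha) hdr
        apply ph_ne hf (by omega) hlin r p hrp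
        have h0 := eval_ph r p f 0
        rw [zero_smul, zero_add, hfp] at h0
        rw [Polynomial.eq_C_of_natDegree_eq_zero hc] at h0 ⊢
        simpa using h0
  rw [hcount, Finset.sum_congr rfl fun t _ => hr t, Finset.sum_ite, Finset.sum_const_zero,
    zero_add, Finset.sum_const, Finset.filter_ne' , Finset.card_erase_of_mem (Finset.mem_univ _)]
  simp [hq]

lemma dd_mul {K : Type} [Field K] (A B : MvPolynomial (Fin 3) K) (p v : Fin 3 → K) :
    dd (A * B) p v = dd A p v * eval p B + eval p A * dd B p v := by
  simp only [dd, Derivation.leibniz, Finset.sum_mul, Finset.mul_sum, ← Finset.sum_add_distrib]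
  refine Finset.sum_congr rfl fun i _ => ?_
  simp
  ring

lemma dd_lf {K : Type} [Field K] (l : (Fin 3 → K) →ₗ[K] K) (p v : Fin 3 → K) :
    dd (lf l) p v = l v := by
  rw [← eval_lf l v]
  simp [dd, lf, Fin.sum_univ_three, pderiv_X, Pi.single_apply]
  ring

lemma exists_lin {K : Type} [Field K] (p d : Fin 3 → K)
    (hpd : LinearIndependent K ![p, d]) (a b : K) :
    ∃ l : (Fin 3 → K) →ₗ[K] K, l p = a ∧ l d = b := by
  obtain ⟨g, hg⟩ := LinearMap.exists_leftInverse_of_injective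
    (Fintype.linearCombination K ![p, d])
    (LinearMap.ker_eq_bot.2 (hpd.fintypeLinearCombination_injective))
  have h0 := LinearMap.congr_fun hg ![1, 0]
  have h1 := LinearMap.congr_fun hg ![0, 1]
  simp [Fintype.linearCombination_apply, Fin.sum_univ_two] at h0 h1
  refine ⟨a • (LinearMap.proj 0 ∘ₗ g) + b • (LinearMap.proj 1 ∘ₗ g), ?_, ?_⟩
  · simp [h0]
  · simp [h1]

lemma finrank_hom {K : Type} [Field K] (m : ℕ) :
    finrank K (homogeneousSubmodule (Fin 3) K m) = (m + 2).choose m := by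
  classical
  have hs : {d : Fin 3 →₀ ℕ | d.degree = m} = ↑((Finset.univ : Finset (Fin 3)).finsuppAntidiag m) := by
    ext d
    simp [Finset.mem_finsuppAntidiag, Finsupp.degree_eq_sum]
  have h : homogeneousSubmodule (Fin 3) K m = restrictSupport K {d : Fin 3 →₀ ℕ | d.degree = m} :=
    homogeneousSubmodule_eq_finsupp_supported _ _ _
  rw [h, Module.finrank_eq_nat_card_basis (basisRestrictSupport K _), hs]
  simp only [SetLike.coe_sort_coe, Nat.card_eq_fintype_card, Fintype.card_coe]
  rw [Finset.card_finsuppAntidiag_nat_eq_choose]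
  simp
  congr 1
  omega

instance finite_hom {K : Type} [Field K] (m : ℕ) :
    Module.Finite K (homogeneousSubmodule (Fin 3) K m) :=
  Module.Finite.iff_fg.2 (homogeneousSubmodule_fg _ _ _)

/-- Evaluation of 1-jets at the given points. -/
noncomputable def evj {K : Type} [Field K] {n : ℕ} (P v : Fin n → (Fin 3 → K)) :
    MvPolynomial (Fin 3) K →ₗ[K] (Fin n → K × K) where
  toFun A := fun i => (eval (P i) A, dd A (P i) (v i))
  map_add' A B := by
    ext i <;> simp [dd, mul_add, Finset.sum_add_distrib]
  map_smul' c A := by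
    ext i
    · simp [smul_eval]
    · simp only [dd, Derivation.map_smul, smul_eval, RingHom.id_apply, Pi.smul_apply,
        Prod.smul_snd, smul_eq_mul, Finset.mul_sum]
      refine Finset.sum_congr rfl fun i _ => ?_
      ring

lemma evj_apply {K : Type} [Field K] {n : ℕ} (P v : Fin n → (Fin 3 → K)) (A) (i) :
    evj P v A i = (eval (P i) A, dd A (P i) (v i)) := rfl

lemma evj_surj {K : Type} [Field K] {n : ℕ} (P v : Fin (n + 1) → (Fin 3 → K))
    (hv : ∀ i, LinearIndependent K ![P i, v i])
    (hP : ∀ i j, i ≠ j → LinearIndependent K ![P i, P j]) (t : Fin (n + 1) → K × K) :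
    ∃ A ∈ homogeneousSubmodule (Fin 3) K (2 * n + 1), evj P v A = t := by
  classical
  have key : ∀ i, ∃ A ∈ homogeneousSubmodule (Fin 3) K (2 * n + 1),
      evj P v A = Pi.single i (t i) := by
    intro i
    have hL : ∀ j, ∃ l : (Fin 3 → K) →ₗ[K] K, j ≠ i → l (P j) = 0 ∧ l (P i) = 1 := by
      intro j
      by_cases hj : j = i
      · exact ⟨0, fun h => absurd hj h⟩
      · obtain ⟨l, hl⟩ := exists_lin _ _ (hP j i hj) 0 1
        exact ⟨l, fun _ => hl⟩
    choose L hL using hL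
    set M : MvPolynomial (Fin 3) K := ∏ j ∈ Finset.univ.erase i, (lf (L j)) ^ 2 with hM
    have hMh : M.IsHomogeneous (2 * n) := by
      have := IsHomogeneous.prod (Finset.univ.erase i) (fun j => (lf (L j)) ^ 2) (fun _ => 2)
        (fun j _ => by simpa using (lf_hom (L j)).pow 2)
      simpa [mul_comm] using this
    have hMi : eval (P i) M = 1 := by
      rw [hM, map_prod]
      refine Finset.prod_eq_one fun j hj => ?_
      simp [eval_lf, (hL j (Finset.ne_of_mem_erase hj)).2]
    obtain ⟨l, hl1, hl2⟩ := exists_lin _ _ (hv i) (t i).1 ((t i).2 - dd M (P i) (v i) * (t i).1)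
    refine ⟨M * lf l, hMh.mul (lf_hom l), ?_⟩
    funext j
    rw [evj_apply]
    by_cases hj : j = i
    · subst hj
      rw [Pi.single_eq_same, dd_mul, dd_lf, map_mul, eval_lf, hMi, hl1, hl2]
      ext <;> simp
    · rw [Pi.single_eq_of_ne hj]
      have hdv : M * lf l = lf (L j) * (lf (L j) *
          ((∏ k ∈ (Finset.univ.erase i).erase j, (lf (L k)) ^ 2) * lf l)) := by
        rw [hM, ← Finset.mul_prod_erase _ _ (Finset.mem_erase.2 ⟨hj, Finset.mem_univ j⟩)]
        ring
      rw [hdv, dd_mul, map_mul, map_mul, eval_lf, (hL j hj).1]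
      simp
  choose A hA hA2 using key
  refine ⟨∑ i, A i, Submodule.sum_mem _ fun i _ => hA i, ?_⟩
  rw [map_sum]
  simp only [hA2]
  exact Finset.univ_sum_single t

lemma bezout {K : Type} [Field K] {f G : MvPolynomial (Fin 3) K} (hf0 : f ≠ 0)
    (hf : f.IsHomogeneous 4) (hG : G.IsHomogeneous 12) (hirr : Irreducible f) (hnd : ¬ f ∣ G)
    (P v : Fin 25 → (Fin 3 → K))
    (hv : ∀ i, LinearIndependent K ![P i, v i])
    (hP : ∀ i j, i ≠ j → LinearIndependent K ![P i, P j])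
    (hfe : evj P v f = 0) (hGe : evj P v G = 0) : False := by
  have hG0 : G ≠ 0 := by
    rintro rfl
    exact hnd (dvd_zero f)
  have hprime : Prime f := UniqueFactorizationMonoid.irreducible_iff_prime.1 hirr
  have hinj : ∀ g : MvPolynomial (Fin 3) K, g ≠ 0 →
      Function.Injective (LinearMap.mulLeft K g) := fun g hg a b hab => mul_left_cancel₀ hg hab
  have hfr : ∀ (g : MvPolynomial (Fin 3) K), g ≠ 0 → ∀ m,
      finrank K ((homogeneousSubmodule (Fin 3) K m).map (LinearMap.mulLeft K g)) =
        (m + 2).choose m := by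
    intro g hg m
    rw [← finrank_hom (K := K) m]
    exact (Submodule.equivMapOfInjective _ (hinj g hg) _).finrank_eq.symm
  set A := (homogeneousSubmodule (Fin 3) K 45).map (LinearMap.mulLeft K f) with hA
  set B := (homogeneousSubmodule (Fin 3) K 37).map (LinearMap.mulLeft K G) with hB
  set D := (homogeneousSubmodule (Fin 3) K 33).map (LinearMap.mulLeft K (f * G)) with hD
  have hAB : A ⊓ B ≤ D := by
    rintro x ⟨⟨a, ha, rfl⟩, ⟨b, hb, hab⟩⟩
    simp only [LinearMap.mulLeft_apply] at hab
    have hfb : f ∣ b := by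
      refine (hprime.dvd_or_dvd (?_ : f ∣ G * b)).resolve_left hnd
      exact ⟨a, hab⟩
    obtain ⟨c, hc, rfl⟩ := dvd_hom (k := 33) hf hb hfb
    refine ⟨c, hc, ?_⟩
    simp only [LinearMap.mulLeft_apply]
    rw [← hab]
    ring
  have hle : A ⊔ B ≤ homogeneousSubmodule (Fin 3) K 49 ⊓ LinearMap.ker (evj P v) := by
    have h0 : ∀ g c : MvPolynomial (Fin 3) K, evj P v g = 0 → evj P v (g * c) = 0 := by
      intro g c hg
      funext i
      have := congr_fun hg i
      simp only [evj_apply, Pi.zero_apply, Prod.mk_eq_zero] at this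
      rw [evj_apply, dd_mul, map_mul, this.1, this.2]
      simp
    refine sup_le ?_ ?_
    · rintro _ ⟨a, ha, rfl⟩
      exact ⟨hf.mul ha, h0 _ _ hfe⟩
    · rintro _ ⟨a, ha, rfl⟩
      exact ⟨hG.mul ha, h0 _ _ hGe⟩
  have e1 := Submodule.finrank_sup_add_finrank_inf_eq A B
  have e2 := Submodule.finrank_mono hAB
  set R := (evj P v).domRestrict (homogeneousSubmodule (Fin 3) K 49) with hR
  have e3 := LinearMap.finrank_range_add_finrank_ker R
  have hsurj : LinearMap.range R = ⊤ := by
    rw [LinearMap.range_eq_top]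
    intro t
    obtain ⟨a, ha, hat⟩ := evj_surj P v hv hP t
    exact ⟨⟨a, ha⟩, hat⟩
  have hle2 : A ⊔ B ≤ (LinearMap.ker R).map (homogeneousSubmodule (Fin 3) K 49).subtype := by
    intro x hx
    obtain ⟨h1, h2⟩ := hle hx
    exact ⟨⟨x, h1⟩, h2, rfl⟩
  have e4 := (Submodule.finrank_mono hle2).trans (Submodule.finrank_map_le _ _)
  rw [hsurj, finrank_top, finrank_hom] at e3
  rw [hA, hB, hfr f hf0, hfr G hG0, ← hA, ← hB] at e1
  rw [hD, hfr _ (mul_ne_zero hf0 hG0)] at e2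
  have c1 : (33 + 2).choose 33 = 595 := by rw [Nat.choose_symm_add]; rfl
  have c2 : (45 + 2).choose 45 = 1081 := by rw [Nat.choose_symm_add]; rfl
  have c3 : (37 + 2).choose 37 = 741 := by rw [Nat.choose_symm_add]; rfl
  have c4 : (49 + 2).choose 49 = 1275 := by rw [Nat.choose_symm_add]; rfl
  have c5 : finrank K (Fin 25 → K × K) = 50 := by
    rw [Module.finrank_pi_fintype]
    simp
  omega

lemma gf_local {K : Type} [Field K] [Fintype K] (hq : Fintype.card K = 9)
    {f : MvPolynomial (Fin 3) K} (hf : f.IsHomogeneous 4) (p : Fin 3 → K) (hfp : eval p f = 0) :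
    eval p (gf f) = 0 ∧ ∀ v, dd (gf f) p v = 0 := by
  have h3 := three_zero hq
  have h9 : ∀ a : K, a ^ 9 = a := fun a => by
    have := FiniteField.pow_card a
    rwa [hq] at this
  constructor
  · have := euler_eval hf p
    rw [hfp, mul_zero] at this
    rw [← this]
    simp [gf, dd, h9]
  · intro v
    refine Finset.sum_eq_zero fun j _ => ?_
    have h := euler_eval (n := 3) (hf.pderiv (i := j)) p
    have h2 : eval p (pderiv j (gf f)) = dd (pderiv j f) p p := by
      simp only [gf, dd, map_sum]
      refine Finset.sum_congr rfl fun i _ => ?_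
      have h10 : (9 : K) = 0 := by linear_combination 3 * h3
      have hc : pderiv j (pderiv i f) = pderiv i (pderiv j f) := by
        have h0 : ⁅(pderiv j : Derivation K (MvPolynomial (Fin 3) K) (MvPolynomial (Fin 3) K)),
            (pderiv i : Derivation K (MvPolynomial (Fin 3) K) (MvPolynomial (Fin 3) K))⁆ = 0 := by
          refine derivation_ext fun k => ?_
          simp [Derivation.commutator_apply, pderiv_X, Pi.single_apply, apply_ite]
        have := congr_arg (fun D => D f) h0
        simpa [Derivation.commutator_apply, sub_eq_zero] using this
      simp [Derivation.leibniz, Derivation.leibniz_pow, h9, h10, hc]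
    rw [h2, h]
    simp [h3]

lemma exists_tangent {K : Type} [Field K] (f : MvPolynomial (Fin 3) K) (p : Fin 3 → K)
    (hp : p ≠ 0) : ∃ v, LinearIndependent K ![p, v] ∧ dd f p v = 0 := by
  obtain ⟨u, w, -, hind⟩ := exists_frame p hp
  have hdd : ∀ v, dd f p v = ddL f p v := fun v => rfl
  by_cases h : dd f p u = 0
  · refine ⟨u, ?_, h⟩
    rw [LinearIndependent.pair_iff]
    intro a b hab
    have := hind a b 0 (by simpa using hab)
    exact ⟨this.1, this.2.1⟩
  · refine ⟨dd f p w • u - dd f p u • w, ?_, ?_⟩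
    · rw [LinearIndependent.pair_iff]
      intro a b hab
      have := hind a (b * dd f p w) (-(b * dd f p u)) (by rw [← hab]; module)
      refine ⟨this.1, ?_⟩
      have := this.2.2
      simpa [h] using this
    · simp only [hdd, map_sub, map_smul, smul_eq_mul]
      ring

lemma main {K : Type} [Field K] [Fintype K] (hq : Fintype.card K = 9)
    {f : MvPolynomial (Fin 3) K} (hf0 : f ≠ 0) (hf : f.IsHomogeneous 4) (hlin : NoLin f)
    (hlt : (hypersurfacePts f).ncard < 28) : (hypersurfacePts f).ncard ≤ 24 := by
  classical
  by_contra hcon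
  push Not at hcon
  have hirr : Irreducible f := by
    by_contra h
    have := reducible_le hq hf0 hf hlin h
    omega
  have hns : ∀ p : Fin 3 → K, p ≠ 0 → eval p f = 0 → ∃ v, dd f p v ≠ 0 := by
    intro p hp hfp
    by_contra h
    push Not at h
    have := singular_le hf (by omega) hlin p hp hfp h
    rw [hq] at this
    omega
  obtain ⟨T, hT, hTc⟩ := Set.exists_subset_card_eq (s := hypersurfacePts f) (n := 25) hcon
  have hTf : T.Finite := Set.finite_of_ncard_pos (by omega)
  let e : Fin 25 ≃ T := (Finite.equivFinOfCardEq hTc).symm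
  have hnd : ¬ f ∣ gf f := by
    intro hd
    have := nonclassical hq hf hlin hns hd (e 0).1.rep (e 0).1.rep_nonzero (hT (e 0).2)
    omega
  choose v hv hv2 using fun i : Fin 25 => exists_tangent f (e i).1.rep (e i).1.rep_nonzero
  refine bezout hf0 hf (gf_hom hf) hirr hnd (fun i => (e i).1.rep) v hv ?_ ?_ ?_
  · intro i j hij
    have hne : (e i).1 ≠ (e j).1 := fun h => hij (e.injective (Subtype.ext h))
    rw [LinearIndependent.pair_iff' (e i).1.rep_nonzero]
    intro a ha
    apply hne
    rw [← (e i).1.mk_rep, ← (e j).1.mk_rep, eq_comm, Projectivization.mk_eq_mk_iff']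
    exact ⟨a, ha⟩
  · funext i
    rw [evj_apply, hv2]
    exact Prod.ext (hT (e i).2) rfl
  · funext i
    obtain ⟨h1, h2⟩ := gf_local hq hf (e i).1.rep (hT (e i).2)
    rw [evj_apply, h1, h2]
    rfl

end Quartic

/-- If `C` is a plane curve of degree `4` over `GF(9)` with no `GF(9)`-linear components,
whose number `N` of rational points satisfies `N < 28`, then `N ≤ 24`. -/
theorem stmt_4 (F : Type) [Field F] [Fintype F] (hcardF : Fintype.card F = 9)
    (f : MvPolynomial (Fin 3) F) (hf0 : f ≠ 0) (hfdeg : f.IsHomogeneous 4)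
    (hnolin : ∀ l : MvPolynomial (Fin 3) F, l ≠ 0 → l.IsHomogeneous 1 → ¬ l ∣ f)
    (N : ℕ) (hN : N = (hypersurfacePts f).ncard) (hlt : N < 28) :
    N ≤ 24 := by
  subst hN
  exact Quartic.main hcardF hf0 hfdeg hnolin hlt
end

section
/- Let q be a prime power and let C be a plane projective curve of degree q+1 defined over GF(q^2) by a homogeneous polynomial F that is irreducible over GF(q^2) but not absolutely irreducible (i.e., F factors nontrivially over the algebraic closure of GF(q^2)). Then the number N of GF(q^2)-rational points of C satisfies N <= ((q+1)/2)^2; in particular every GF(q^2)-rational point of C lies in the common intersection of all the conjugate absolutely irreducible components of C. -/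
open MvPolynomial Module

lemma aux_finrank (K : Type) [Field K] (d : ℕ) :
    finrank K (homogeneousSubmodule (Fin 3) K d) = (d + 2).choose 2 := by
  classical
  have h : {x : Fin 3 →₀ ℕ | x.degree = d} = ↑(Finset.finsuppAntidiag (Finset.univ : Finset (Fin 3)) d) := by
    ext x
    simp [Finsupp.degree_eq_sum]
  rw [homogeneousSubmodule_eq_finsupp_supported, h]
  have e := (AddMonoidAlgebra.supportedEquivFinsupp (S := K) (R := K) (↑(Finset.finsuppAntidiag (Finset.univ : Finset (Fin 3)) d) : Set (Fin 3 →₀ ℕ))).finrank_eq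
  refine e.trans ?_
  rw [Module.finrank_finsupp_self]
  simp only [Finset.coe_sort_coe, Fintype.card_coe]
  rw [Finset.card_finsuppAntidiag_nat_eq_choose]
  simp
  rw [add_comm 2 d]
  exact Nat.choose_symm_add

noncomputable def auxPhi (K : Type) [Field K] :
    MvPolynomial (Fin 3) K →ₐ[K] Polynomial (MvPolynomial (Fin 3) K) :=
  aeval (fun i => Polynomial.C (X i) * Polynomial.X)

lemma auxPhi_monomial (K : Type) [Field K] (s : Fin 3 →₀ ℕ) (a : K) :
    auxPhi K (monomial s a) = Polynomial.monomial s.degree (monomial s a) := by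
  rw [auxPhi, aeval_monomial, ← Polynomial.C_mul_X_pow_eq_monomial, monomial_eq (a := a)]
  simp only [Finsupp.prod, mul_pow, Finset.prod_mul_distrib, map_mul, map_prod, map_pow,
    Finset.prod_pow_eq_pow_sum, Finsupp.degree_apply]
  rw [mul_assoc]
  rfl

lemma auxPhi_coeff (K : Type) [Field K] (p : MvPolynomial (Fin 3) K) (k : ℕ) :
    (auxPhi K p).coeff k = homogeneousComponent k p := by
  induction p using MvPolynomial.induction_on' with
  | monomial s a =>
    rw [auxPhi_monomial, Polynomial.coeff_monomial]
    split_ifs with h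
    · rw [homogeneousComponent_eq_self (isHomogeneous_monomial a h)]
    · ext t
      rw [coeff_homogeneousComponent, coeff_zero, coeff_monomial]
      split_ifs <;> simp_all
  | add p q hp hq => simp [hp, hq]

lemma auxPhi_homog (K : Type) [Field K] {p : MvPolynomial (Fin 3) K} {n : ℕ}
    (h : p.IsHomogeneous n) : auxPhi K p = Polynomial.monomial n p := by
  ext1 k
  rw [auxPhi_coeff, Polynomial.coeff_monomial, homogeneousComponent_of_mem h]
  simp only [eq_comm]

lemma aux_homog_factor (K : Type) [Field K] {f g h : MvPolynomial (Fin 3) K} {n : ℕ}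
    (hf : f.IsHomogeneous n) (hf0 : f ≠ 0) (e : f = g * h) : ∃ k, g.IsHomogeneous k := by
  have hg0 : g ≠ 0 := by rintro rfl; simp at e; exact hf0 e
  have hh0 : h ≠ 0 := by rintro rfl; simp at e; exact hf0 e
  have inj : ∀ p : MvPolynomial (Fin 3) K, p ≠ 0 → auxPhi K p ≠ 0 := by
    intro p hp h0
    apply hp
    rw [← sum_homogeneousComponent p]
    apply Finset.sum_eq_zero
    intro i _
    rw [← auxPhi_coeff, h0, Polynomial.coeff_zero]
  have e2 : auxPhi K g * auxPhi K h = Polynomial.monomial n f := by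
    rw [← map_mul, ← e, auxPhi_homog K hf]
  have d1 := Polynomial.natDegree_mul (inj g hg0) (inj h hh0)
  have d2 := Polynomial.natTrailingDegree_mul (inj g hg0) (inj h hh0)
  rw [e2, Polynomial.natDegree_monomial_eq _ hf0] at d1
  rw [e2, Polynomial.natTrailingDegree_monomial hf0] at d2
  have l1 := Polynomial.natTrailingDegree_le_natDegree (auxPhi K g)
  have l2 := Polynomial.natTrailingDegree_le_natDegree (auxPhi K h)
  refine ⟨(auxPhi K g).natDegree, ?_⟩
  have : g = homogeneousComponent (auxPhi K g).natDegree g := by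
    conv_lhs => rw [← sum_homogeneousComponent g]
    rw [Finset.sum_eq_single (auxPhi K g).natDegree]
    · intro i _ hi
      rw [← auxPhi_coeff]
      rcases lt_or_gt_of_ne hi with h | h
      · exact Polynomial.coeff_eq_zero_of_lt_natTrailingDegree (by omega)
      · exact Polynomial.coeff_eq_zero_of_natDegree_lt h
    · intro hi
      apply homogeneousComponent_eq_zero
      simpa using hi
  rw [this]
  convert homogeneousComponent_isHomogeneous _ g using 1
  rw [← this]

lemma aux_bezout_s6 (K : Type) [Field K] {ι : Type} [Fintype ι] (v : ι → Fin 3 → K)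
    (hv : ∀ i, v i ≠ 0)
    (hsep : ∀ i j, i ≠ j → ∃ a : Fin 3 → K, ∑ t, a t * v j t = 0 ∧ ∑ t, a t * v i t ≠ 0)
    (A B : MvPolynomial (Fin 3) K) (e : ℕ) (hA : A.IsHomogeneous e) (hB : B.IsHomogeneous e)
    (hAp : Irreducible A) (hAB : ¬ A ∣ B)
    (hvA : ∀ i, eval (v i) A = 0) (hvB : ∀ i, eval (v i) B = 0) : Fintype.card ι ≤ e ^ 2 := by
  classical
  have hA0 : A ≠ 0 := hAp.ne_zero
  have hB0 : B ≠ 0 := by rintro rfl; simp at hAB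
  have hAB0 := mul_ne_zero hA0 hB0
  let H := homogeneousSubmodule (Fin 3) K
  have hfin : ∀ d, FiniteDimensional K (H d) := fun d =>
    Module.Finite.iff_fg.2 (homogeneousSubmodule_fg _ _ d)
  set k := Fintype.card ι with hk
  let d := 2 * e + k
  let ev : H d →ₗ[K] (ι → K) :=
    (LinearMap.pi fun i => (aeval (R := K) (v i)).toLinearMap) ∘ₗ (H d).subtype
  have hev : ∀ p i, ev p i = eval (v i) p.1 := by
    intro p i
    simp [ev, aeval_eq_eval]
  -- surjectivity
  have hsurj : LinearMap.range ev = ⊤ := by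
    rw [eq_top_iff, ← (Pi.basisFun K ι).span_eq, Submodule.span_le]
    rintro _ ⟨i, rfl⟩
    have hL : ∀ j, ∃ L : MvPolynomial (Fin 3) K, L.IsHomogeneous 1 ∧ (j ≠ i → eval (v j) L = 0) ∧
        eval (v i) L ≠ 0 := by
      intro j
      by_cases hj : j = i
      · obtain ⟨t, ht⟩ := Function.ne_iff.1 (hv i)
        exact ⟨X t, isHomogeneous_X _ _, fun h => (h hj).elim, by simpa using ht⟩
      · obtain ⟨a, ha, hb⟩ := hsep i j (Ne.symm hj)
        refine ⟨∑ t, C (a t) * X t, ?_, ?_, ?_⟩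
        · exact IsHomogeneous.sum _ _ _ fun t _ => isHomogeneous_C_mul_X _ _
        · intro _; simpa using ha
        · simpa using hb
    choose L hL1 hL2 hL3 using hL
    obtain ⟨P, hP⟩ : ∃ P, P = (∏ j, L j) * L i ^ (2 * e) := ⟨_, rfl⟩
    have hPh : P.IsHomogeneous d := by
      have h1 := (IsHomogeneous.prod Finset.univ L (fun _ => 1) fun j _ => hL1 j).mul ((hL1 i).pow (2 * e))
      rw [hP]
      convert h1 using 1
      simp [d, hk]; ring
    have hPi : eval (v i) P ≠ 0 := by
      rw [hP]
      simp [Finset.prod_ne_zero_iff, hL3]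
    refine ⟨(eval (v i) P)⁻¹ • ⟨P, hPh⟩, ?_⟩
    ext j
    rw [map_smul, Pi.smul_apply, hev]
    by_cases hj : j = i
    · subst hj; simp [hPi]
    · have : eval (v j) P = 0 := by
        rw [hP, map_mul, map_prod, Finset.prod_eq_zero (Finset.mem_univ j) (hL2 j hj), zero_mul]
      simp [this, hj]
  have r1 := LinearMap.finrank_range_add_finrank_ker ev
  rw [hsurj, finrank_top, Module.finrank_fintype_fun_eq_card] at r1
  let MA := (H (e + k)).map (LinearMap.mulLeft K A)
  let MB := (H (e + k)).map (LinearMap.mulLeft K B)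
  have hinj : ∀ {p : MvPolynomial (Fin 3) K}, p ≠ 0 → Function.Injective (LinearMap.mulLeft K p) :=
    fun hp a b hab => mul_left_cancel₀ hp hab
  have fA : finrank K MA = finrank K (H (e + k)) := (Submodule.equivMapOfInjective _ (hinj hA0) _).finrank_eq.symm
  have fB : finrank K MB = finrank K (H (e + k)) := (Submodule.equivMapOfInjective _ (hinj hB0) _).finrank_eq.symm
  have hsup : MA ⊔ MB ≤ (LinearMap.ker ev).map (H d).subtype := by
    rw [sup_le_iff]
    constructor
    · rintro _ ⟨p, hp, rfl⟩
      refine ⟨⟨A * p, ?_⟩, ?_, rfl⟩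
      · have := hA.mul hp
        rwa [show e + (e + k) = d by simp only [d]; ring] at this
      · ext i
        rw [hev]; simp [hvA]
    · rintro _ ⟨p, hp, rfl⟩
      refine ⟨⟨B * p, ?_⟩, ?_, rfl⟩
      · have := hB.mul hp
        rwa [show e + (e + k) = d by simp only [d]; ring] at this
      · ext i
        rw [hev]; simp [hvB]
  have hinf : MA ⊓ MB ≤ (H k).map (LinearMap.mulLeft K (A * B)) := by
    rintro x ⟨⟨p, hp, hpx⟩, ⟨r, hr, hrx⟩⟩
    simp only [LinearMap.mulLeft_apply] at hpx hrx
    have : A ∣ B * r := ⟨p, by rw [hrx, hpx]⟩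
    obtain ⟨w, hw⟩ := (hAp.prime.dvd_or_dvd this).resolve_left hAB
    by_cases hr0 : r = 0
    · subst hr0
      rw [← hrx, mul_zero]
      exact Submodule.zero_mem _
    obtain ⟨l, hl⟩ := aux_homog_factor K (g := w) (h := A) hr hr0 (by rw [hw, mul_comm])
    have hl2 := hA.mul hl
    rw [← hw] at hl2
    have := hl2.inj_right hr hr0
    have hlk : l = k := by omega
    subst hlk
    exact ⟨w, hl, by simp only [LinearMap.mulLeft_apply]; rw [← hrx, hw]; ring⟩
  have fin1 : FiniteDimensional K ((LinearMap.ker ev).map (H d).subtype) := inferInstance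
  have i1 := Submodule.finrank_mono hsup
  have i2 := Submodule.finrank_mono hinf
  rw [Submodule.finrank_map_subtype_eq] at i1
  rw [← (Submodule.equivMapOfInjective _ (hinj hAB0) _).finrank_eq] at i2
  have i3 := Submodule.finrank_sup_add_finrank_inf_eq MA MB
  rw [fA, fB] at i3
  simp only [H, aux_finrank] at r1 i1 i2 i3
  have ch : ∀ n : ℕ, ((n + 2).choose 2 : ℚ) = (n + 2) * (n + 1) / 2 := by
    intro n
    rw [Nat.cast_choose_two]; push_cast; ring
  have key : (k : ℚ) + (e+k+2).choose 2 + (e+k+2).choose 2 ≤ (d + 2).choose 2 + (k+2).choose 2 := by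
    norm_cast
    simp only [H] at *
    omega
  rw [ch, ch, ch] at key
  simp only [d] at key
  push_cast at key
  have : (k : ℚ) ≤ (e : ℚ)^2 := by nlinarith
  exact_mod_cast this

section AuxGalois

variable (F : Type) [Field F] [Fintype F]

lemma aux_fixed (x : AlgebraicClosure F) (hx : x ^ Fintype.card F = x) :
    ∃ a : F, algebraMap F (AlgebraicClosure F) a = x := by
  classical
  by_contra hne
  push Not at hne
  let K := AlgebraicClosure F
  have h1 : 1 < Fintype.card F := Fintype.one_lt_card
  have hp : (Polynomial.X ^ Fintype.card F - Polynomial.X : Polynomial K) ≠ 0 :=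
    FiniteField.X_pow_card_sub_X_ne_zero K h1
  let Z : Finset K := insert x (Finset.univ.image (algebraMap F K))
  have hZ : Z.card = Fintype.card F + 1 := by
    rw [Finset.card_insert_of_notMem, Finset.card_image_of_injective _ (algebraMap F K).injective,
      Finset.card_univ]
    simpa using hne
  have hsub : Z.val ⊆ (Polynomial.X ^ Fintype.card F - Polynomial.X : Polynomial K).roots := by
    intro y hy
    rw [Polynomial.mem_roots hp, Polynomial.IsRoot.def]
    have hy' : y ∈ Z := hy
    simp only [Z, Finset.mem_insert, Finset.mem_image, Finset.mem_univ, true_and] at hy'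
    rcases hy' with rfl | ⟨a, rfl⟩
    · simp [K, hx]
    · simp [← map_pow, FiniteField.pow_card]
  have := Polynomial.card_le_degree_of_subset_roots hsub
  rw [FiniteField.X_pow_card_sub_X_natDegree_eq K h1] at this
  omega

/-- The Frobenius acting on coefficients. -/
noncomputable def auxS : MvPolynomial (Fin 3) (AlgebraicClosure F) ≃ₐ[F]
    MvPolynomial (Fin 3) (AlgebraicClosure F) :=
  mapAlgEquiv (Fin 3) (FiniteField.frobeniusAlgEquivOfAlgebraic F (AlgebraicClosure F))

lemma auxS_coeff (p : MvPolynomial (Fin 3) (AlgebraicClosure F)) (t : Fin 3 →₀ ℕ) :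
    coeff t (auxS F p) = coeff t p ^ Fintype.card F := by
  simp [auxS, coeff_map]

lemma auxS_iter_coeff (p : MvPolynomial (Fin 3) (AlgebraicClosure F)) (t : Fin 3 →₀ ℕ) (n : ℕ) :
    coeff t ((auxS F)^[n] p) = coeff t p ^ (Fintype.card F ^ n) := by
  induction n with
  | zero => simp
  | succ n ih => rw [Function.iterate_succ_apply', auxS_coeff, ih, ← pow_mul, pow_succ]

lemma auxS_map (p : MvPolynomial (Fin 3) F) :
    auxS F (map (algebraMap F (AlgebraicClosure F)) p) = map (algebraMap F (AlgebraicClosure F)) p := by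
  ext t
  rw [auxS_coeff, coeff_map, ← map_pow, FiniteField.pow_card]

lemma auxS_fixed (p : MvPolynomial (Fin 3) (AlgebraicClosure F)) (h : auxS F p = p) :
    ∃ p0, map (algebraMap F (AlgebraicClosure F)) p0 = p := by
  have : p ∈ Set.range (map (algebraMap F (AlgebraicClosure F))) := by
    rw [mem_range_map_iff_coeffs_subset]
    intro c hc
    obtain ⟨t, _, rfl⟩ := MvPolynomial.mem_coeffs_iff.1 hc
    apply aux_fixed
    rw [← auxS_coeff, h]
  exact this

lemma auxS_eval (p : MvPolynomial (Fin 3) (AlgebraicClosure F)) (v : Fin 3 → F) :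
    eval (fun i => algebraMap F (AlgebraicClosure F) (v i)) (auxS F p) =
      (eval (fun i => algebraMap F (AlgebraicClosure F) (v i)) p) ^ Fintype.card F := by
  rw [← FiniteField.frobeniusAlgEquivOfAlgebraic_apply F (AlgebraicClosure F)]
  induction p using MvPolynomial.induction_on with
  | C a => simp [auxS]
  | add p q hp hq => rw [map_add, map_add, map_add, map_add, hp, hq]
  | mul_X p i hp =>
    rw [map_mul, map_mul, map_mul, map_mul, hp]
    congr 1
    simp [auxS, ← map_pow, FiniteField.pow_card]

lemma auxS_iter_eval (p : MvPolynomial (Fin 3) (AlgebraicClosure F)) (v : Fin 3 → F) (n : ℕ)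
    (h : eval (fun i => algebraMap F (AlgebraicClosure F) (v i)) ((auxS F)^[n] p) = 0) :
    eval (fun i => algebraMap F (AlgebraicClosure F) (v i)) p = 0 := by
  induction n with
  | zero => simpa using h
  | succ n ih =>
    rw [Function.iterate_succ_apply', auxS_eval] at h
    exact ih ((pow_eq_zero_iff Fintype.card_ne_zero).1 h)

lemma auxS_periodic (p : MvPolynomial (Fin 3) (AlgebraicClosure F)) :
    ∃ n, 0 < n ∧ (auxS F)^[n] p = p := by
  let E := IntermediateField.adjoin F (p.coeffs : Set (AlgebraicClosure F))
  have : FiniteDimensional F E := IntermediateField.finiteDimensional_adjoin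
    fun x _ => Algebra.IsIntegral.isIntegral x
  have : Finite E := Module.finite_of_finite F
  have : Fintype E := Fintype.ofFinite E
  refine ⟨Module.finrank F E, Module.finrank_pos, ?_⟩
  ext t
  rw [auxS_iter_coeff, ← Module.card_eq_pow_finrank (K := F) (V := E)]
  by_cases h0 : coeff t p = 0
  · rw [h0, zero_pow Fintype.card_ne_zero]
  have hm : coeff t p ∈ E :=
    IntermediateField.subset_adjoin _ _ (MvPolynomial.coeff_mem_coeffs t h0)
  have := FiniteField.pow_card (⟨_, hm⟩ : E)
  simpa using congrArg Subtype.val this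

lemma auxS_irr (p : MvPolynomial (Fin 3) (AlgebraicClosure F)) (h : Irreducible p) (n : ℕ) :
    Irreducible ((auxS F)^[n] p) := by
  induction n with
  | zero => simpa using h
  | succ n ih =>
    rw [Function.iterate_succ_apply']
    exact (MulEquiv.irreducible_iff (auxS F)).2 ih

lemma aux_norm_eq {K : Type} [Field K] (a b : MvPolynomial (Fin 3) K) (t : Fin 3 →₀ ℕ)
    (ha : Irreducible a) (hb : Irreducible b) (hat : coeff t a = 1) (hbt : coeff t b = 1)
    (h : a ∣ b) : a = b := by
  obtain ⟨u, hu⟩ := ha.associated_of_dvd hb h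
  obtain ⟨r, _, hr⟩ := isUnit_iff_eq_C_of_isReduced.1 u.isUnit
  rw [hr] at hu
  have := congrArg (coeff t) hu
  rw [mul_comm, coeff_C_mul, hat, hbt, mul_one] at this
  rw [← hu, this, C_1, mul_one]

lemma aux_galois (f : MvPolynomial (Fin 3) F) (hf : Irreducible f)
    (g : MvPolynomial (Fin 3) (AlgebraicClosure F)) (hg : Irreducible g)
    (hgf : g ∣ map (algebraMap F (AlgebraicClosure F)) f) (t : Fin 3 →₀ ℕ) (ht : coeff t g = 1) :
    ∃ n, 0 < n ∧ (auxS F g = g → n = 1) ∧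
      Associated (∏ i ∈ Finset.range n, (auxS F)^[i] g)
        (map (algebraMap F (AlgebraicClosure F)) f) := by
  set s := auxS F with hs
  set ff := map (algebraMap F (AlgebraicClosure F)) f with hff
  have hff0 : ff ≠ 0 := by
    intro h0
    exact hf.ne_zero ((map_eq_zero_iff _ (map_injective _ (algebraMap F _).injective)).1 h0)
  let n := Function.minimalPeriod s g
  have hn : 0 < n := by
    obtain ⟨m, hm, h⟩ := auxS_periodic F g
    exact Function.IsPeriodicPt.minimalPeriod_pos hm h
  have hper : s^[n] g = g := Function.iterate_minimalPeriod
  have hco : ∀ i, coeff t (s^[i] g) = 1 := by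
    intro i; rw [auxS_iter_coeff, ht, one_pow]
  have hirr := auxS_irr F g hg
  obtain ⟨N, hN⟩ : ∃ N, N = ∏ i ∈ Finset.range n, s^[i] g := ⟨_, rfl⟩
  have hdvd : N ∣ ff := by
    rw [hN]
    apply Finset.prod_dvd_of_isRelPrime
    · intro i hi j hj hij
      rw [Function.onFun, (hirr i).isRelPrime_iff_not_dvd]
      intro h
      have he := aux_norm_eq _ _ t (hirr i) (hirr j) (hco i) (hco j) h
      exact hij (Function.iterate_injOn_Iio_minimalPeriod (by simpa using hi) (by simpa using hj) he)
    · suffices h : ∀ i, s^[i] g ∣ ff from fun i _ => h i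
      intro i
      induction i with
      | zero => simpa using hgf
      | succ i ih =>
        rw [Function.iterate_succ_apply']
        have := map_dvd s ih
        rwa [auxS_map] at this
  have hsN : s N = N := by
    have h1 : (∏ i ∈ Finset.range n, s^[i+1] g) * s^[0] g = N * s^[n] g := by
      rw [← Finset.prod_range_succ' (fun i => s^[i] g) n, Finset.prod_range_succ, hN]
    rw [hper] at h1
    have h2 := mul_right_cancel₀ hg.ne_zero h1
    have h3 : s N = ∏ i ∈ Finset.range n, s^[i+1] g := by
      rw [hN, map_prod]
      simp only [Function.iterate_succ_apply']
    rw [h3, h2]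
  have hN0 : N ≠ 0 := ne_zero_of_dvd_ne_zero hff0 hdvd
  obtain ⟨c, hc⟩ := hdvd
  have hsc : s c = c := by
    have h := congrArg s hc
    rw [map_mul, hsN, auxS_map, ← hff, hc] at h
    exact (mul_left_cancel₀ hN0 h).symm
  obtain ⟨N0, hN0'⟩ := auxS_fixed F N hsN
  obtain ⟨c0, hc0⟩ := auxS_fixed F c hsc
  have hfac : f = N0 * c0 := by
    apply map_injective _ (algebraMap F (AlgebraicClosure F)).injective
    rw [map_mul, hN0', hc0, ← hc]
  refine ⟨n, hn, ?_, ?_⟩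
  · intro h
    exact Function.minimalPeriod_eq_one_iff_isFixedPt.2 h
  · rw [← hN]
    rcases hf.isUnit_or_isUnit hfac with h | h
    · exfalso
      have hu : IsUnit N := by rw [← hN0']; exact h.map _
      have : g ∣ N := by
        rw [hN]
        have h0 := Finset.dvd_prod_of_mem (fun i => s^[i] g) (Finset.mem_range.2 hn)
        simpa only [Function.iterate_zero_apply] using h0
      exact hg.not_isUnit (isUnit_of_dvd_unit this hu)
    · have hu : IsUnit c := by rw [← hc0]; exact h.map _
      exact ⟨hu.unit, hc.symm⟩

lemma aux_vanish (f : MvPolynomial (Fin 3) F) (hf : Irreducible f)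
    (g : MvPolynomial (Fin 3) (AlgebraicClosure F)) (hg : Irreducible g)
    (hgf : g ∣ map (algebraMap F (AlgebraicClosure F)) f) (t : Fin 3 →₀ ℕ) (ht : coeff t g = 1)
    (v : Fin 3 → F) (hv : eval v f = 0) :
    eval (fun i => algebraMap F (AlgebraicClosure F) (v i)) g = 0 := by
  obtain ⟨n, _, _, u, hu⟩ := aux_galois F f hf g hg hgf t ht
  have h1 : eval (fun i => algebraMap F (AlgebraicClosure F) (v i))
      (map (algebraMap F (AlgebraicClosure F)) f) = 0 := by
    have := MvPolynomial.eval₂_comp_left (algebraMap F (AlgebraicClosure F)) (RingHom.id F) v f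
    rw [eval_map]
    rw [eval, eval₂Hom] at hv
    simp at hv this
    rw [hv] at this
    simpa [Function.comp_def] using this.symm
  rw [← hu, map_mul, mul_eq_zero] at h1
  have hu0 := (u.isUnit.map (eval (fun i => algebraMap F (AlgebraicClosure F) (v i)))).ne_zero
  have h2 := h1.resolve_right hu0
  rw [map_prod, Finset.prod_eq_zero_iff] at h2
  obtain ⟨i, _, hi⟩ := h2
  exact auxS_iter_eval F g v i hi

lemma aux_normalize (f : MvPolynomial (Fin 3) (AlgebraicClosure F))
    (g : MvPolynomial (Fin 3) (AlgebraicClosure F)) (hg : Irreducible g) (hgf : g ∣ f) :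
    ∃ g' t, Irreducible g' ∧ g' ∣ f ∧ coeff t g' = 1 ∧ ∃ r, g = C r * g' := by
  obtain ⟨t, ht⟩ := MvPolynomial.ne_zero_iff.1 hg.ne_zero
  have e : C (coeff t g) * (C (coeff t g)⁻¹ * g) = g := by
    rw [← mul_assoc, ← C_mul, mul_inv_cancel₀ ht, C_1, one_mul]
  have hass : Associated g (C (coeff t g)⁻¹ * g) := by
    have hu : IsUnit (C (coeff t g)⁻¹ : MvPolynomial (Fin 3) (AlgebraicClosure F)) :=
      (IsUnit.mk0 _ (inv_ne_zero ht)).map C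
    exact ⟨hu.unit, by rw [IsUnit.unit_spec, mul_comm]⟩
  exact ⟨C (coeff t g)⁻¹ * g, t, hass.irreducible hg, hass.symm.dvd.trans hgf,
    by rw [coeff_C_mul, inv_mul_cancel₀ ht], _, e.symm⟩

end AuxGalois

/-- If `q` is a prime power and `C` is a plane curve of degree `q+1` defined over
`GF(q²)` by a polynomial `f` which is irreducible over `GF(q²)` but not absolutely
irreducible, then the number `N` of `GF(q²)`-rational points of `C` satisfies
`N ≤ ((q+1)/2)²`; moreover every `GF(q²)`-rational point of `C` lies on every
absolutely irreducible component of `C` over the algebraic closure. -/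
theorem stmt_6 (q : ℕ) (hq : ∃ p k : ℕ, p.Prime ∧ 0 < k ∧ q = p ^ k)
    (F : Type) [Field F] [Fintype F] (hcardF : Fintype.card F = q ^ 2)
    (f : MvPolynomial (Fin 3) F) (hfdeg : f.IsHomogeneous (q + 1))
    (hirr : Irreducible f)
    (hnotabs : ¬ Irreducible
      (MvPolynomial.map (algebraMap F (AlgebraicClosure F)) f)) :
    ((hypersurfacePts f).ncard : ℚ) ≤ (((q : ℚ) + 1) / 2) ^ 2 ∧
      ∀ P ∈ hypersurfacePts f,
        ∀ g : MvPolynomial (Fin 3) (AlgebraicClosure F), Irreducible g →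
          g ∣ MvPolynomial.map (algebraMap F (AlgebraicClosure F)) f →
          MvPolynomial.eval (fun i => algebraMap F (AlgebraicClosure F) (P.rep i)) g = 0 := by
  have part2 : ∀ P ∈ hypersurfacePts f,
        ∀ g : MvPolynomial (Fin 3) (AlgebraicClosure F), Irreducible g →
          g ∣ MvPolynomial.map (algebraMap F (AlgebraicClosure F)) f →
          MvPolynomial.eval (fun i => algebraMap F (AlgebraicClosure F) (P.rep i)) g = 0 := by
    intro P hP g hg hgf
    obtain ⟨g', t, h1, h2, h3, r, h4⟩ := aux_normalize F _ g hg hgf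
    rw [h4, map_mul, aux_vanish F f hirr g' h1 h2 t h3 P.rep hP, mul_zero]
  refine ⟨?_, part2⟩
  have hinj := map_injective (σ := Fin 3) _ (algebraMap F (AlgebraicClosure F)).injective
  have hff0 : map (algebraMap F (AlgebraicClosure F)) f ≠ 0 := fun h0 =>
    hirr.ne_zero ((map_eq_zero_iff _ hinj).1 h0)
  have hffh := hfdeg.map (algebraMap F (AlgebraicClosure F))
  have hnu : ¬ IsUnit (map (algebraMap F (AlgebraicClosure F)) f) := by
    intro hu
    have h1 := (isUnit_iff_totalDegree_of_isReduced.1 hu).2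
    rw [hffh.totalDegree hff0] at h1
    omega
  obtain ⟨g₀, hg₀, hg₀f⟩ := WfDvdMonoid.exists_irreducible_factor hnu hff0
  obtain ⟨g, t, hg, hgf, ht, -⟩ := aux_normalize F _ g₀ hg₀ hg₀f
  obtain ⟨n, hn, hn1, u, hu⟩ := aux_galois F f hirr g hg hgf t ht
  have hn2 : 2 ≤ n := by
    by_contra hlt
    have : n = 1 := by omega
    subst this
    apply hnotabs
    rw [← hu]
    simpa [irreducible_mul_units] using hg
  have hsg : auxS F g ≠ g := fun h => by have := hn1 h; omega
  obtain ⟨w, hw⟩ := hgf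
  obtain ⟨e, he⟩ := aux_homog_factor _ hffh hff0 hw
  have hes : (auxS F g).IsHomogeneous e := he.map _
  have hei : ∀ i, ((auxS F)^[i] g).IsHomogeneous e := by
    intro i
    induction i with
    | zero => exact he
    | succ i ih =>
      rw [Function.iterate_succ_apply']
      exact ih.map _
  have hdeg : n * e = q + 1 := by
    obtain ⟨r, _, hr⟩ := isUnit_iff_eq_C_of_isReduced.1 u.isUnit
    have h1 := (IsHomogeneous.prod (Finset.range n) _ (fun _ => e) fun i _ => hei i).mul
      (isHomogeneous_C (Fin 3) r)
    rw [← hr, hu] at h1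
    have := h1.inj_right hffh hff0
    simpa using this
  have hcard : (hypersurfacePts f).ncard ≤ e ^ 2 := by
    classical
    haveI : Finite (hypersurfacePts f) := Set.toFinite _
    haveI : Fintype (hypersurfacePts f) := Fintype.ofFinite _
    rw [← Nat.card_coe_set_eq, Nat.card_eq_fintype_card]
    have hz : ∀ P : hypersurfacePts f,
        eval (fun i => algebraMap F (AlgebraicClosure F) (P.1.rep i)) g = 0 := fun P =>
      part2 P.1 P.2 g hg ⟨w, hw⟩
    refine aux_bezout_s6 (AlgebraicClosure F)
      (fun (P : hypersurfacePts f) i => algebraMap F (AlgebraicClosure F) (P.1.rep i))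
      ?_ ?_ g (auxS F g) e he hes hg ?_ hz ?_
    · intro P h0
      apply P.1.rep_nonzero
      ext i
      simpa using congrFun h0 i
    · intro P Q hPQ
      have hnm : P.1.rep ∉ Submodule.span F {Q.1.rep} := by
        intro hm
        obtain ⟨a, ha⟩ := Submodule.mem_span_singleton.1 hm
        apply hPQ
        apply Subtype.ext
        rw [← P.1.mk_rep, ← Q.1.mk_rep, Projectivization.mk_eq_mk_iff']
        exact ⟨a, ha⟩
      obtain ⟨l, hl1, hl2⟩ := Submodule.exists_le_ker_of_notMem hnm
      have hlsum : ∀ v : Fin 3 → F, l v = ∑ t, l (Pi.single t 1) * v t := by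
        intro v
        conv_lhs => rw [pi_eq_sum_univ' v]
        simp [map_sum, mul_comm]
      refine ⟨fun t => algebraMap F _ (l (Pi.single t 1)), ?_, ?_⟩
      · have : l Q.1.rep = 0 := hl2 (Submodule.mem_span_singleton_self _)
        rw [hlsum] at this
        simp only [← map_mul, ← map_sum, this, map_zero]
      · rw [hlsum] at hl1
        simp only [← map_mul, ← map_sum]
        exact (map_ne_zero _).2 hl1
    · intro h
      have hirr2 := (MulEquiv.irreducible_iff (auxS F)).2 hg
      exact hsg (aux_norm_eq _ _ t hg hirr2 ht (by rw [auxS_coeff, ht, one_pow]) h).symm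
    · intro P
      rw [auxS_eval F g P.1.rep, hz P, zero_pow Fintype.card_ne_zero]
  have h2e : (2 : ℚ) * e ≤ q + 1 := by
    have : 2 * e ≤ q + 1 := by rw [← hdeg]; exact Nat.mul_le_mul_right _ hn2
    exact_mod_cast this
  have hc : ((hypersurfacePts f).ncard : ℚ) ≤ (e : ℚ) ^ 2 := by exact_mod_cast hcard
  refine hc.trans (pow_le_pow_left₀ (by positivity) (by linarith) 2)
end
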